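/- arXiv:2308.15403 — 2 statements merged into one kernel-verified Lean document; each statement's English description precedes it below -/
import Mathlib

section
/- There is an absolute constant c > 0 such that the following holds. Let Σ be a finite alphabet, let k, n be positive integers, let δ, ε > 0, and let C : {0,1}^k → Σ^n be a code. Suppose there exist 3-uniform hypergraph matchings H_1, …, H_k on [n] with |H_i| ≥ εδn/9 for every i ∈ [k], and for every i ∈ [k] and every hyperedge C ∈ H_i a function f_C : Σ^3 → {0,1} such that Pr_{b uniform in {0,1}^k}[b_i = f_C(C(b)|_C)] ≥ 1/2 + ε/2 (this is exactly the combinatorial structure guaranteed for any (3, δ, ε)-locally decodable code over Σ by the Katz–Trevisan reduction). Then k^3 ≤ |Σ|^41 · n · c · (log(|Σ| · n))^6 / (ε^32 · δ^16). -/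
open Finset
open scoped Classical

noncomputable section

/-- `H` is a `q`-uniform hypergraph matching on `[n]`. -/
def IsMatching {n : ℕ} (q : ℕ) (H : Finset (Finset (Fin n))) : Prop :=
  (∀ C ∈ H, C.card = q) ∧ Set.Pairwise (H : Set (Finset (Fin n))) Disjoint

open scoped BigOperators

/-- The sign `±1` encoding of a bit. -/
def bitSign (t : Bool) : ℝ := if t then -1 else 1

lemma bitSign_mul_self (t : Bool) : bitSign t * bitSign t = 1 := by
  cases t <;> simp [bitSign]

lemma sum_bool_pi_prod {ι : Type*} [Fintype ι] [DecidableEq ι] (g : ι → Bool → ℝ) :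
    ∑ b : ι → Bool, ∏ i, g i (b i) = ∏ i, ∑ t, g i t := by
  rw [Finset.prod_univ_sum, Fintype.piFinset_univ]

lemma sum_prod_bitSign_pow_nonneg {ι : Type*} [Fintype ι] [DecidableEq ι] (a : ι → ℕ) :
    0 ≤ ∑ b : ι → Bool, ∏ i, bitSign (b i) ^ a i := by
  rw [sum_bool_pi_prod (fun i t => bitSign t ^ a i)]
  refine Finset.prod_nonneg fun i _ => ?_
  rcases Nat.even_or_odd (a i) with h | h <;> simp [bitSign, h.neg_one_pow]

lemma expect_exp_bitSign_sum {ι : Type*} [Fintype ι] [DecidableEq ι] (t : ℝ) :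
    𝔼 b : ι → Bool, Real.exp (t * ∑ i, bitSign (b i)) = Real.cosh t ^ Fintype.card ι := by
  have h : ∀ b : ι → Bool, Real.exp (t * ∑ i, bitSign (b i))
      = ∏ i, Real.exp (t * bitSign (b i)) := fun b => by
    rw [Finset.mul_sum, Real.exp_sum]
  simp_rw [h]
  rw [Fintype.expect_eq_sum_div_card, sum_bool_pi_prod (fun _ s => Real.exp (t * bitSign s))]
  simp only [Fintype.sum_bool, bitSign, prod_const, card_univ, Fintype.card_pi, Fintype.card_bool]
  push_cast
  rw [← div_pow, Real.cosh_eq]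
  simp [add_comm]

/-- Even moments of a sum of independent signs. -/
lemma expect_bitSign_sum_pow_le {ι : Type*} [Fintype ι] [DecidableEq ι] [Nonempty ι] {r : ℕ}
    (hr : 1 ≤ r) :
    𝔼 b : ι → Bool, (∑ i, bitSign (b i)) ^ (2 * r)
      ≤ (Real.exp 2 * (2 * r) * Fintype.card ι) ^ r := by
  set k : ℝ := (Fintype.card ι : ℝ) with hk
  have hk0 : 0 < k := by rw [hk]; exact_mod_cast Fintype.card_pos
  have hr0 : (0 : ℝ) < 2 * r := by have : (1 : ℝ) ≤ r := by exact_mod_cast hr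
                                   linarith
  set t : ℝ := Real.sqrt (2 * r / k) with ht
  have ht2 : t ^ 2 = 2 * r / k := Real.sq_sqrt (by positivity)
  have ht0 : 0 < t := Real.sqrt_pos.2 (by positivity)
  have hpt : ∀ y : ℝ, t ^ (2 * r) * y ^ (2 * r)
      ≤ (2 * r).factorial * (Real.exp (t * y) + Real.exp ((-t) * y)) := fun y => by
    have h1 := Real.pow_div_factorial_le_exp |t * y| (abs_nonneg _) (2 * r)
    have h2 : |t * y| ^ (2 * r) = t ^ (2 * r) * y ^ (2 * r) := by
      rw [(even_two_mul r).pow_abs, mul_pow]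
    rw [h2, div_le_iff₀ (by positivity)] at h1
    have h3 : Real.exp |t * y| ≤ Real.exp (t * y) + Real.exp ((-t) * y) := by
      rcases abs_cases (t * y) with h | h <;> rw [h.1]
      · linarith [Real.exp_pos (-t * y)]
      · rw [neg_mul]; linarith [Real.exp_pos (t * y)]
    calc _ ≤ _ := h1
      _ ≤ _ := by rw [mul_comm]; gcongr
  have hE : t ^ (2 * r) * 𝔼 b : ι → Bool, (∑ i, bitSign (b i)) ^ (2 * r)
      ≤ (2 * r).factorial * (2 * Real.exp r) := by
    rw [Finset.mul_expect]
    refine (Finset.expect_le_expect fun b _ => hpt _).trans ?_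
    rw [← Finset.mul_expect, Finset.expect_add_distrib, expect_exp_bitSign_sum,
      expect_exp_bitSign_sum, Real.cosh_neg, ← two_mul]
    gcongr
    calc Real.cosh t ^ Fintype.card ι ≤ Real.exp (t ^ 2 / 2) ^ Fintype.card ι := by
          gcongr
          exact Real.cosh_le_exp_half_sq t
      _ = Real.exp r := by
          rw [← Real.exp_nat_mul, ht2, ← hk]; congr 1; field_simp
  have hfac : ((2 * r).factorial : ℝ) ≤ (2 * r) ^ (2 * r) := by
    exact_mod_cast Nat.factorial_le_pow (2 * r)
  have h2e : 2 * Real.exp r ≤ Real.exp 2 ^ r := by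
    rw [← Real.exp_nat_mul, mul_two, Real.exp_add]
    gcongr
    have : (1 : ℝ) ≤ r := by exact_mod_cast hr
    linarith [Real.add_one_le_exp (r : ℝ)]
  have htp : 0 < t ^ (2 * r) := by positivity
  refine le_of_mul_le_mul_left (hE.trans ?_) htp
  calc ((2 * r).factorial : ℝ) * (2 * Real.exp r)
      ≤ (2 * r) ^ (2 * r) * Real.exp 2 ^ r := by gcongr
    _ = t ^ (2 * r) * (Real.exp 2 * (2 * r) * k) ^ r := by
        rw [pow_mul t, ht2, pow_mul, ← mul_pow, ← mul_pow]
        congr 1; field_simp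

section TraceMoment

set_option linter.unusedSectionVars false

open scoped Matrix.Norms.Operator

variable {ι Z : Type*} [Fintype ι] [DecidableEq ι] [Fintype Z] [DecidableEq Z]

/-- Expectations of words in `∑ i, ± B i` are dominated by the scalar case. -/
lemma norm_sum_bitSign_pow_smul_le (B : ι → Matrix Z Z ℝ) {β : ℝ}
    (hB : ∀ i, ‖B i‖ ≤ β) (m : ℕ) (a : ι → ℕ) :
    ‖∑ b : ι → Bool, (∏ i, bitSign (b i) ^ a i) • (∑ i, bitSign (b i) • B i) ^ m‖
      ≤ β ^ m * ∑ b : ι → Bool, (∏ i, bitSign (b i) ^ a i) * (∑ i, bitSign (b i)) ^ m := by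
  induction m generalizing a with
  | zero =>
    simp only [pow_zero, mul_one, one_mul]
    rw [← Finset.sum_smul]
    refine (norm_smul_le _ _).trans ?_
    rw [Real.norm_of_nonneg (sum_prod_bitSign_pow_nonneg a)]
    refine mul_le_of_le_one_right (sum_prod_bitSign_pow_nonneg a) ?_
    rw [← Matrix.diagonal_one, Matrix.linfty_opNorm_diagonal]
    exact (pi_norm_le_iff_of_nonneg zero_le_one).2 fun i => by simp
  | succ m ih =>
    have hstep : ∀ (b : ι → Bool) (i : ι), (∏ j, bitSign (b j) ^ a j) * bitSign (b i)
        = ∏ j, bitSign (b j) ^ (a + Pi.single i 1 : ι → ℕ) j := fun b i => by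
      simp_rw [Pi.add_apply, pow_add, Finset.prod_mul_distrib]
      congr 1
      rw [Finset.prod_eq_single i] <;> simp +contextual
    have h1 : ∑ b : ι → Bool, (∏ i, bitSign (b i) ^ a i) • (∑ i, bitSign (b i) • B i) ^ (m + 1)
        = ∑ i, B i * ∑ b : ι → Bool, (∏ j, bitSign (b j) ^ (a + Pi.single i 1 : ι → ℕ) j) •
            (∑ i, bitSign (b i) • B i) ^ m := by
      simp_rw [Finset.mul_sum]
      rw [Finset.sum_comm]
      refine Finset.sum_congr rfl fun b _ => ?_
      rw [pow_succ', Finset.sum_mul, Finset.smul_sum]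
      refine Finset.sum_congr rfl fun i _ => ?_
      rw [← hstep, Matrix.mul_smul, smul_mul_assoc, smul_smul]
    have h2 : ∑ b : ι → Bool, (∏ i, bitSign (b i) ^ a i) * (∑ i, bitSign (b i)) ^ (m + 1)
        = ∑ i, ∑ b : ι → Bool, (∏ j, bitSign (b j) ^ (a + Pi.single i 1 : ι → ℕ) j) *
            (∑ i, bitSign (b i)) ^ m := by
      rw [Finset.sum_comm]
      refine Finset.sum_congr rfl fun b _ => ?_
      rw [pow_succ', Finset.sum_mul, Finset.mul_sum]
      refine Finset.sum_congr rfl fun i _ => ?_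
      rw [← hstep]; ring
    rw [h1, h2, Finset.mul_sum]
    refine norm_sum_le_of_le _ fun i _ => (norm_mul_le _ _).trans ?_
    have hβ : 0 ≤ β := (norm_nonneg _).trans (hB i)
    calc _ ≤ β * _ := mul_le_mul (hB i) (ih _) (norm_nonneg _) hβ
      _ = _ := by rw [pow_succ']; ring

lemma trace_le_card_mul_norm (A : Matrix Z Z ℝ) : A.trace ≤ Fintype.card Z * ‖A‖ := by
  have h : ∀ z, A z z ≤ ‖A‖ := fun z => by
    rw [Matrix.linfty_opNorm_def]
    refine (le_abs_self _).trans ?_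
    have h1 : ‖A z z‖₊ ≤ ∑ j, ‖A z j‖₊ :=
      Finset.single_le_sum (f := fun j => ‖A z j‖₊) (fun _ _ => zero_le) (mem_univ z)
    have h2 := Finset.le_sup (f := fun i => ∑ j, ‖A i j‖₊) (mem_univ z)
    exact_mod_cast h1.trans h2
  calc A.trace = ∑ z, A z z := rfl
    _ ≤ ∑ _z : Z, ‖A‖ := Finset.sum_le_sum fun z _ => h z
    _ = _ := by simp

lemma expect_trace_pow_le (B : ι → Matrix Z Z ℝ) {β : ℝ} (hB : ∀ i, ‖B i‖ ≤ β) (m : ℕ) :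
    𝔼 b : ι → Bool, ((∑ i, bitSign (b i) • B i) ^ m).trace
      ≤ Fintype.card Z * (β ^ m * 𝔼 b : ι → Bool, (∑ i, bitSign (b i)) ^ m) := by
  have h := norm_sum_bitSign_pow_smul_le B hB m 0
  simp only [Pi.zero_apply, pow_zero, prod_const_one, one_smul, one_mul] at h
  rw [Fintype.expect_eq_sum_div_card, Fintype.expect_eq_sum_div_card, ← Matrix.trace_sum,
    ← mul_div_assoc, ← mul_div_assoc]
  gcongr
  exact (trace_le_card_mul_norm _).trans (by gcongr)

lemma dotProduct_mulVec_sq_le (A : Matrix Z Z ℝ) (v : Z → ℝ) :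
    (v ⬝ᵥ A.mulVec v) ^ 2 ≤ (v ⬝ᵥ v) * (A.mulVec v ⬝ᵥ A.mulVec v) := by
  have := Finset.sum_mul_sq_le_sq_mul_sq univ v (A.mulVec v)
  simpa [dotProduct, sq] using this

lemma mulVec_dotProduct_mulVec_of_symm {A : Matrix Z Z ℝ} (hA : A.transpose = A) (v : Z → ℝ) :
    A.mulVec v ⬝ᵥ A.mulVec v = v ⬝ᵥ (A ^ 2).mulVec v := by
  rw [sq, ← Matrix.mulVec_mulVec, Matrix.dotProduct_mulVec v A, ← Matrix.mulVec_transpose, hA]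

lemma mulVec_dotProduct_mulVec_le (A : Matrix Z Z ℝ) (v : Z → ℝ) :
    A.mulVec v ⬝ᵥ A.mulVec v ≤ (v ⬝ᵥ v) * (A * A.transpose).trace := by
  have h : (A * A.transpose).trace = ∑ z, ∑ w, A z w ^ 2 := by
    simp [Matrix.trace, Matrix.mul_apply, sq]
  rw [h, Finset.mul_sum]
  refine Finset.sum_le_sum fun z _ => ?_
  have := Finset.sum_mul_sq_le_sq_mul_sq univ (A z) v
  simpa [Matrix.mulVec, dotProduct, sq, mul_comm] using this

lemma quadForm_pow_le {A : Matrix Z Z ℝ} (hA : A.transpose = A) (v : Z → ℝ) (s : ℕ) :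
    (v ⬝ᵥ A.mulVec v) ^ 2 ^ (s + 1) ≤ (v ⬝ᵥ v) ^ 2 ^ (s + 1) * (A ^ 2 ^ (s + 1)).trace := by
  have hv : 0 ≤ v ⬝ᵥ v := Finset.sum_nonneg fun i _ => mul_self_nonneg _
  induction s generalizing A with
  | zero =>
    simp only [zero_add, pow_one]
    have h1 := dotProduct_mulVec_sq_le A v
    have h2 := mulVec_dotProduct_mulVec_le A v
    rw [hA, ← sq] at h2
    calc _ ≤ _ := h1
      _ ≤ (v ⬝ᵥ v) * ((v ⬝ᵥ v) * (A ^ 2).trace) := by gcongr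
      _ = _ := by ring
  | succ s ih =>
    have hA2 : (A ^ 2).transpose = A ^ 2 := by rw [Matrix.transpose_pow, hA]
    have h1 := dotProduct_mulVec_sq_le A v
    rw [mulVec_dotProduct_mulVec_of_symm hA] at h1
    have h2 := ih hA2
    rw [← pow_mul, ← pow_succ'] at h2
    calc (v ⬝ᵥ A.mulVec v) ^ 2 ^ (s + 1 + 1) = ((v ⬝ᵥ A.mulVec v) ^ 2) ^ 2 ^ (s + 1) := by
          rw [← pow_mul, ← pow_succ']
      _ ≤ ((v ⬝ᵥ v) * (v ⬝ᵥ (A ^ 2).mulVec v)) ^ 2 ^ (s + 1) := by gcongr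
      _ = (v ⬝ᵥ v) ^ 2 ^ (s + 1) * (v ⬝ᵥ (A ^ 2).mulVec v) ^ 2 ^ (s + 1) := mul_pow ..
      _ ≤ (v ⬝ᵥ v) ^ 2 ^ (s + 1) * ((v ⬝ᵥ v) ^ 2 ^ (s + 1) * (A ^ 2 ^ (s + 1 + 1)).trace) := by
          gcongr
      _ = _ := by ring

lemma expect_pow_le_of_even {Ω : Type*} [Fintype Ω] [Nonempty Ω] (y : Ω → ℝ) {m : ℕ}
    (hm : Even m) : (𝔼 b, y b) ^ m ≤ 𝔼 b, y b ^ m := by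
  have h := Real.pow_arith_mean_le_arith_mean_pow_of_even univ
    (fun _ : Ω => 1 / (Fintype.card Ω : ℝ)) y (fun _ _ => by positivity) (by simp) hm
  rw [Fintype.expect_eq_sum_div_card, Fintype.expect_eq_sum_div_card]
  simpa [← Finset.mul_sum, div_eq_inv_mul] using h

lemma exists_two_pow_between {L : ℝ} (hL : 0 ≤ L) :
    ∃ s : ℕ, L ≤ 2 ^ (s + 1) ∧ (2 : ℝ) ^ (s + 1) ≤ 2 * (L + 1) := by
  obtain ⟨s, h1, h2⟩ := exists_nat_pow_near (x := L + 1) (y := (2 : ℝ)) (by linarith) (by norm_num)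
  exact ⟨s, by linarith, by rw [pow_succ]; linarith⟩

/-- A Khintchine-type bound for quadratic forms of random signed sums of symmetric matrices. -/
lemma expect_quadForm_sq_le [Nonempty ι] [Nonempty Z] (B : ι → Matrix Z Z ℝ)
    (hsymm : ∀ i, (B i).transpose = B i) {β : ℝ} (hB : ∀ i, ‖B i‖ ≤ β)
    (v : (ι → Bool) → Z → ℝ) {X : ℝ} (hv : ∀ b, ∑ z, v b z ^ 2 ≤ X) :
    (𝔼 b : ι → Bool, v b ⬝ᵥ (∑ i, bitSign (b i) • B i).mulVec (v b)) ^ 2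
      ≤ 112 * Fintype.card ι * X ^ 2 * β ^ 2 * (Real.log (Fintype.card Z) + 1) := by
  have hZ : (1 : ℝ) ≤ Fintype.card Z := by exact_mod_cast Fintype.card_pos
  have hX : 0 ≤ X := (Finset.sum_nonneg fun i _ => sq_nonneg _).trans (hv fun _ => true)
  have hβ : 0 ≤ β := (norm_nonneg _).trans (hB (Classical.arbitrary ι))
  obtain ⟨s, hs1, hs2⟩ := exists_two_pow_between (Real.log_nonneg hZ)
  set M : (ι → Bool) → Matrix Z Z ℝ := fun b => ∑ i, bitSign (b i) • B i with hM
  have hMs : ∀ b, (M b).transpose = M b := fun b => by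
    simp [hM, Matrix.transpose_sum, Matrix.transpose_smul, hsymm]
  set y : (ι → Bool) → ℝ := fun b => v b ⬝ᵥ (M b).mulVec (v b) with hy
  have htr : ∀ b, 0 ≤ (M b ^ 2 ^ (s + 1)).trace := fun b => by
    have : M b ^ 2 ^ (s + 1) = M b ^ 2 ^ s * (M b ^ 2 ^ s).transpose := by
      rw [Matrix.transpose_pow, hMs, ← pow_add, pow_succ, mul_two]
    rw [this]
    simp only [Matrix.trace, Matrix.diag_apply, Matrix.mul_apply, Matrix.transpose_apply]
    exact Finset.sum_nonneg fun i _ => Finset.sum_nonneg fun j _ => mul_self_nonneg _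
  have h1 : ∀ b, y b ^ 2 ^ (s + 1) ≤ X ^ 2 ^ (s + 1) * (M b ^ 2 ^ (s + 1)).trace := fun b => by
    refine (quadForm_pow_le (hMs b) (v b) s).trans ?_
    have h0 : 0 ≤ v b ⬝ᵥ v b := Finset.sum_nonneg fun i _ => mul_self_nonneg _
    have h2 : v b ⬝ᵥ v b ≤ X := by simpa [dotProduct, sq] using hv b
    have := htr b
    gcongr
  have hq : 2 ^ (s + 1) = 2 * 2 ^ s := by rw [pow_succ']
  have hmom := expect_bitSign_sum_pow_le (ι := ι) (r := 2 ^ s) Nat.one_le_two_pow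
  have h2 : (𝔼 b, y b) ^ 2 ^ (s + 1) ≤ X ^ 2 ^ (s + 1) * (Fintype.card Z *
      (β ^ 2 ^ (s + 1) * (Real.exp 2 * (2 * 2 ^ s) * Fintype.card ι) ^ 2 ^ s)) := by
    refine (expect_pow_le_of_even y (by rw [hq]; exact even_two_mul _)).trans ?_
    refine (Finset.expect_le_expect fun b _ => h1 b).trans ?_
    rw [← Finset.mul_expect]
    gcongr
    refine (expect_trace_pow_le B hB _).trans ?_
    gcongr
    rw [hq]
    exact_mod_cast hmom
  have hZe : (Fintype.card Z : ℝ) ≤ (Real.exp 2) ^ 2 ^ s := by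
    rw [← Real.exp_nat_mul]
    rw [← Real.log_le_iff_le_exp (by linarith)]
    refine hs1.trans (le_of_eq ?_)
    push_cast; rw [pow_succ]
  have h3 : (𝔼 b, y b) ^ 2 ^ (s + 1)
      ≤ (Real.exp 2 * Real.exp 2 * 2 ^ (s + 1) * Fintype.card ι * X ^ 2 * β ^ 2) ^ 2 ^ s := by
    refine h2.trans ?_
    calc _ ≤ X ^ 2 ^ (s + 1) * ((Real.exp 2) ^ 2 ^ s *
      (β ^ 2 ^ (s + 1) * (Real.exp 2 * (2 * 2 ^ s) * Fintype.card ι) ^ 2 ^ s)) := by gcongr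
      _ = _ := by
        rw [hq, pow_mul, pow_mul, ← mul_pow, ← mul_pow, ← mul_pow]
        congr 1; ring
  rw [hq, pow_mul] at h3
  have h4 := le_of_pow_le_pow_left₀ (by positivity) (by positivity) h3
  refine h4.trans ?_
  have he : Real.exp 2 * Real.exp 2 ≤ 56 := by
    rw [← Real.exp_add]
    have h := Real.exp_one_lt_d9
    have h' : Real.exp (2 + 2) = Real.exp 1 ^ 4 := by rw [← Real.exp_nat_mul]; norm_num
    rw [h']
    calc Real.exp 1 ^ 4 ≤ 2.7182818286 ^ 4 := by gcongr
      _ ≤ 56 := by norm_num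
  calc _ ≤ 56 * (2 * (Real.log (Fintype.card Z) + 1)) * Fintype.card ι * X ^ 2 * β ^ 2 := by
        gcongr
    _ = _ := by ring

end TraceMoment

open scoped Matrix.Norms.Operator in
/-- Bound for random signed sums over a weighted edge list `src f — tgt f`, in terms of the
weighted degree of each colour class. -/
lemma expect_edge_sum_sq_le {ι Z F : Type*} [Fintype ι] [DecidableEq ι] [Fintype Z]
    [Fintype F] [Nonempty ι] [Nonempty Z] (col : F → ι) (src tgt : F → Z) (wt : F → ℝ) {β : ℝ}
    (hdeg : ∀ i z, (∑ f, if col f = i ∧ src f = z then |wt f| else 0) +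
      (∑ f, if col f = i ∧ tgt f = z then |wt f| else 0) ≤ β)
    (v : (ι → Bool) → Z → ℝ) {X : ℝ} (hv : ∀ b, ∑ z, v b z ^ 2 ≤ X) :
    (𝔼 b : ι → Bool, ∑ f, bitSign (b (col f)) * wt f * (v b (src f) * v b (tgt f))) ^ 2
      ≤ 28 * Fintype.card ι * X ^ 2 * β ^ 2 * (Real.log (Fintype.card Z) + 1) := by
  set B : ι → Matrix Z Z ℝ := fun i => ∑ f, if col f = i then
    wt f • (Matrix.single (src f) (tgt f) 1 + Matrix.single (tgt f) (src f) 1) else 0 with hBdef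
  have hsymm : ∀ i, (B i).transpose = B i := fun i => by
    simp only [hBdef, Matrix.transpose_sum]
    refine Finset.sum_congr rfl fun f _ => ?_
    split_ifs
    · rw [Matrix.transpose_smul, Matrix.transpose_add, Matrix.transpose_single,
        Matrix.transpose_single, add_comm]
    · simp
  have hBapp : ∀ i z w, B i z w = ∑ f, if col f = i then
      wt f * ((if src f = z ∧ tgt f = w then 1 else 0) +
        (if tgt f = z ∧ src f = w then 1 else 0)) else 0 := fun i z w => by
    simp only [hBdef, Matrix.sum_apply]
    refine Finset.sum_congr rfl fun f _ => ?_
    by_cases hc : col f = i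
    · simp only [if_pos hc, Matrix.smul_apply, Matrix.add_apply, Matrix.single_apply, smul_eq_mul]
    · simp only [if_neg hc, Matrix.zero_apply]
  have hrow : ∀ i z, ∑ w, |B i z w| ≤ β := fun i z => by
    refine le_trans ?_ (hdeg i z)
    rw [← Finset.sum_add_distrib]
    calc ∑ w, |B i z w| ≤ ∑ w, ∑ f, (if col f = i then |wt f| *
          ((if src f = z ∧ tgt f = w then 1 else 0) +
            (if tgt f = z ∧ src f = w then 1 else 0)) else 0) := by
          refine Finset.sum_le_sum fun w _ => ?_
          rw [hBapp]
          refine (Finset.abs_sum_le_sum_abs _ _).trans (Finset.sum_le_sum fun f _ => ?_)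
          by_cases hc : col f = i
          · rw [if_pos hc, if_pos hc, abs_mul, abs_of_nonneg (a := ite _ _ _ + _)]
            positivity
          · simp [hc]
      _ ≤ _ := by
          rw [Finset.sum_comm]
          refine Finset.sum_le_sum fun f _ => le_of_eq ?_
          by_cases hc : col f = i
          · simp only [hc, if_true, true_and]
            rw [← Finset.mul_sum, Finset.sum_add_distrib, mul_add]
            congr 1
            · by_cases h : src f = z <;> simp [h]
            · by_cases h : tgt f = z <;> simp [h]
          · simp [hc]
  have hnorm : ∀ i, ‖B i‖ ≤ β := fun i => by
    have hβ : 0 ≤ β := (Finset.sum_nonneg fun w _ => abs_nonneg _).trans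
      (hrow i (Classical.arbitrary Z))
    rw [Matrix.linfty_opNorm_def]
    lift β to NNReal using hβ
    rw [NNReal.coe_le_coe]
    refine Finset.sup_le fun z _ => ?_
    rw [← NNReal.coe_le_coe]
    simpa using hrow i z
  have hquad : ∀ b : ι → Bool, v b ⬝ᵥ (∑ i, bitSign (b i) • B i).mulVec (v b)
      = 2 * ∑ f, bitSign (b (col f)) * wt f * (v b (src f) * v b (tgt f)) := fun b => by
    have h1 : ∑ i, bitSign (b i) • B i = ∑ f, (bitSign (b (col f)) * wt f) •
        (Matrix.single (src f) (tgt f) 1 + Matrix.single (tgt f) (src f) 1) := by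
      simp only [hBdef, Finset.smul_sum]
      rw [Finset.sum_comm]
      refine Finset.sum_congr rfl fun f _ => ?_
      simp [smul_ite]
    rw [h1, Matrix.sum_mulVec, dotProduct_sum, Finset.mul_sum]
    refine Finset.sum_congr rfl fun f _ => ?_
    rw [Matrix.smul_mulVec, dotProduct_smul, Matrix.add_mulVec, dotProduct_add,
      Matrix.single_mulVec, Matrix.single_mulVec]
    have hs : ∀ (z : Z) (c : ℝ), v b ⬝ᵥ Function.update 0 z c = v b z * c := fun z c => by
      rw [← Pi.single, dotProduct_single]
    rw [hs, hs, smul_eq_mul]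
    ring
  have h := expect_quadForm_sq_le B hsymm hnorm v hv
  simp_rw [hquad] at h
  rw [← Finset.mul_expect, mul_pow] at h
  linarith

lemma sum_ite_le_one_of_injective {E S : Type*} [Fintype E] {φ : E → S}
    (hφ : Function.Injective φ) (a : S) (w : E → ℝ) (hw : ∀ e, w e ≤ 1) :
    (∑ e, if φ e = a then w e else 0) ≤ 1 := by
  by_cases h : ∃ e, φ e = a
  · obtain ⟨e, rfl⟩ := h
    simp only [hφ.eq_iff]
    simpa using hw e
  · push Not at h
    simp [h]

/-- A matching-coloured family of triples, all containing a pair of codegree larger than `d`,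
cannot be large: this is the reduction to two queries. -/
lemma heavy_card_sq_le {ι V E : Type*} [Fintype ι] [DecidableEq ι] [Fintype V] [Fintype E]
    [Nonempty ι] (col : E → ι) (p q r : E → V)
    (hp : Function.Injective fun e => (col e, p e))
    (hr : Function.Injective fun e => (col e, r e))
    (s : E → ℝ) (hs : ∀ e, |s e| ≤ 1) (x : (ι → Bool) → V → ℝ) (hx : ∀ b v, x b v ^ 2 = 1)
    {ε d : ℝ} (hε : 0 ≤ ε) (hd : 0 < d) (hV : 2 ≤ Fintype.card V)
    (hcorr : ∀ e, ε ≤ 𝔼 b : ι → Bool,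
      bitSign (b (col e)) * s e * (x b (p e) * x b (q e) * x b (r e))) :
    (ε * #{e | d < (#{e' | p e' = p e ∧ q e' = q e} : ℝ)}) ^ 2
      ≤ 2240 * Fintype.card ι ^ 2 * Fintype.card V ^ 2 * Real.log (Fintype.card V) / d := by
  set k : ℝ := (Fintype.card ι : ℝ) with hk
  set n : ℝ := (Fintype.card V : ℝ) with hn
  have hk0 : 0 < k := by rw [hk]; exact_mod_cast Fintype.card_pos
  have hn2 : 2 ≤ n := by rw [hn]; exact_mod_cast hV
  have : Nonempty V := Fintype.card_pos_iff.1 (by omega)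
  set P : V × V → Prop := fun w => d < (#{e' | p e' = w.1 ∧ q e' = w.2} : ℝ) with hP
  set m : ℝ := √(k / d) with hm
  have hm2 : m ^ 2 = k / d := Real.sq_sqrt (by positivity)
  have hm0 : 0 < m := Real.sqrt_pos.2 (by positivity)
  have hcardE : (Fintype.card E : ℝ) ≤ k * n := by
    have := Fintype.card_le_of_injective _ hp
    rw [Fintype.card_prod] at this
    rw [hk, hn]; exact_mod_cast this
  have hPcard : d * #{w | P w} ≤ k * n := by
    refine le_trans ?_ hcardE
    have h1 : ∑ w : V × V, (#{e' | p e' = w.1 ∧ q e' = w.2} : ℝ) = Fintype.card E := by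
      have := Finset.card_eq_sum_card_fiberwise (s := (univ : Finset E)) (t := univ)
        (f := fun e => (p e, q e)) (by simp)
      rw [← Finset.card_univ, this]
      push_cast
      refine Finset.sum_congr rfl fun w _ => ?_
      congr 2
      ext e; simp [Prod.ext_iff]
    rw [← h1, mul_comm, ← nsmul_eq_mul]
    refine (Finset.card_nsmul_le_sum _ _ _ fun w hw => ?_).trans
      (Finset.sum_le_sum_of_subset_of_nonneg (Finset.filter_subset P univ)
        fun _ _ _ => Nat.cast_nonneg _)
    exact (Finset.mem_filter.1 hw).2.le
  set wt : E → ℝ := fun e => if P (p e, q e) then s e else 0 with hwt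
  have hwt1 : ∀ e, |wt e| ≤ 1 := fun e => by
    simp only [hwt]; split_ifs
    · exact hs e
    · simp
  set v : (ι → Bool) → V ⊕ V × V → ℝ := fun b => Sum.elim (fun u => √m * x b u)
    (fun w => if P w then (√m)⁻¹ * (x b w.1 * x b w.2) else 0) with hv
  have hvX : ∀ b, ∑ z, v b z ^ 2 ≤ 2 * n * m := fun b => by
    have hsm : √m ^ 2 = m := Real.sq_sqrt hm0.le
    have h1 : ∑ u, v b (Sum.inl u) ^ 2 = n * m := by
      simp [hv, mul_pow, hsm, hx, hn]
    have h2 : ∑ w, v b (Sum.inr w) ^ 2 = #{w | P w} * m⁻¹ := by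
      have : ∀ w, v b (Sum.inr w) ^ 2 = if P w then m⁻¹ else 0 := fun w => by
        simp only [hv, Sum.elim_inr]
        split_ifs
        · rw [mul_pow, mul_pow, hx, hx, inv_pow, hsm]; ring
        · simp
      simp_rw [this]
      rw [← Finset.sum_filter]; simp
    rw [Fintype.sum_sum_type, h1, h2]
    have h3 : (#{w | P w} : ℝ) * m⁻¹ ≤ n * m := by
      rw [← div_eq_mul_inv, div_le_iff₀ hm0, mul_assoc, ← sq, hm2]
      rw [← mul_div_assoc, le_div_iff₀ hd]
      linarith
    linarith
  have key := expect_edge_sum_sq_le (Z := V ⊕ V × V) col (fun e => Sum.inl (r e))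
    (fun e => Sum.inr (p e, q e)) wt (β := 2) (fun i z => ?_) v hvX
  · have hsum : ∀ b : ι → Bool, ∑ e, bitSign (b (col e)) * wt e *
        (v b (Sum.inl (r e)) * v b (Sum.inr (p e, q e)))
        = ∑ e with P (p e, q e), bitSign (b (col e)) * s e *
          (x b (p e) * x b (q e) * x b (r e)) := fun b => by
      rw [Finset.sum_filter]
      refine Finset.sum_congr rfl fun e _ => ?_
      simp only [hwt, hv, Sum.elim_inl, Sum.elim_inr]
      split_ifs
      · have : √m ≠ 0 := (Real.sqrt_pos.2 hm0).ne'
        field_simp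
      · simp
    simp_rw [hsum] at key
    rw [Finset.expect_sum_comm] at key
    have hlow : ε * #{e | P (p e, q e)} ≤ ∑ e with P (p e, q e), 𝔼 b : ι → Bool,
        bitSign (b (col e)) * s e * (x b (p e) * x b (q e) * x b (r e)) := by
      rw [mul_comm, ← nsmul_eq_mul]
      exact Finset.card_nsmul_le_sum _ _ _ fun e _ => hcorr e
    have hlog : Real.log (Fintype.card (V ⊕ V × V)) + 1 ≤ 5 * Real.log n := by
      have h1 : (Fintype.card (V ⊕ V × V) : ℝ) ≤ n ^ 3 := by
        rw [Fintype.card_sum, Fintype.card_prod]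
        push_cast
        rw [← hn]
        nlinarith [mul_self_nonneg n, mul_le_mul_of_nonneg_right hn2 (sq_nonneg n)]
      have h2 := Real.log_le_log (by exact_mod_cast Fintype.card_pos) h1
      rw [Real.log_pow] at h2
      have h3 := Real.log_le_log (by norm_num) hn2
      have := Real.log_two_gt_d9
      push_cast at h2
      linarith
    calc _ ≤ _ := pow_le_pow_left₀ (by positivity) hlow 2
      _ ≤ _ := key
      _ ≤ 28 * k * (2 * n * m) ^ 2 * 2 ^ 2 * (5 * Real.log n) := by gcongr
      _ = _ := by rw [mul_pow, hm2]; ring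
  · have h1 : (∑ e, if col e = i ∧ (Sum.inl (r e) : V ⊕ V × V) = z then |wt e| else 0)
        ≤ 1 := by
      rcases z with u | w
      · convert sum_ite_le_one_of_injective hr (i, u) (fun e => |wt e|) hwt1 using 4
        simp
      · simp
    have h2 : (∑ e, if col e = i ∧ (Sum.inr (p e, q e) : V ⊕ V × V) = z then |wt e| else 0)
        ≤ 1 := by
      rcases z with u | w
      · simp
      · refine le_trans (Finset.sum_le_sum fun e _ => ?_)
          (sum_ite_le_one_of_injective hp (i, w.1) (fun e => |wt e|) hwt1)
        by_cases h : col e = i ∧ p e = w.1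
        · rw [if_pos (show (col e, p e) = (i, w.1) by rw [h.1, h.2])]
          split_ifs
          · exact le_rfl
          · exact abs_nonneg _
        · rw [if_neg, if_neg]
          · simpa [Prod.ext_iff] using h
          · rintro ⟨h1, h2⟩
            exact h ⟨h1, by rw [← Sum.inr.inj h2]⟩
    refine le_trans (le_of_eq ?_) ((add_le_add h1 h2).trans (by norm_num))
    congr!

section Kikuchi

lemma expect_pi_apply {V J : Type*} [Fintype V] [Nonempty V] [Fintype J] [DecidableEq J]
    (j : J) (φ : V → ℝ) : 𝔼 z : J → V, φ (z j) = 𝔼 v, φ v := by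
  have h : ∀ z : J → V, φ (z j) = ∏ i, if i = j then φ (z i) else 1 := fun z => by
    rw [Finset.prod_ite_eq' univ j]; simp
  simp_rw [Fintype.expect_eq_sum_div_card, h]
  have h2 := Finset.prod_univ_sum (fun _ : J => (univ : Finset V))
    (fun i v => if i = j then φ v else 1)
  rw [Fintype.piFinset_univ] at h2
  have hV : (Fintype.card V : ℝ) ≠ 0 := by exact_mod_cast Fintype.card_ne_zero
  rw [← h2, Fintype.card_fun, Nat.cast_pow, ← Finset.card_univ (α := J), ← Finset.prod_const,
    ← Finset.prod_div_distrib, Finset.prod_eq_single j]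
  · simp
  · intro i _ hi
    simp [hi, hV]
  · simp

/-- Index set of the Kikuchi matrix. -/
abbrev KikuchiVertex (V : Type*) (l : ℕ) := (Fin l → V) × (Fin l → V)

/-- Overwrite one coordinate in each of the two tuples. -/
def kikuchiSet {V : Type*} {l : ℕ} (a c : V) (ω : (Fin l × Fin l) × KikuchiVertex V l) :
    KikuchiVertex V l :=
  (Function.update ω.2.1 ω.1.1 a, Function.update ω.2.2 ω.1.2 c)

/-- The total weight of `g` on pairs of coordinates. -/
def kikuchiDeg {V : Type*} {l : ℕ} (g : V → V → ℝ) (y : KikuchiVertex V l) : ℝ :=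
  ∑ t₁, ∑ t₂, g (y.1 t₁) (y.2 t₂)

lemma sum_update_le {V J : Type*} [Fintype J] [DecidableEq J] (φ : V → ℝ) (hφ : ∀ v, 0 ≤ φ v)
    (z : J → V) (t : J) (a : V) :
    ∑ j, φ (Function.update z t a j) ≤ φ a + ∑ j, φ (z j) := by
  have h : ∀ j, φ (Function.update z t a j) ≤ (if j = t then φ a else 0) + φ (z j) := fun j => by
    by_cases hj : j = t
    · subst hj; simp [hφ]
    · simp [hj]
  refine (Finset.sum_le_sum fun j _ => h j).trans ?_
  rw [Finset.sum_add_distrib]; simp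

lemma kikuchiDeg_kikuchiSet_le {V : Type*} {l : ℕ} (g : V → V → ℝ) (hg : ∀ u w, 0 ≤ g u w)
    (a c : V) (ω : (Fin l × Fin l) × KikuchiVertex V l) :
    kikuchiDeg g (kikuchiSet a c ω) ≤ g a c + ∑ t, g a (ω.2.2 t) + ∑ t, g (ω.2.1 t) c
      + ∑ t₁, ∑ t₂, g (ω.2.1 t₁) (ω.2.2 t₂) := by
  unfold kikuchiDeg kikuchiSet
  refine (Finset.sum_le_sum fun t₁ _ => sum_update_le (g _) (hg _) _ _ _).trans ?_
  rw [Finset.sum_add_distrib]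
  refine (add_le_add (sum_update_le (fun u => g u c) (fun u => hg u c) _ _ _)
    (sum_update_le (fun u => ∑ t₂, g u (ω.2.2 t₂)) (fun u => Finset.sum_nonneg fun _ _ => hg _ _)
      _ _ _)).trans (le_of_eq ?_)
  ring

lemma expect_kikuchiDeg_le {V : Type*} [Fintype V] [Nonempty V] {l : ℕ} (hl : 1 ≤ l)
    (g : V → V → ℝ) (hg : ∀ u w, 0 ≤ g u w) {k d : ℝ} (hd : ∀ u w, g u w ≤ d)
    (hrow : ∀ u, ∑ w, g u w ≤ k) (hcol : ∀ w, ∑ u, g u w ≤ k)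
    (hk : Fintype.card V * d ≤ k * l ^ 2) (a c : V) :
    𝔼 ω : (Fin l × Fin l) × KikuchiVertex V l, kikuchiDeg g (kikuchiSet a c ω)
      ≤ 4 * l ^ 2 * k / Fintype.card V := by
  have hn : (0 : ℝ) < Fintype.card V := by exact_mod_cast Fintype.card_pos
  have hl1 : (1 : ℝ) ≤ l := by exact_mod_cast hl
  have : Nonempty (Fin l) := ⟨⟨0, hl⟩⟩
  have hk0 : 0 ≤ k := (Finset.sum_nonneg fun w _ => hg _ _).trans (hrow (Classical.arbitrary V))
  set n : ℝ := (Fintype.card V : ℝ) with hndef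
  refine (Finset.expect_le_expect fun ω _ => kikuchiDeg_kikuchiSet_le g hg a c ω).trans ?_
  simp only [Finset.expect_add_distrib, Finset.expect_sum_comm]
  have hfst : ∀ F : KikuchiVertex V l → ℝ,
      𝔼 ω : (Fin l × Fin l) × KikuchiVertex V l, F ω.2 = 𝔼 z, F z := fun F => by
    rw [← Finset.univ_product_univ, Finset.expect_product]
    exact Finset.expect_const univ_nonempty (𝔼 z, F z)
  have h1 : ∀ φ : (Fin l → V) → ℝ, 𝔼 z : KikuchiVertex V l, φ z.1 = 𝔼 y, φ y := fun φ => by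
    rw [← Finset.univ_product_univ, Finset.expect_product]
    exact Finset.expect_congr rfl fun y _ => Finset.expect_const univ_nonempty (φ y)
  have h2 : ∀ φ : (Fin l → V) → ℝ, 𝔼 z : KikuchiVertex V l, φ z.2 = 𝔼 y, φ y := fun φ => by
    rw [← Finset.univ_product_univ, Finset.expect_product]
    exact Finset.expect_const univ_nonempty (𝔼 y, φ y)
  have hA : ∀ t : Fin l, 𝔼 ω : (Fin l × Fin l) × KikuchiVertex V l, g a (ω.2.2 t) ≤ k / n :=
    fun t => by
    rw [hfst (fun z => g a (z.2 t)), h2 (fun y => g a (y t)), expect_pi_apply t (g a),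
      Fintype.expect_eq_sum_div_card]
    gcongr; exact hrow a
  have hC : ∀ t : Fin l, 𝔼 ω : (Fin l × Fin l) × KikuchiVertex V l, g (ω.2.1 t) c ≤ k / n :=
    fun t => by
    rw [hfst (fun z => g (z.1 t) c), h1 (fun y => g (y t) c), expect_pi_apply t (fun u => g u c),
      Fintype.expect_eq_sum_div_card]
    gcongr; exact hcol c
  have hAC : ∀ t₁ t₂ : Fin l, 𝔼 ω : (Fin l × Fin l) × KikuchiVertex V l,
      g (ω.2.1 t₁) (ω.2.2 t₂) ≤ k / n := fun t₁ t₂ => by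
    rw [hfst (fun z => g (z.1 t₁) (z.2 t₂)), ← Finset.univ_product_univ, Finset.expect_product]
    refine Finset.expect_le univ_nonempty fun y _ => ?_
    rw [expect_pi_apply t₂ (g (y t₁)), Fintype.expect_eq_sum_div_card]
    gcongr; exact hrow _
  have e1 : 𝔼 _ω : (Fin l × Fin l) × KikuchiVertex V l, g a c ≤ d := by
    rw [Finset.expect_const univ_nonempty]; exact hd a c
  have e2 := Finset.sum_le_sum fun t (_ : t ∈ (univ : Finset (Fin l))) => hA t
  have e3 := Finset.sum_le_sum fun t (_ : t ∈ (univ : Finset (Fin l))) => hC t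
  have e4 := Finset.sum_le_sum fun t₁ (_ : t₁ ∈ (univ : Finset (Fin l))) =>
    Finset.sum_le_sum fun t₂ (_ : t₂ ∈ (univ : Finset (Fin l))) => hAC t₁ t₂
  simp only [Finset.sum_const, card_univ, Fintype.card_fin, nsmul_eq_mul] at e2 e3 e4
  have hd' : d ≤ l ^ 2 * (k / n) := by
    rw [← mul_div_assoc, le_div_iff₀ hn]; linarith
  have hll : (l : ℝ) * (k / n) ≤ l ^ 2 * (k / n) := by
    gcongr; nlinarith
  calc _ ≤ d + l * (k / n) + l * (k / n) + l * (l * (k / n)) := by gcongr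
    _ ≤ l ^ 2 * (k / n) + l ^ 2 * (k / n) + l ^ 2 * (k / n) + l ^ 2 * (k / n) := by
        have : (l : ℝ) * (l * (k / n)) = l ^ 2 * (k / n) := by ring
        linarith
    _ = _ := by ring

lemma card_update_eq_le {V J : Type*} [Fintype V] [Fintype J] [DecidableEq J]
    (t : J) (a : V) (y : J → V) :
    (#{z : J → V | Function.update z t a = y} : ℝ)
      ≤ Fintype.card V * (if y t = a then 1 else 0) := by
  split_ifs with h
  · rw [mul_one]
    norm_cast
    rw [← Finset.card_univ (α := V)]
    refine Finset.card_le_card_of_injOn (fun z => z t) (by simp) fun z hz z' hz' hzz => ?_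
    simp only [coe_filter, mem_univ, true_and, Set.mem_ofPred_eq] at hz hz'
    funext j
    by_cases hj : j = t
    · rw [hj]; exact hzz
    · have h1 := congrFun (hz.trans hz'.symm) j
      simpa [Function.update_of_ne hj] using h1
  · rw [mul_zero]
    norm_cast
    rw [Nat.le_zero, Finset.card_eq_zero, Finset.filter_eq_empty_iff]
    rintro z - hz
    exact h (by rw [← hz]; simp)

lemma sum_kikuchiSet_eq_le {V : Type*} [Fintype V] {l : ℕ} (a c : V) (y : KikuchiVertex V l) :
    (∑ ω : (Fin l × Fin l) × KikuchiVertex V l, if kikuchiSet a c ω = y then (1 : ℝ) else 0)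
      ≤ Fintype.card V ^ 2 *
        ∑ t₁, ∑ t₂, if a = y.1 t₁ ∧ c = y.2 t₂ then (1 : ℝ) else 0 := by
  rw [Fintype.sum_prod_type, Fintype.sum_prod_type, Finset.mul_sum]
  refine Finset.sum_le_sum fun t₁ _ => ?_
  rw [Finset.mul_sum]
  refine Finset.sum_le_sum fun t₂ _ => ?_
  have h : (∑ z : KikuchiVertex V l, if kikuchiSet a c ((t₁, t₂), z) = y then (1 : ℝ) else 0)
      = #{z : Fin l → V | Function.update z t₁ a = y.1} *
        #{z : Fin l → V | Function.update z t₂ c = y.2} := by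
    rw [Finset.sum_boole]
    norm_cast
    rw [← Finset.card_product]
    congr 1
    ext z
    simp [kikuchiSet, Prod.ext_iff]
  rw [h]
  refine (mul_le_mul (card_update_eq_le t₁ a y.1) (card_update_eq_le t₂ c y.2)
    (by positivity) (by positivity)).trans (le_of_eq ?_)
  rw [eq_comm (a := a), eq_comm (a := c)]
  by_cases h1 : y.1 t₁ = a <;> by_cases h2 : y.2 t₂ = c <;>
    simp [h1, h2, sq]

end Kikuchi

section PairDeg

variable {ι V E : Type*} [Fintype E] [DecidableEq ι] [DecidableEq V]
  {col : E → ι} {p : E → Fin 3 → V}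

/-- Pairs of edges sharing their `0`-th vertex, the first one of colour `i`, together with a
nonzero position at which the two edges have the vertices `u` and `w`. -/
def pairDeg (col : E → ι) (p : E → Fin 3 → V) (i : ι) (u w : V) : ℝ :=
  ∑ θ : E × E × Fin 3, if col θ.1 = i ∧ θ.2.2 ≠ 0 ∧ p θ.1 0 = p θ.2.1 0 ∧
    p θ.1 θ.2.2 = u ∧ p θ.2.1 θ.2.2 = w then 1 else 0

lemma pairDeg_nonneg (i : ι) (u w : V) : 0 ≤ pairDeg col p i u w :=
  Finset.sum_nonneg fun _ _ => by split_ifs <;> norm_num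

lemma sum_pairDeg_row_le [Fintype ι] [Fintype V]
    (hinj : Function.Injective fun q : E × Fin 3 => (col q.1, p q.1 q.2))
    (i : ι) (u : V) : ∑ w, pairDeg col p i u w ≤ Fintype.card ι := by
  unfold pairDeg
  rw [Finset.sum_comm]
  have h : ∀ θ : E × E × Fin 3, (∑ w, if col θ.1 = i ∧ θ.2.2 ≠ 0 ∧ p θ.1 0 = p θ.2.1 0 ∧
      p θ.1 θ.2.2 = u ∧ p θ.2.1 θ.2.2 = w then (1 : ℝ) else 0) =
      if col θ.1 = i ∧ θ.2.2 ≠ 0 ∧ p θ.1 0 = p θ.2.1 0 ∧ p θ.1 θ.2.2 = u then 1 else 0 := by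
    intro θ
    by_cases h : col θ.1 = i ∧ θ.2.2 ≠ 0 ∧ p θ.1 0 = p θ.2.1 0 ∧ p θ.1 θ.2.2 = u
    · obtain ⟨h1, h2, h3, h4⟩ := h
      simp [h1, h2, h3, h4]
    · rw [if_neg h]
      refine Finset.sum_eq_zero fun w _ => if_neg fun h' => h ⟨h'.1, h'.2.1, h'.2.2.1, h'.2.2.2.1⟩
  simp_rw [h]
  rw [Finset.sum_boole]
  norm_cast
  rw [← Finset.card_univ (α := ι)]
  refine Finset.card_le_card_of_injOn (fun θ => col θ.2.1) (by simp) ?_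
  rintro ⟨e, e', a⟩ hθ ⟨f, f', b⟩ hθ' hcol
  simp only [coe_filter, mem_univ, true_and, Set.mem_ofPred_eq] at hθ hθ' hcol
  have h1 : (e, a) = (f, b) := hinj (Prod.ext (hθ.1.trans hθ'.1.symm)
    (hθ.2.2.2.trans hθ'.2.2.2.symm))
  obtain ⟨rfl, rfl⟩ := Prod.ext_iff.1 h1
  have h2 : (e', (0 : Fin 3)) = (f', 0) := hinj (Prod.ext hcol
    (hθ.2.2.1.symm.trans hθ'.2.2.1))
  obtain ⟨rfl, -⟩ := Prod.ext_iff.1 h2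
  rfl

lemma sum_pairDeg_col_le [Fintype ι] [Fintype V]
    (hinj : Function.Injective fun q : E × Fin 3 => (col q.1, p q.1 q.2))
    (i : ι) (w : V) : ∑ u, pairDeg col p i u w ≤ Fintype.card ι := by
  unfold pairDeg
  rw [Finset.sum_comm]
  have h : ∀ θ : E × E × Fin 3, (∑ u, if col θ.1 = i ∧ θ.2.2 ≠ 0 ∧ p θ.1 0 = p θ.2.1 0 ∧
      p θ.1 θ.2.2 = u ∧ p θ.2.1 θ.2.2 = w then (1 : ℝ) else 0) =
      if col θ.1 = i ∧ θ.2.2 ≠ 0 ∧ p θ.1 0 = p θ.2.1 0 ∧ p θ.2.1 θ.2.2 = w then 1 else 0 := by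
    intro θ
    by_cases h : col θ.1 = i ∧ θ.2.2 ≠ 0 ∧ p θ.1 0 = p θ.2.1 0 ∧ p θ.2.1 θ.2.2 = w
    · obtain ⟨h1, h2, h3, h4⟩ := h
      simp [h1, h2, h3, h4]
    · rw [if_neg h]
      refine Finset.sum_eq_zero fun w _ => if_neg fun h' =>
        h ⟨h'.1, h'.2.1, h'.2.2.1, h'.2.2.2.2⟩
  simp_rw [h]
  rw [Finset.sum_boole]
  norm_cast
  rw [← Finset.card_univ (α := ι)]
  refine Finset.card_le_card_of_injOn (fun θ => col θ.2.1) (by simp) ?_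
  rintro ⟨e, e', a⟩ hθ ⟨f, f', b⟩ hθ' hcol
  simp only [coe_filter, mem_univ, true_and, Set.mem_ofPred_eq] at hθ hθ' hcol
  have h1 : (e', a) = (f', b) := hinj (Prod.ext hcol (hθ.2.2.2.trans hθ'.2.2.2.symm))
  obtain ⟨rfl, rfl⟩ := Prod.ext_iff.1 h1
  have h2 : (e, (0 : Fin 3)) = (f, 0) := hinj (Prod.ext (hθ.1.trans hθ'.1.symm)
    (hθ.2.2.1.trans hθ'.2.2.1.symm))
  obtain ⟨rfl, -⟩ := Prod.ext_iff.1 h2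
  rfl

lemma pairDeg_le (hinj : Function.Injective fun q : E × Fin 3 => (col q.1, p q.1 q.2))
    {d : ℝ} (hd : 0 ≤ d)
    (hlight : ∀ a : Fin 3, a ≠ 0 → ∀ u w, (#{e | p e 0 = u ∧ p e a = w} : ℝ) ≤ d)
    (i : ι) (u w : V) : pairDeg col p i u w ≤ d := by
  unfold pairDeg
  rw [Finset.sum_boole]
  set S := ({θ | col θ.1 = i ∧ θ.2.2 ≠ 0 ∧ p θ.1 0 = p θ.2.1 0 ∧
    p θ.1 θ.2.2 = u ∧ p θ.2.1 θ.2.2 = w} : Finset (E × E × Fin 3)) with hS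
  rcases S.eq_empty_or_nonempty with h0 | ⟨⟨e, e', a⟩, h0⟩
  · rw [h0]; simpa using hd
  simp only [hS, mem_filter, mem_univ, true_and] at h0
  refine le_trans ?_ (hlight a h0.2.1 (p e 0) w)
  norm_cast
  refine Finset.card_le_card_of_injOn (fun θ => θ.2.1) ?_ ?_
  · rintro ⟨f, f', b⟩ hf
    simp only [hS, coe_filter, mem_univ, true_and, Set.mem_ofPred_eq] at hf ⊢
    have h1 : (e, a) = (f, b) := hinj (Prod.ext (h0.1.trans hf.1.symm)
      (h0.2.2.2.1.trans hf.2.2.2.1.symm))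
    obtain ⟨rfl, rfl⟩ := Prod.ext_iff.1 h1
    exact ⟨hf.2.2.1.symm, hf.2.2.2.2⟩
  · rintro ⟨f, f', b⟩ hf ⟨g, g', c⟩ hg hfg
    simp only [hS, coe_filter, mem_univ, true_and, Set.mem_ofPred_eq] at hf hg hfg
    have h1 : (f, b) = (g, c) := hinj (Prod.ext (hf.1.trans hg.1.symm)
      (hf.2.2.2.1.trans hg.2.2.2.1.symm))
    obtain ⟨rfl, rfl⟩ := Prod.ext_iff.1 h1
    rw [hfg]

end PairDeg

section KikuchiBound

/-- The monomial attached to a vertex of the Kikuchi graph. -/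
def kikuchiMonomial {V : Type*} {l : ℕ} (x : V → ℝ) (z : KikuchiVertex V l) : ℝ :=
  (∏ j, x (z.1 j)) * ∏ j, x (z.2 j)

lemma kikuchiMonomial_sq {V : Type*} {l : ℕ} {x : V → ℝ} (hx : ∀ v, x v ^ 2 = 1)
    (z : KikuchiVertex V l) : kikuchiMonomial x z ^ 2 = 1 := by
  simp [kikuchiMonomial, mul_pow, ← Finset.prod_pow, hx]

lemma prod_update_mul_prod_update {V J : Type*} [Fintype J] [DecidableEq J] {x : V → ℝ}
    (hx : ∀ v, x v ^ 2 = 1) (z : J → V) (t : J) (a a' : V) :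
    (∏ j, x (Function.update z t a j)) * ∏ j, x (Function.update z t a' j) = x a * x a' := by
  rw [← Finset.prod_mul_distrib, Finset.prod_eq_single t]
  · simp
  · intro j _ hj
    simp [Function.update_of_ne hj, ← sq, hx]
  · simp

lemma kikuchiMonomial_kikuchiSet_mul {V : Type*} {l : ℕ} {x : V → ℝ} (hx : ∀ v, x v ^ 2 = 1)
    (a c a' c' : V) (ω : (Fin l × Fin l) × KikuchiVertex V l) :
    kikuchiMonomial x (kikuchiSet a c ω) * kikuchiMonomial x (kikuchiSet a' c' ω)
      = x a * x a' * (x c * x c') := by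
  unfold kikuchiMonomial kikuchiSet
  rw [← prod_update_mul_prod_update hx ω.2.1 ω.1.1 a a',
    ← prod_update_mul_prod_update hx ω.2.2 ω.1.2 c c']
  ring

/-- Markov's inequality for the uniform distribution on a finite type. -/
lemma card_lt_mul_le {Ω : Type*} [Fintype Ω] [Nonempty Ω] (φ : Ω → ℝ) (hφ : ∀ ω, 0 ≤ φ ω)
    {D : ℝ} (hD : 0 < D) (h : 𝔼 ω, φ ω ≤ D / 4) :
    (#{ω | D < φ ω} : ℝ) ≤ Fintype.card Ω / 4 := by
  have hc : (0 : ℝ) < Fintype.card Ω := by exact_mod_cast Fintype.card_pos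
  rw [Fintype.expect_eq_sum_div_card, div_le_iff₀ hc] at h
  have h1 : (#{ω | D < φ ω} : ℝ) * D ≤ ∑ ω, φ ω := by
    rw [← nsmul_eq_mul, ← Finset.sum_const]
    refine (Finset.sum_le_sum fun ω hω => (Finset.mem_filter.1 hω).2.le).trans ?_
    exact Finset.sum_le_sum_of_subset_of_nonneg (Finset.filter_subset _ _) fun ω _ _ => hφ ω
  refine le_of_mul_le_mul_right ?_ hD
  linarith

lemma sum_pairs_sum_kikuchiSet_le {ι V E : Type*} [DecidableEq ι] [Fintype V] [Fintype E]
    (col : E → ι) (p : E → Fin 3 → V) {l : ℕ} (i : ι)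
    (y : KikuchiVertex V l) :
    (∑ e, ∑ e', if col e = i ∧ p e 0 = p e' 0 then
      (∑ ω, if kikuchiSet (p e 1) (p e' 1) ω = y then (1 : ℝ) else 0) +
      (∑ ω, if kikuchiSet (p e 2) (p e' 2) ω = y then (1 : ℝ) else 0) else 0)
      ≤ Fintype.card V ^ 2 * kikuchiDeg (pairDeg col p i) y := by
  have hexp : kikuchiDeg (pairDeg col p i) y = ∑ e, ∑ e', if col e = i ∧ p e 0 = p e' 0 then
      (∑ t₁, ∑ t₂, if p e 1 = y.1 t₁ ∧ p e' 1 = y.2 t₂ then (1 : ℝ) else 0) +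
      (∑ t₁, ∑ t₂, if p e 2 = y.1 t₁ ∧ p e' 2 = y.2 t₂ then (1 : ℝ) else 0) else 0 := by
    unfold kikuchiDeg pairDeg
    have h1 : ∀ u w, (∑ θ : E × E × Fin 3, if col θ.1 = i ∧ θ.2.2 ≠ 0 ∧ p θ.1 0 = p θ.2.1 0 ∧
        p θ.1 θ.2.2 = u ∧ p θ.2.1 θ.2.2 = w then (1 : ℝ) else 0) =
        ∑ e, ∑ e', if col e = i ∧ p e 0 = p e' 0 then
          (if p e 1 = u ∧ p e' 1 = w then (1 : ℝ) else 0) +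
          (if p e 2 = u ∧ p e' 2 = w then (1 : ℝ) else 0) else 0 := by
      intro u w
      rw [Fintype.sum_prod_type]
      refine Finset.sum_congr rfl fun e _ => ?_
      rw [Fintype.sum_prod_type]
      refine Finset.sum_congr rfl fun e' _ => ?_
      rw [Fin.sum_univ_three]
      by_cases h : col e = i <;> by_cases h' : p e 0 = p e' 0 <;> simp [h, h']
    simp_rw [h1]
    have h2 : ∀ φ : Fin l → Fin l → E → E → ℝ, ∑ t₁, ∑ t₂, ∑ e, ∑ e', φ t₁ t₂ e e'
        = ∑ e, ∑ e', ∑ t₁, ∑ t₂, φ t₁ t₂ e e' := by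
      intro φ
      simp_rw [Finset.sum_comm (s := (univ : Finset (Fin l))) (t := (univ : Finset E))]
    rw [h2]
    refine Finset.sum_congr rfl fun e _ => Finset.sum_congr rfl fun e' _ => ?_
    split_ifs with h
    · simp_rw [Finset.sum_add_distrib]
    · simp
  rw [hexp, Finset.mul_sum]
  refine Finset.sum_le_sum fun e _ => ?_
  rw [Finset.mul_sum]
  refine Finset.sum_le_sum fun e' _ => ?_
  split_ifs
  · rw [mul_add]
    exact add_le_add (sum_kikuchiSet_eq_le _ _ _) (sum_kikuchiSet_eq_le _ _ _)
  · simp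

lemma expect_kikuchi_sum_sq_le {ι V E : Type*} [Fintype ι] [DecidableEq ι] [Nonempty ι]
    [Fintype V] [Fintype E] (col : E → ι) (p : E → Fin 3 → V)
    (hinj : Function.Injective fun q : E × Fin 3 => (col q.1, p q.1 q.2))
    {d : ℝ} (hd : 0 ≤ d)
    (hlight : ∀ a : Fin 3, a ≠ 0 → ∀ u w, (#{e | p e 0 = u ∧ p e a = w} : ℝ) ≤ d)
    {l : ℕ} (hl : 1 ≤ l) (hk : Fintype.card V * d ≤ Fintype.card ι * (l : ℝ) ^ 2)
    (hV : 2 ≤ Fintype.card V) (c : E → E → ℝ) (hc : ∀ e e', |c e e'| ≤ 1)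
    (hc0 : ∀ e e', p e 0 ≠ p e' 0 → c e e' = 0)
    (x : (ι → Bool) → V → ℝ) (hx : ∀ b v, x b v ^ 2 = 1) :
    (𝔼 b : ι → Bool, ∑ e, ∑ e', bitSign (b (col e)) * c e e' *
      (x b (p e 1) * x b (p e 2) * (x b (p e' 1) * x b (p e' 2)))) ^ 2
      ≤ 114688 * (Fintype.card ι : ℝ) ^ 3 * (Fintype.card V : ℝ) ^ 2 * l
        * Real.log (Fintype.card V) := by
  have : Nonempty V := Fintype.card_pos_iff.1 (by omega)
  have : Nonempty (Fin l) := ⟨⟨0, hl⟩⟩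
  have hk0 : (0 : ℝ) < Fintype.card ι := by exact_mod_cast Fintype.card_pos
  have hn2 : (2 : ℝ) ≤ Fintype.card V := by exact_mod_cast hV
  have hl1 : (1 : ℝ) ≤ l := by exact_mod_cast hl
  have hZ : (0 : ℝ) < Fintype.card (KikuchiVertex V l) := by exact_mod_cast Fintype.card_pos
  have hT : (Fintype.card ((Fin l × Fin l) × KikuchiVertex V l) : ℝ)
      = l ^ 2 * Fintype.card (KikuchiVertex V l) := by
    rw [Fintype.card_prod, Fintype.card_prod, Fintype.card_fin]; push_cast; ring
  have hlogZ : Real.log (Fintype.card (KikuchiVertex V l))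
      = 2 * l * Real.log (Fintype.card V) := by
    rw [Fintype.card_prod, Fintype.card_fun, Fintype.card_fin, ← pow_add, Nat.cast_pow,
      Real.log_pow]
    push_cast; ring
  set k : ℝ := (Fintype.card ι : ℝ) with hkdef
  set n : ℝ := (Fintype.card V : ℝ) with hndef
  set N : ℝ := (Fintype.card (KikuchiVertex V l) : ℝ) with hNdef
  set T : ℝ := (Fintype.card ((Fin l × Fin l) × KikuchiVertex V l) : ℝ) with hTdef
  have hT0 : 0 < T := by rw [hT]; positivity
  have hlog : 1 / 2 ≤ Real.log n := by
    have := Real.log_le_log (by norm_num) hn2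
    linarith [Real.log_two_gt_d9]
  set D : ℝ := 16 * l ^ 2 * k / n with hDdef
  have hD : 0 < D := by positivity
  set g : ι → V → V → ℝ := pairDeg col p with hgdef
  have hdegnn : ∀ i (y : KikuchiVertex V l), 0 ≤ kikuchiDeg (g i) y := fun i y =>
    Finset.sum_nonneg fun _ _ => Finset.sum_nonneg fun _ _ => pairDeg_nonneg _ _ _
  have hmarkov : ∀ i a c', (#{ω : (Fin l × Fin l) × KikuchiVertex V l |
      D < kikuchiDeg (g i) (kikuchiSet a c' ω)} : ℝ) ≤ T / 4 := fun i a c' => by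
    refine card_lt_mul_le _ (fun ω => hdegnn _ _) hD ?_
    refine (expect_kikuchiDeg_le hl (g i) (pairDeg_nonneg i) (pairDeg_le hinj hd hlight i)
      (sum_pairDeg_row_le hinj i) (sum_pairDeg_col_le hinj i) hk a c').trans (le_of_eq ?_)
    rw [hDdef]; ring
  set K : E → E → Finset ((Fin l × Fin l) × KikuchiVertex V l) := fun e e' =>
    {ω | kikuchiDeg (g (col e)) (kikuchiSet (p e 1) (p e' 1) ω) ≤ D ∧
      kikuchiDeg (g (col e)) (kikuchiSet (p e 2) (p e' 2) ω) ≤ D} with hKdef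
  have hK : ∀ e e', T / 2 ≤ #(K e e') := fun e e' => by
    have h1 := hmarkov (col e) (p e 1) (p e' 1)
    have h2 := hmarkov (col e) (p e 2) (p e' 2)
    have h3 : (univ : Finset ((Fin l × Fin l) × KikuchiVertex V l)) ⊆ K e e' ∪
        (({ω | D < kikuchiDeg (g (col e)) (kikuchiSet (p e 1) (p e' 1) ω)} : Finset _) ∪
        ({ω | D < kikuchiDeg (g (col e)) (kikuchiSet (p e 2) (p e' 2) ω)} : Finset _)) := by
      intro ω _
      simp only [hKdef, mem_union, mem_filter, mem_univ, true_and]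
      by_cases ha : kikuchiDeg (g (col e)) (kikuchiSet (p e 1) (p e' 1) ω) ≤ D
      · by_cases hb : kikuchiDeg (g (col e)) (kikuchiSet (p e 2) (p e' 2) ω) ≤ D
        · exact Or.inl ⟨ha, hb⟩
        · exact Or.inr (Or.inr (not_le.1 hb))
      · exact Or.inr (Or.inl (not_le.1 ha))
    have h4 := (Finset.card_le_card h3).trans ((Finset.card_union_le _ _).trans
      (Nat.add_le_add_left (Finset.card_union_le _ _) _))
    have h5 : T ≤ #(K e e') + (T / 4 + T / 4) := by
      refine le_trans ?_ (add_le_add_right (add_le_add h1 h2) _)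
      rw [hTdef, ← Finset.card_univ]
      exact_mod_cast h4
    linarith
  set wt : E × E × ((Fin l × Fin l) × KikuchiVertex V l) → ℝ := fun f =>
    if f.2.2 ∈ K f.1 f.2.1 then c f.1 f.2.1 / #(K f.1 f.2.1) else 0 with hwtdef
  have hwt : ∀ f, |wt f| ≤ 2 / T := fun f => by
    simp only [hwtdef]
    split_ifs
    · have h := hK f.1 f.2.1
      rw [abs_div, Nat.abs_cast, div_le_div_iff₀ (by linarith) hT0]
      have := hc f.1 f.2.1
      nlinarith
    · rw [abs_zero]; positivity
  have hdeg : ∀ i (y : KikuchiVertex V l),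
      (∑ f : E × E × ((Fin l × Fin l) × KikuchiVertex V l), if col f.1 = i ∧
        kikuchiSet (p f.1 1) (p f.2.1 1) f.2.2 = y then |wt f| else 0) +
      (∑ f : E × E × ((Fin l × Fin l) × KikuchiVertex V l), if col f.1 = i ∧
        kikuchiSet (p f.1 2) (p f.2.1 2) f.2.2 = y then |wt f| else 0) ≤ 32 * n * k / N := by
    intro i y
    by_cases hy : kikuchiDeg (g i) y ≤ D
    · have h1 : 2 / T * (n ^ 2 * D) = 32 * n * k / N := by
        rw [hT, hDdef]; field_simp; ring
      rw [← h1]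
      refine le_trans ?_ (mul_le_mul_of_nonneg_left ((sum_pairs_sum_kikuchiSet_le col p i y).trans
        (mul_le_mul_of_nonneg_left hy (by positivity))) (by positivity))
      rw [← Finset.sum_add_distrib, Fintype.sum_prod_type, Finset.mul_sum]
      refine Finset.sum_le_sum fun e _ => ?_
      rw [Fintype.sum_prod_type, Finset.mul_sum]
      refine Finset.sum_le_sum fun e' _ => ?_
      by_cases h : col e = i ∧ p e 0 = p e' 0
      · rw [if_pos h, ← Finset.sum_add_distrib, Finset.mul_sum]
        refine Finset.sum_le_sum fun ω _ => ?_
        rw [mul_add, mul_ite, mul_ite, mul_one, mul_zero]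
        simp only [h.1, true_and]
        have := hwt (e, e', ω)
        refine add_le_add ?_ ?_ <;> split_ifs <;> simp [this]
      · rw [if_neg h, mul_zero]
        refine le_of_eq (Finset.sum_eq_zero fun ω _ => ?_)
        by_cases h' : col e = i
        · have h0 : wt (e, e', ω) = 0 := by
            simp [hwtdef, hc0 e e' fun h'' => h ⟨h', h''⟩]
          simp [h0]
        · simp [h']
    · refine le_trans (le_of_eq ?_) (by positivity : 0 ≤ 32 * n * k / N)
      rw [← Finset.sum_add_distrib]
      refine Finset.sum_eq_zero fun f _ => ?_
      have hz : ∀ (a : Prop) [Decidable a], (a → f.2.2 ∉ K f.1 f.2.1) → (if a then |wt f| else 0) = 0 := by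
        intro a _ ha
        split_ifs with h
        · simp [hwtdef, ha h]
        · rfl
      rw [hz, hz, add_zero]
      · rintro ⟨rfl, rfl⟩ h
        exact hy (Finset.mem_filter.1 h).2.2
      · rintro ⟨rfl, rfl⟩ h
        exact hy (Finset.mem_filter.1 h).2.1
  have hmain := expect_edge_sum_sq_le (fun f : E × E × ((Fin l × Fin l) × KikuchiVertex V l) =>
    col f.1) (fun f => kikuchiSet (p f.1 1) (p f.2.1 1) f.2.2)
    (fun f => kikuchiSet (p f.1 2) (p f.2.1 2) f.2.2) wt (β := 32 * n * k / N)
    (fun i y => le_trans (le_of_eq (by congr!)) (hdeg i y))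
    (fun b z => kikuchiMonomial (x b) z) (X := N)
    (fun b => by simp [kikuchiMonomial_sq (hx b), hNdef])
  have hsum : ∀ b : ι → Bool, (∑ f : E × E × ((Fin l × Fin l) × KikuchiVertex V l),
      bitSign (b (col f.1)) * wt f *
        (kikuchiMonomial (x b) (kikuchiSet (p f.1 1) (p f.2.1 1) f.2.2) *
          kikuchiMonomial (x b) (kikuchiSet (p f.1 2) (p f.2.1 2) f.2.2))) =
      ∑ e, ∑ e', bitSign (b (col e)) * c e e' *
        (x b (p e 1) * x b (p e 2) * (x b (p e' 1) * x b (p e' 2))) := fun b => by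
    rw [Fintype.sum_prod_type]
    refine Finset.sum_congr rfl fun e _ => ?_
    rw [Fintype.sum_prod_type]
    refine Finset.sum_congr rfl fun e' _ => ?_
    simp only [kikuchiMonomial_kikuchiSet_mul (hx b)]
    rw [← Finset.sum_mul, ← Finset.mul_sum]
    congr 2
    simp only [hwtdef]
    rw [← Finset.sum_filter, Finset.filter_mem_eq_inter, Finset.univ_inter, Finset.sum_const,
      nsmul_eq_mul, mul_div_cancel₀]
    have := hK e e'
    have : (0 : ℝ) < #(K e e') := by linarith
    exact this.ne'
  simp only [hsum] at hmain
  refine hmain.trans ?_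
  rw [hlogZ]
  have h1 : 28 * k * N ^ 2 * (32 * n * k / N) ^ 2 = 28672 * k ^ 3 * n ^ 2 := by
    field_simp; ring
  rw [h1]
  have h2 : 2 * l * Real.log n + 1 ≤ 4 * (l * Real.log n) := by nlinarith
  calc _ ≤ 28672 * k ^ 3 * n ^ 2 * (4 * (l * Real.log n)) := by gcongr
    _ = _ := by ring

end KikuchiBound

section Decoupling

variable {ι : Type*} [Fintype ι] [DecidableEq ι]

lemma expect_bitSign_mul_eq_zero (i : ι) (G : (ι → Bool) → ℝ)
    (hG : ∀ L t, G (Function.update L i t) = G L) : 𝔼 L : ι → Bool, bitSign (L i) * G L = 0 := by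
  have hinv : Function.Involutive fun L : ι → Bool => Function.update L i (!L i) := fun L => by
    simp
  have h := Fintype.expect_equiv (hinv.toPerm _) (fun L => bitSign (L i) * G L)
    (fun L => -(bitSign (L i) * G L)) fun L => by
      simp only [Function.Involutive.coe_toPerm, hG, Function.update_self]
      cases L i <;> simp [bitSign]
  rw [Finset.expect_neg_distrib] at h
  linarith

lemma expect_cut_weight (i j : ι) :
    𝔼 L : ι → Bool, (1 + bitSign (L i)) * (1 - bitSign (L j)) = if i = j then 0 else 1 := by
  split_ifs with h
  · subst h
    refine Finset.expect_eq_zero fun L _ => ?_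
    linarith [bitSign_mul_self (L i)]
  · have h1 := expect_bitSign_mul_eq_zero i (fun _ => 1) fun _ _ => rfl
    have h2 := expect_bitSign_mul_eq_zero j (fun _ => 1) fun _ _ => rfl
    have h3 := expect_bitSign_mul_eq_zero i (fun L => bitSign (L j)) fun L t => by
      rw [Function.update_of_ne (Ne.symm h)]
    simp only [mul_one] at h1 h2
    calc _ = 𝔼 L : ι → Bool, (1 + bitSign (L i) - bitSign (L j)
          - bitSign (L i) * bitSign (L j)) := Finset.expect_congr rfl fun L _ => by ring
      _ = 1 := by
        rw [Finset.expect_sub_distrib, Finset.expect_sub_distrib, Finset.expect_add_distrib,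
          h1, h2, h3, Finset.expect_const univ_nonempty]
        ring

/-- Take the bits of `b'` where `L` is false and those of `b` elsewhere. -/
def mixBits (L b' b : ι → Bool) : ι → Bool := fun i => if L i then b i else b' i

lemma expect_mixBits (L : ι → Bool) (F : (ι → Bool) → ℝ) :
    𝔼 b, F b = 𝔼 b, 𝔼 b', F (mixBits L b' b) := by
  have hinv : Function.Involutive fun q : (ι → Bool) × (ι → Bool) =>
      (mixBits L q.1 q.2, mixBits L q.2 q.1) := fun q => by
    refine Prod.ext (funext fun i => ?_) (funext fun i => ?_) <;>
      simp only [mixBits] <;> split_ifs <;> rfl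
  have h := Fintype.expect_equiv (hinv.toPerm _) (fun q => F (mixBits L q.1 q.2))
    (fun q => F q.1) fun q => rfl
  rw [← Finset.univ_product_univ, Finset.expect_product' univ univ fun b' b => F (mixBits L b' b),
    Finset.expect_product' univ univ fun b' _ => F b'] at h
  rw [Finset.expect_comm, h]
  exact Finset.expect_congr rfl fun b _ => (Finset.expect_const univ_nonempty _).symm

end Decoupling

section Light

variable {ι V E : Type*} [Fintype ι] [DecidableEq ι] [Nonempty ι] [Fintype V] [Fintype E]

lemma expect_cross_sum_le (col : E → ι) (p : E → Fin 3 → V)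
    (hinj : Function.Injective fun q : E × Fin 3 => (col q.1, p q.1 q.2))
    {d : ℝ} (hd : 0 ≤ d)
    (hlight : ∀ a : Fin 3, a ≠ 0 → ∀ u w, (#{e | p e 0 = u ∧ p e a = w} : ℝ) ≤ d)
    {l : ℕ} (hl : 1 ≤ l) (hk : Fintype.card V * d ≤ Fintype.card ι * (l : ℝ) ^ 2)
    (hV : 2 ≤ Fintype.card V) (s : E → ℝ) (hs : ∀ e, |s e| ≤ 1)
    (x : (ι → Bool) → V → ℝ) (hx : ∀ b v, x b v ^ 2 = 1) :
    𝔼 b : ι → Bool, ∑ e, ∑ e', (if p e 0 = p e' 0 ∧ col e ≠ col e' then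
      (bitSign (b (col e)) * s e * (x b (p e 1) * x b (p e 2))) *
      (bitSign (b (col e')) * s e' * (x b (p e' 1) * x b (p e' 2))) else 0) ≤
      4 * √(114688 * (Fintype.card ι : ℝ) ^ 3 * (Fintype.card V : ℝ) ^ 2 * l
        * Real.log (Fintype.card V)) := by
  set B := 114688 * (Fintype.card ι : ℝ) ^ 3 * (Fintype.card V : ℝ) ^ 2 * l
        * Real.log (Fintype.card V) with hB
  set m : (ι → Bool) → E → ℝ := fun b e =>
    bitSign (b (col e)) * s e * (x b (p e 1) * x b (p e 2)) with hm
  have h1 : ∀ b : ι → Bool, (∑ e, ∑ e', (if p e 0 = p e' 0 ∧ col e ≠ col e' then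
      m b e * m b e' else 0)) = 𝔼 L : ι → Bool, ∑ e, ∑ e', (if p e 0 = p e' 0 then
      (1 + bitSign (L (col e))) * (1 - bitSign (L (col e'))) * (m b e * m b e') else 0) := by
    intro b
    rw [Finset.expect_sum_comm]
    refine Finset.sum_congr rfl fun e _ => ?_
    rw [Finset.expect_sum_comm]
    refine Finset.sum_congr rfl fun e' _ => ?_
    by_cases h : p e 0 = p e' 0
    · simp only [h, true_and, if_true]
      rw [← Finset.expect_mul, expect_cut_weight]
      by_cases h' : col e = col e' <;> simp [h']
    · simp [h]
  refine (Finset.expect_congr rfl fun b _ => h1 b).trans_le ?_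
  rw [Finset.expect_comm]
  refine Finset.expect_le univ_nonempty fun L _ => ?_
  rw [expect_mixBits L]
  refine Finset.expect_le univ_nonempty fun b _ => ?_
  have habs : ∀ t, |bitSign t| = 1 := fun t => by cases t <;> simp [bitSign]
  have h2 := expect_kikuchi_sum_sq_le col p hinj hd hlight hl hk hV
    (fun e e' => if p e 0 = p e' 0 ∧ L (col e) = false ∧ L (col e') = true then
      s e * s e' * bitSign (b (col e')) else 0)
    (fun e e' => by
      split_ifs
      · rw [abs_mul, abs_mul, habs, mul_one]
        exact mul_le_one₀ (hs e) (abs_nonneg _) (hs e')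
      · simp)
    (fun e e' h => by simp [h])
    (fun b' => x (mixBits L b' b)) (fun b' => hx _)
  rw [← hB] at h2
  have h3 := (le_abs_self _).trans (Real.abs_le_sqrt h2)
  refine le_trans (le_of_eq ?_) (mul_le_mul_of_nonneg_left h3 (by norm_num : (0 : ℝ) ≤ 4))
  rw [Finset.mul_expect]
  refine Finset.expect_congr rfl fun b' _ => ?_
  rw [Finset.mul_sum]
  refine Finset.sum_congr rfl fun e _ => ?_
  rw [Finset.mul_sum]
  refine Finset.sum_congr rfl fun e' _ => ?_
  by_cases h0 : p e 0 = p e' 0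
  · cases h4 : L (col e)
    · cases h5 : L (col e')
      · simp [h0, bitSign]
      · simp only [h0, hm, mixBits, h4, h5, if_true, true_and]
        simp only [bitSign]
        norm_num
        ring_nf
    · simp [h0, bitSign]
  · simp [h0]

lemma sq_card_le_of_light (col : E → ι) (p : E → Fin 3 → V)
    (hinj : Function.Injective fun q : E × Fin 3 => (col q.1, p q.1 q.2))
    {d : ℝ} (hd : 0 ≤ d)
    (hlight : ∀ a : Fin 3, a ≠ 0 → ∀ u w, (#{e | p e 0 = u ∧ p e a = w} : ℝ) ≤ d)
    {l : ℕ} (hl : 1 ≤ l) (hk : Fintype.card V * d ≤ Fintype.card ι * (l : ℝ) ^ 2)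
    (hV : 2 ≤ Fintype.card V) (s : E → ℝ) (hs : ∀ e, |s e| ≤ 1)
    (x : (ι → Bool) → V → ℝ) (hx : ∀ b v, x b v ^ 2 = 1) {ε : ℝ} (hε : 0 ≤ ε)
    (hcorr : ∀ e, ε ≤ 𝔼 b : ι → Bool,
      bitSign (b (col e)) * s e * (x b (p e 0) * x b (p e 1) * x b (p e 2))) :
    (ε * Fintype.card E) ^ 2 ≤ Fintype.card V * (Fintype.card E +
      4 * √(114688 * (Fintype.card ι : ℝ) ^ 3 * (Fintype.card V : ℝ) ^ 2 * l
        * Real.log (Fintype.card V))) := by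
  set m : (ι → Bool) → E → ℝ := fun b e =>
    bitSign (b (col e)) * s e * (x b (p e 1) * x b (p e 2)) with hm
  have hmsq : ∀ b e, m b e * m b e ≤ 1 := fun b e => by
    have h1 : m b e * m b e = bitSign (b (col e)) * bitSign (b (col e)) * s e ^ 2 *
      (x b (p e 1) ^ 2 * x b (p e 2) ^ 2) := by rw [hm]; ring
    rw [h1, bitSign_mul_self, hx, hx, one_mul, mul_one, mul_one, ← sq_abs]
    exact pow_le_one₀ (abs_nonneg _) (hs e)
  set Φ : (ι → Bool) → V → ℝ := fun b u => ∑ e, if p e 0 = u then m b e else 0 with hΦ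
  have h1 : ε * Fintype.card E ≤ 𝔼 b, ∑ u, x b u * Φ b u := by
    have h2 : ∀ b, ∑ u, x b u * Φ b u =
        ∑ e, bitSign (b (col e)) * s e * (x b (p e 0) * x b (p e 1) * x b (p e 2)) := fun b => by
      simp only [hΦ, Finset.mul_sum]
      rw [Finset.sum_comm]
      refine Finset.sum_congr rfl fun e _ => ?_
      simp only [mul_ite, mul_zero, Finset.sum_ite_eq, mem_univ, if_true, hm]
      ring
    simp only [h2]
    rw [Finset.expect_sum_comm, mul_comm, ← nsmul_eq_mul, ← Finset.card_univ, ← Finset.sum_const]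
    exact Finset.sum_le_sum fun e _ => hcorr e
  have h3 : ∀ b, (∑ u, x b u * Φ b u) ^ 2 ≤ Fintype.card V * ∑ u, Φ b u ^ 2 := fun b => by
    refine (Finset.sum_mul_sq_le_sq_mul_sq univ (x b) (Φ b)).trans (le_of_eq ?_)
    simp [hx]
  have h4 : ∀ b, ∑ u, Φ b u ^ 2 ≤ Fintype.card E + ∑ e, ∑ e',
      (if p e 0 = p e' 0 ∧ col e ≠ col e' then m b e * m b e' else 0) := fun b => by
    have h5 : ∑ u, Φ b u ^ 2 = ∑ e, ∑ e', if p e 0 = p e' 0 then m b e * m b e' else 0 := by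
      simp only [hΦ, sq, Finset.sum_mul_sum]
      rw [Finset.sum_comm]
      refine Finset.sum_congr rfl fun e _ => ?_
      rw [Finset.sum_comm]
      refine Finset.sum_congr rfl fun e' _ => ?_
      simp only [ite_mul, zero_mul, Finset.sum_ite_eq, mem_univ, if_true, mul_ite, mul_zero]
    have h6 : (Fintype.card E : ℝ) = ∑ e : E, ∑ e' : E, if e = e' then (1 : ℝ) else 0 := by simp
    rw [h5, h6, ← Finset.sum_add_distrib]
    refine Finset.sum_le_sum fun e _ => ?_
    rw [← Finset.sum_add_distrib]
    refine Finset.sum_le_sum fun e' _ => ?_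
    by_cases h0 : p e 0 = p e' 0
    · by_cases hc : col e = col e'
      · have h7 : (e, (0 : Fin 3)) = (e', 0) := hinj (Prod.ext hc h0)
        obtain ⟨rfl, -⟩ := Prod.ext_iff.1 h7
        simpa using hmsq b e
      · have : e ≠ e' := fun h => hc (h ▸ rfl)
        simp [h0, hc, this]
    · simp only [h0, if_false, false_and]
      split_ifs <;> norm_num
  have h8 := expect_cross_sum_le col p hinj hd hlight hl hk hV s hs x hx
  calc (ε * Fintype.card E) ^ 2 ≤ (𝔼 b, ∑ u, x b u * Φ b u) ^ 2 :=
        pow_le_pow_left₀ (by positivity) h1 2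
    _ ≤ 𝔼 b, (∑ u, x b u * Φ b u) ^ 2 := expect_pow_le_of_even _ even_two
    _ ≤ 𝔼 b : ι → Bool, Fintype.card V * (Fintype.card E + ∑ e, ∑ e',
        (if p e 0 = p e' 0 ∧ col e ≠ col e' then m b e * m b e' else 0)) :=
        Finset.expect_le_expect fun b _ => (h3 b).trans
          (mul_le_mul_of_nonneg_left (h4 b) (by positivity))
    _ = Fintype.card V * (Fintype.card E + 𝔼 b : ι → Bool, ∑ e, ∑ e',
        (if p e 0 = p e' 0 ∧ col e ≠ col e' then m b e * m b e' else 0)) := by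
        rw [← Finset.mul_expect, Finset.expect_add_distrib, Finset.expect_const univ_nonempty]
    _ ≤ _ := by gcongr

end Light

section Core

lemma mul_pow_four_le_of_sq_le {k n L ε δ M B l : ℝ} (hk : 0 < k) (hn : 0 < n) (hδ : 0 < δ)
    (hM : δ / 2 * k * n ≤ M) (hL : 0 ≤ L) (hl : 0 ≤ l)
    (hB : B = 114688 * k ^ 3 * n ^ 2 * l * L) (h : (ε * M) ^ 2 ≤ n * (M + 4 * √B)) :
    k * (ε ^ 2 * δ) ≤ 4 ∨ k * (ε ^ 4 * δ ^ 4) ≤ 117440512 * l * L := by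
  have hM0 : 0 < M := lt_of_lt_of_le (by positivity) hM
  have hB0 : 0 ≤ B := by rw [hB]; positivity
  rcases le_total (4 * √B) M with h1 | h1
  · left
    have h2 : M * (ε ^ 2 * M) ≤ M * (2 * n) := by nlinarith
    have h3 := le_of_mul_le_mul_left h2 hM0
    have h4 : ε ^ 2 * (δ / 2 * k * n) ≤ 2 * n :=
      (mul_le_mul_of_nonneg_left hM (by positivity)).trans h3
    have h5 : n * (k * (ε ^ 2 * δ)) ≤ n * 4 := by nlinarith
    exact le_of_mul_le_mul_left h5 hn
  · right
    have h2 : (ε * M) ^ 2 ≤ 8 * n * √B := by nlinarith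
    have h3 : ((ε * M) ^ 2) ^ 2 ≤ 64 * n ^ 2 * B := by
      calc ((ε * M) ^ 2) ^ 2 ≤ (8 * n * √B) ^ 2 := pow_le_pow_left₀ (by positivity) h2 2
        _ = 64 * n ^ 2 * B := by rw [mul_pow, Real.sq_sqrt hB0]; ring
    have h4 : ε ^ 4 * (δ / 2 * k * n) ^ 4 ≤ 64 * n ^ 2 * B := by
      refine le_trans ?_ h3
      calc ε ^ 4 * (δ / 2 * k * n) ^ 4 ≤ ε ^ 4 * M ^ 4 := by gcongr
        _ = _ := by ring
    have h5 : (k ^ 3 * n ^ 4 / 16) * (k * (ε ^ 4 * δ ^ 4)) ≤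
        (k ^ 3 * n ^ 4 / 16) * (117440512 * l * L) := by
      rw [hB] at h4
      calc _ = ε ^ 4 * (δ / 2 * k * n) ^ 4 := by ring
        _ ≤ _ := h4
        _ = _ := by ring
    exact le_of_mul_le_mul_left h5 (by positivity)

lemma cube_le_of_cases {k n L η d l A : ℝ} (hk : 0 < k) (hn : 1 ≤ n) (hL : 1 / 2 ≤ L)
    (hη : 0 < η) (hd : d * η ≤ 35840 * L) (hl : k * l ^ 2 ≤ 2 * (n * d) + 2 * k)
    (hA : 35840 ≤ A) (h : k * η ≤ 4 ∨ k * η ≤ A * l * L) :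
    (k * η) ^ 3 ≤ 8 * A ^ 3 * n * L ^ 3 := by
  set y := k * η with hy
  have hy0 : 0 < y := by positivity
  have hL3 : (1 / 2) ^ 3 ≤ L ^ 3 := pow_le_pow_left₀ (by norm_num) hL 3
  have hA3 : (35840 : ℝ) ^ 3 ≤ A ^ 3 := pow_le_pow_left₀ (by norm_num) hA 3
  rcases h with h | h
  · have h1 : y ^ 3 ≤ 4 ^ 3 := pow_le_pow_left₀ hy0.le h 3
    refine h1.trans ?_
    calc (4 : ℝ) ^ 3 ≤ 8 * 35840 ^ 3 * 1 * (1 / 2) ^ 3 := by norm_num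
      _ ≤ _ := by gcongr
  · have h1 : y ^ 2 ≤ (A * l * L) ^ 2 := pow_le_pow_left₀ hy0.le h 2
    have h2 : y ^ 3 ≤ A ^ 2 * L ^ 2 * (71680 * n * L + 2 * y) := by
      calc y ^ 3 = y * y ^ 2 := by ring
        _ ≤ y * (A * l * L) ^ 2 := by gcongr
        _ = A ^ 2 * L ^ 2 * η * (k * l ^ 2) := by rw [hy]; ring
        _ ≤ A ^ 2 * L ^ 2 * η * (2 * (n * d) + 2 * k) := by gcongr
        _ = A ^ 2 * L ^ 2 * (2 * n * (d * η) + 2 * y) := by rw [hy]; ring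
        _ ≤ A ^ 2 * L ^ 2 * (2 * n * (35840 * L) + 2 * y) := by gcongr
        _ = _ := by ring
    rcases le_total y (35840 * n * L) with h3 | h3
    · calc y ^ 3 ≤ A ^ 2 * L ^ 2 * (71680 * n * L + 2 * (35840 * n * L)) := h2.trans (by gcongr)
        _ = 4 * 35840 * (A ^ 2 * n * L ^ 3) := by ring
        _ ≤ 8 * A * (A ^ 2 * n * L ^ 3) := by gcongr; linarith
        _ = _ := by ring
    · have h4 : y * y ^ 2 ≤ y * (2 * A * L) ^ 2 := by
        calc y * y ^ 2 = y ^ 3 := by ring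
          _ ≤ A ^ 2 * L ^ 2 * (2 * y + 2 * y) := h2.trans
            (mul_le_mul_of_nonneg_left (by linarith) (by positivity))
          _ = _ := by ring
      have h5 := le_of_mul_le_mul_left h4 hy0
      have h6 : y ≤ 2 * A * L := le_of_sq_le_sq h5 (by positivity)
      calc y ^ 3 ≤ (2 * A * L) ^ 3 := pow_le_pow_left₀ hy0.le h6 3
        _ = 8 * A ^ 3 * 1 * L ^ 3 := by ring
        _ ≤ _ := by gcongr

variable {ι V E : Type*} [Fintype ι] [DecidableEq ι] [Nonempty ι] [Fintype V] [Fintype E]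

/-- The near-cubic bound for collections of signed triples which are matchings in each colour. -/
theorem card_cube_le_of_correlated_triples (col : E → ι) (p : E → Fin 3 → V)
    (hinj : Function.Injective fun q : E × Fin 3 => (col q.1, p q.1 q.2))
    (hV : 2 ≤ Fintype.card V) (s : E → ℝ) (hs : ∀ e, |s e| ≤ 1)
    (x : (ι → Bool) → V → ℝ) (hx : ∀ b v, x b v ^ 2 = 1) {ε δ : ℝ} (hε : 0 < ε) (hε1 : ε ≤ 1)
    (hδ : 0 < δ) (hδ1 : δ ≤ 1)
    (hE : δ * Fintype.card ι * Fintype.card V ≤ Fintype.card E)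
    (hcorr : ∀ e, ε ≤ 𝔼 b : ι → Bool,
      bitSign (b (col e)) * s e * (x b (p e 0) * x b (p e 1) * x b (p e 2))) :
    (Fintype.card ι * (ε ^ 4 * δ ^ 4)) ^ 3 ≤
      8 * 117440512 ^ 3 * Fintype.card V * Real.log (Fintype.card V) ^ 3 := by
  have hk0 : (0 : ℝ) < Fintype.card ι := by exact_mod_cast Fintype.card_pos
  have hn2 : (2 : ℝ) ≤ Fintype.card V := by exact_mod_cast hV
  have hlog : 1 / 2 ≤ Real.log (Fintype.card V) := by
    have := Real.log_le_log (by norm_num) hn2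
    linarith [Real.log_two_gt_d9]
  set k : ℝ := (Fintype.card ι : ℝ) with hkdef
  set n : ℝ := (Fintype.card V : ℝ) with hndef
  set L : ℝ := Real.log n with hLdef
  set d : ℝ := 35840 * L / (ε ^ 2 * δ ^ 2) with hddef
  have hd : 0 < d := by positivity
  have hheavy : ∀ a : Fin 3, a ≠ 0 →
      (#{e | d < (#{e' | p e' 0 = p e 0 ∧ p e' a = p e a} : ℝ)} : ℝ)
        ≤ Fintype.card E / 4 := by
    intro a ha
    have hia : ∀ a : Fin 3, Function.Injective fun e => (col e, p e a) := fun a e e' h => by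
      have := @hinj (e, a) (e', a) h
      exact (Prod.ext_iff.1 this).1
    have h1 := heavy_card_sq_le col (fun e => p e 0) (fun e => p e a) (fun e => p e (3 - a))
      (hia _) (hia _) s hs x hx hε.le hd hV (fun e => (hcorr e).trans (le_of_eq
        (Finset.expect_congr rfl fun b _ => by
          fin_cases a
          · exact absurd rfl ha
          · rfl
          · show _ = bitSign (b (col e)) * s e * (x b (p e 0) * x b (p e 2) * x b (p e 1))
            ring)))
    set h : ℝ := (#{e | d < (#{e' | p e' 0 = p e 0 ∧ p e' a = p e a} : ℝ)} : ℝ)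
    have h2 : 2240 * k ^ 2 * n ^ 2 * L / d = (ε * (δ * k * n / 4)) ^ 2 := by
      rw [hddef]; field_simp; norm_num
    rw [← hkdef, ← hndef, ← hLdef, h2] at h1
    have h3 := le_of_mul_le_mul_left (le_of_sq_le_sq h1 (by positivity)) hε
    linarith
  set P : E → Prop := fun e => ∀ a : Fin 3, a ≠ 0 →
    (#{e' | p e' 0 = p e 0 ∧ p e' a = p e a} : ℝ) ≤ d with hP
  have hcard : δ / 2 * k * n ≤ Fintype.card {e // P e} := by
    have h1 := hheavy 1 (by decide)
    have h2 := hheavy 2 (by decide)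
    have h3 : (univ : Finset E) ⊆ ({e | P e} : Finset E) ∪
        (({e | d < (#{e' | p e' 0 = p e 0 ∧ p e' 1 = p e 1} : ℝ)} : Finset E) ∪
        ({e | d < (#{e' | p e' 0 = p e 0 ∧ p e' 2 = p e 2} : ℝ)} : Finset E)) := by
      intro e _
      simp only [mem_union, mem_filter, mem_univ, true_and]
      by_contra! hcon
      refine hcon.1 fun a ha => ?_
      fin_cases a
      · exact absurd rfl ha
      · exact hcon.2.1
      · exact hcon.2.2
    have h4 := (Finset.card_le_card h3).trans ((Finset.card_union_le _ _).trans
      (Nat.add_le_add_left (Finset.card_union_le _ _) _))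
    rw [Finset.card_univ] at h4
    have h5 : (Fintype.card E : ℝ) ≤ #{e | P e} +
        (Fintype.card E / 4 + Fintype.card E / 4) := by
      refine le_trans ?_ (add_le_add_right (add_le_add h1 h2) _)
      exact_mod_cast h4
    rw [Fintype.card_subtype]
    linarith
  set l : ℕ := ⌈√(n * d / k)⌉₊ with hldef
  have hl : 1 ≤ l := Nat.one_le_ceil_iff.2 (Real.sqrt_pos.2 (by positivity))
  have hsq : √(n * d / k) ^ 2 = n * d / k := Real.sq_sqrt (by positivity)
  have hlow : n * d ≤ k * (l : ℝ) ^ 2 := by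
    have h1 : √(n * d / k) ^ 2 ≤ (l : ℝ) ^ 2 :=
      pow_le_pow_left₀ (Real.sqrt_nonneg _) (Nat.le_ceil _) 2
    rw [hsq, div_le_iff₀ hk0] at h1
    linarith
  have hhigh : k * (l : ℝ) ^ 2 ≤ 2 * (n * d) + 2 * k := by
    have h1 : (l : ℝ) ≤ √(n * d / k) + 1 := (Nat.ceil_lt_add_one (Real.sqrt_nonneg _)).le
    have h2 : (l : ℝ) ^ 2 ≤ (√(n * d / k) + 1) ^ 2 := pow_le_pow_left₀ (by positivity) h1 2
    have h3 : (l : ℝ) ^ 2 ≤ 2 * (n * d / k) + 2 := by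
      nlinarith [sq_nonneg (√(n * d / k) - 1)]
    calc k * (l : ℝ) ^ 2 ≤ k * (2 * (n * d / k) + 2) := by gcongr
      _ = _ := by field_simp
  have hlightbd := sq_card_le_of_light (fun e : {e // P e} => col e.1) (fun e => p e.1)
    (fun q q' h => by
      have h' := @hinj (q.1.1, q.2) (q'.1.1, q'.2) h
      exact Prod.ext (Subtype.ext (Prod.ext_iff.1 h').1) (Prod.ext_iff.1 h').2) hd.le
    (fun a ha u w => by
      rcases ({e : {e // P e} | p e.1 0 = u ∧ p e.1 a = w} : Finset _).eq_empty_or_nonempty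
        with h0 | ⟨e₀, h0⟩
      · rw [h0]; simpa using hd.le
      · obtain ⟨rfl, rfl⟩ := (Finset.mem_filter.1 h0).2
        refine le_trans ?_ (e₀.2 a ha)
        norm_cast
        exact Finset.card_le_card_of_injOn Subtype.val (fun e he => by simpa using he)
          Subtype.val_injective.injOn)
    hl hlow hV (fun e => s e.1) (fun e => hs e.1) x hx hε.le (fun e => hcorr e.1)
  have hcases := mul_pow_four_le_of_sq_le hk0 (by linarith : 0 < n) hδ hcard
    (by linarith : 0 ≤ L) (Nat.cast_nonneg l) rfl hlightbd
  have hεδ : ε ^ 2 * δ ^ 3 ≤ 1 :=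
    mul_le_one₀ (pow_le_one₀ hε.le hε1) (by positivity) (pow_le_one₀ hδ.le hδ1)
  refine cube_le_of_cases (d := d) (l := l) hk0 (by linarith) hlog (by positivity) ?_ hhigh
    (by norm_num) ?_
  · have h1 : d * (ε ^ 4 * δ ^ 4) = 35840 * L * (ε ^ 2 * δ ^ 2) := by
      rw [hddef]; field_simp
    rw [h1]
    refine mul_le_of_le_one_right (by positivity)
      (mul_le_one₀ (pow_le_one₀ hε.le hε1) (by positivity) (pow_le_one₀ hδ.le hδ1))
  · refine hcases.imp_left fun h => ?_
    calc k * (ε ^ 4 * δ ^ 4) = k * (ε ^ 2 * δ) * (ε ^ 2 * δ ^ 3) := by ring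
      _ ≤ 4 * 1 := by gcongr
      _ = 4 := by norm_num

end Core

section Alphabet

/-- `h` is a system of real `±1`-valued functions on `α`, indexed by `Q`, whose value vectors at
distinct points are orthogonal. -/
structure IsHadamardSystem {Q α : Type*} [Fintype Q] (h : Q → α → ℝ) : Prop where
  sq_eq_one : ∀ t a, h t a ^ 2 = 1
  sum_mul : ∀ a a', ∑ t, h t a * h t a' = if a = a' then (Fintype.card Q : ℝ) else 0

lemma IsHadamardSystem.pi {Q α J : Type*} [Fintype Q] [Fintype J] [DecidableEq J]
    {h : Q → α → ℝ} (hh : IsHadamardSystem h) :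
    IsHadamardSystem fun (t : J → Q) (a : J → α) => ∏ j, h (t j) (a j) where
  sq_eq_one t a := by simp [← Finset.prod_pow, hh.sq_eq_one]
  sum_mul a a' := by
    have h1 := Finset.prod_univ_sum (fun _ : J => (univ : Finset Q))
      (fun j q => h q (a j) * h q (a' j))
    rw [Fintype.piFinset_univ] at h1
    simp_rw [← Finset.prod_mul_distrib]
    rw [← h1]
    simp_rw [hh.sum_mul]
    split_ifs with haa
    · subst haa; simp
    · obtain ⟨j, hj⟩ := Function.ne_iff.1 haa
      exact Finset.prod_eq_zero (mem_univ j) (if_neg hj)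

lemma isHadamardSystem_walsh (J : Type*) [Fintype J] [DecidableEq J] :
    IsHadamardSystem fun t y : J → Bool => ∏ j, bitSign (t j && y j) := by
  have h : IsHadamardSystem fun t y : Bool => bitSign (t && y) :=
    ⟨fun t y => by rw [sq]; exact bitSign_mul_self _, fun y y' => by
      cases y <;> cases y' <;> norm_num [bitSign]⟩
  exact h.pi

lemma exists_isHadamardSystem (α : Type*) [Fintype α] [Nonempty α] :
    ∃ (m : ℕ) (h : (Fin m → Bool) → α → ℝ), IsHadamardSystem h ∧ 2 ^ m ≤ 2 * Fintype.card α := by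
  obtain ⟨φ⟩ : Nonempty (α ↪ (Fin (Nat.clog 2 (Fintype.card α)) → Bool)) := by
    refine Function.Embedding.nonempty_of_card_le ?_
    simpa using Nat.le_pow_clog one_lt_two _
  have hw := isHadamardSystem_walsh (Fin (Nat.clog 2 (Fintype.card α)))
  refine ⟨_, fun t a => ∏ j, bitSign (t j && φ a j), ⟨fun t a => hw.sq_eq_one t (φ a),
    fun a a' => ?_⟩, ?_⟩
  · rw [hw.sum_mul]
    simp only [φ.injective.eq_iff]
  · rcases Nat.lt_or_ge 1 (Fintype.card α) with h1 | h1
    · have h2 := Nat.pow_pred_clog_lt_self one_lt_two h1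
      have h3 := Nat.clog_pos one_lt_two h1
      calc 2 ^ Nat.clog 2 (Fintype.card α) = 2 * 2 ^ (Nat.clog 2 (Fintype.card α)).pred := by
            rw [← pow_succ', ← Nat.succ_eq_add_one, Nat.succ_pred_eq_of_pos h3]
        _ ≤ _ := by omega
    · rw [Nat.clog_of_right_le_one h1]
      have : 0 < Fintype.card α := Fintype.card_pos
      omega

lemma IsHadamardSystem.exists_sq_le {Ω Q α : Type*} [Fintype Ω] [Fintype Q] [Nonempty Q]
    [Fintype α] {h : Q → α → ℝ} (hh : IsHadamardSystem h) (y : Ω → α) (w : Ω → ℝ) (F : α → ℝ)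
    (hF : ∀ a, F a ^ 2 ≤ 1) {ε : ℝ} (hε : 0 ≤ ε) (hcorr : ε ≤ 𝔼 ω, w ω * F (y ω)) :
    ∃ t, ε ^ 2 ≤ Fintype.card α * (𝔼 ω, w ω * h t (y ω)) ^ 2 := by
  set μ : α → ℝ := fun a => 𝔼 ω, if y ω = a then w ω else 0 with hμ
  have hexp : ∀ G : α → ℝ, 𝔼 ω, w ω * G (y ω) = ∑ a, G a * μ a := fun G => by
    simp only [hμ, Finset.mul_expect]
    rw [← Finset.expect_sum_comm]
    refine Finset.expect_congr rfl fun ω _ => ?_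
    simp [mul_comm]
  have hparseval : ∑ t, (∑ a, h t a * μ a) ^ 2 = Fintype.card Q * ∑ a, μ a ^ 2 := by
    simp only [sq, Finset.sum_mul_sum]
    rw [Finset.sum_comm, Finset.mul_sum]
    refine Finset.sum_congr rfl fun a _ => ?_
    rw [Finset.sum_comm]
    have h1 : ∀ a', ∑ t, h t a * μ a * (h t a' * μ a')
        = (if a = a' then (Fintype.card Q : ℝ) else 0) * (μ a * μ a') := fun a' => by
      rw [← hh.sum_mul, Finset.sum_mul]
      exact Finset.sum_congr rfl fun t _ => by ring
    simp [h1]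
  have hcs : ε ^ 2 ≤ Fintype.card α * ∑ a, μ a ^ 2 := by
    rw [hexp] at hcorr
    refine (pow_le_pow_left₀ hε hcorr 2).trans
      ((Finset.sum_mul_sq_le_sq_mul_sq univ F μ).trans ?_)
    refine mul_le_mul_of_nonneg_right ?_ (Finset.sum_nonneg fun _ _ => sq_nonneg _)
    refine (Finset.sum_le_sum fun a _ => hF a).trans ?_
    simp
  by_contra! hcon
  have h2 : ∑ t : Q, Fintype.card α * (𝔼 ω, w ω * h t (y ω)) ^ 2 < ∑ _t : Q, ε ^ 2 :=
    Finset.sum_lt_sum_of_nonempty univ_nonempty fun t _ => hcon t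
  simp only [hexp] at h2
  rw [← Finset.mul_sum, hparseval, Finset.sum_const, nsmul_eq_mul, card_univ] at h2
  have hQ : (0 : ℝ) < Fintype.card Q := by exact_mod_cast Fintype.card_pos
  nlinarith

lemma IsHadamardSystem.exists_sign_le {Ω Q α J : Type*} [Fintype Ω] [Fintype Q] [Nonempty Q]
    [Fintype α] [Fintype J] [DecidableEq J] {h : Q → α → ℝ} (hh : IsHadamardSystem h)
    [Nonempty α] (y : Ω → J → α) (w : Ω → ℝ) (F : (J → α) → ℝ)
    (hF : ∀ a, F a ^ 2 ≤ 1) {ε : ℝ} (hε : 0 ≤ ε) (hcorr : ε ≤ 𝔼 ω, w ω * F (y ω)) :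
    ∃ (t : J → Q) (s : ℝ), |s| ≤ 1 ∧
      ε / √((Fintype.card α : ℝ) ^ Fintype.card J) ≤
        𝔼 ω, w ω * s * ∏ j, h (t j) (y ω j) := by
  obtain ⟨t, ht⟩ := (hh.pi (J := J)).exists_sq_le y w F hF hε hcorr
  rw [Fintype.card_fun, Nat.cast_pow] at ht
  have hα : (0 : ℝ) < (Fintype.card α : ℝ) ^ Fintype.card J :=
    pow_pos (by exact_mod_cast Fintype.card_pos) _
  set z := 𝔼 ω, w ω * ∏ j, h (t j) (y ω j) with hz
  have h1 : ε / √((Fintype.card α : ℝ) ^ Fintype.card J) ≤ |z| := by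
    refine abs_le_of_sq_le_sq' ?_ (abs_nonneg z) |>.2
    rw [div_pow, Real.sq_sqrt hα.le, sq_abs, div_le_iff₀ hα]
    linarith
  have h2 : ∀ s : ℝ, 𝔼 ω, w ω * s * ∏ j, h (t j) (y ω j) = s * z := fun s => by
    rw [hz, Finset.mul_expect]
    exact Finset.expect_congr rfl fun ω _ => by ring
  rcases le_total 0 z with h0 | h0
  · exact ⟨t, 1, by simp, by rw [h2, one_mul]; rwa [abs_of_nonneg h0] at h1⟩
  · exact ⟨t, -1, by simp, by rw [h2, neg_one_mul]; rwa [abs_of_nonpos h0] at h1⟩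

lemma expect_bitSign_mul_bitSign {ι : Type*} [Fintype ι] [DecidableEq ι] (i : ι)
    (φ : (ι → Bool) → Bool) :
    𝔼 b : ι → Bool, bitSign (b i) * bitSign (φ b)
      = 2 * ((#{b : ι → Bool | b i = φ b} : ℝ) / 2 ^ Fintype.card ι) - 1 := by
  have h1 : ∀ b : ι → Bool, bitSign (b i) * bitSign (φ b)
      = 2 * (if b i = φ b then 1 else 0) - 1 := fun b => by
    cases b i <;> cases φ b <;> simp [bitSign] <;> norm_num
  simp only [h1]
  rw [Finset.expect_sub_distrib, Finset.expect_const univ_nonempty, ← Finset.mul_expect,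
    Fintype.expect_eq_sum_div_card, Finset.sum_boole, Fintype.card_fun, Fintype.card_bool]
  push_cast
  rfl

end Alphabet

lemma IsMatching.eq_of_mem {n q : ℕ} {H : Finset (Finset (Fin n))} (hH : IsMatching q H)
    {C C' : Finset (Fin n)} (hC : C ∈ H) (hC' : C' ∈ H) {v : Fin n} (hv : v ∈ C) (hv' : v ∈ C') :
    C = C' := by
  by_contra hne
  exact Finset.disjoint_left.1 (hH.2 hC hC' hne) hv hv'

lemma IsMatching.mul_card_le {n q : ℕ} {H : Finset (Finset (Fin n))} (hH : IsMatching q H) :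
    #H * q ≤ n := by
  have h1 := Finset.card_biUnion (s := H) (t := id) fun C hC C' hC' h => hH.2 hC hC' h
  simp only [id_eq] at h1
  rw [Finset.sum_congr rfl fun C hC => hH.1 C hC, Finset.sum_const, smul_eq_mul] at h1
  rw [← h1]
  exact (Finset.card_le_univ _).trans (by simp)

lemma cube_le_of_alphabet_reduction {A k n L LN N a q ε δ ε' δ' : ℝ} (hA : 0 ≤ A) (hn : 0 < n)
    (ha : 1 ≤ a) (hL : 1 ≤ L) (hLN0 : 0 ≤ LN) (hLN : LN ≤ 2 * L) (hN : N = n * q)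
    (hq : q ≤ 2 * a) (hε : 0 < ε) (hε1 : ε ≤ 1) (hδ : 0 < δ) (hεδ : ε * δ ≤ 3)
    (hε' : ε' ^ 2 = ε ^ 2 / a ^ 3) (hδ' : δ' = ε * δ / (18 * a))
    (h : (k * (ε' ^ 4 * δ' ^ 4)) ^ 3 ≤ A * N * LN ^ 3) :
    k ^ 3 ≤ a ^ 41 * n * (81 * 16 * 18 ^ 12 * A) * L ^ 6 / (ε ^ 32 * δ ^ 16) := by
  have ha0 : 0 < a := by linarith
  have h1 : (k * (ε' ^ 4 * δ' ^ 4)) ^ 3 = k ^ 3 * (ε ^ 24 * δ ^ 12) / (18 ^ 12 * a ^ 30) := by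
    have : (k * (ε' ^ 4 * δ' ^ 4)) ^ 3 = k ^ 3 * (ε' ^ 2) ^ 6 * δ' ^ 12 := by ring
    rw [this, hε', hδ']
    field_simp
  have h2 : A * N * LN ^ 3 ≤ A * (n * (2 * a)) * (2 * L) ^ 3 := by
    rw [hN]; gcongr
  have h3 := h1.symm.trans_le (h.trans h2)
  rw [div_le_iff₀ (by positivity)] at h3
  rw [le_div_iff₀ (by positivity)]
  have h4 : ε ^ 4 * (ε * δ) ^ 4 ≤ 81 := by
    have e1 : ε ^ 4 ≤ 1 := pow_le_one₀ hε.le hε1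
    have e2 : (ε * δ) ^ 4 ≤ 3 ^ 4 := pow_le_pow_left₀ (by positivity) hεδ 4
    calc ε ^ 4 * (ε * δ) ^ 4 ≤ 1 * 3 ^ 4 := by gcongr
      _ = 81 := by norm_num
  calc k ^ 3 * (ε ^ 32 * δ ^ 16)
      = k ^ 3 * (ε ^ 24 * δ ^ 12) * (ε ^ 4 * (ε * δ) ^ 4) := by ring
    _ ≤ (A * (n * (2 * a)) * (2 * L) ^ 3 * (18 ^ 12 * a ^ 30)) * 81 := by gcongr
    _ = (81 * 16 * 18 ^ 12 * A) * n * (a ^ 31 * L ^ 3) := by ring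
    _ ≤ (81 * 16 * 18 ^ 12 * A) * n * (a ^ 41 * L ^ 6) := by
        gcongr <;> first | assumption | norm_num
    _ = _ := by ring

/-- **Near-cubic 3-LDC lower bound over larger alphabets.** There is an absolute
constant `c > 0` such that: for every finite alphabet `α` and every code
`Enc : {0,1}^k → α^n` equipped with `3`-uniform hypergraph matchings `H i` with
`|H i| ≥ εδn/9`, and for each `i` and each `C ∈ H i` a function `f i C` depending
only on the coordinates in `C` such that
`Pr_{b uniform in {0,1}^k}[b_i = f_C(Enc(b)|_C)] ≥ 1/2 + ε/2`
(the structure guaranteed by the Katz–Trevisan reduction for any `(3, δ, ε)`-LDC over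
`α`), we have `k³ ≤ |α|⁴¹ · n · c · (log(|α| n))⁶ / (ε³² δ¹⁶)`. -/
theorem gen_alphabet_three_ldc_lower_bound :
    ∃ c : ℝ, 0 < c ∧
      ∀ (k n : ℕ) (δ ε : ℝ) (α : Type) (_ : Fintype α)
        (Enc : (Fin k → Bool) → Fin n → α)
        (H : Fin k → Finset (Finset (Fin n)))
        (f : Fin k → Finset (Fin n) → (Fin n → α) → Bool),
        0 < k → 0 < n → 0 < δ → 0 < ε →
        (∀ i, IsMatching 3 (H i)) →
        (∀ i, ε * δ * n / 9 ≤ ((H i).card : ℝ)) →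
        (∀ i, ∀ C ∈ H i, ∀ y y' : Fin n → α,
          (∀ v ∈ C, y v = y' v) → f i C y = f i C y') →
        (∀ i, ∀ C ∈ H i,
          (1 / 2 + ε / 2 : ℝ) ≤
            ((Finset.univ.filter (fun b : Fin k → Bool =>
              b i = f i C (Enc b))).card : ℝ) / 2 ^ k) →
        (k : ℝ) ^ 3 ≤ (Fintype.card α : ℝ) ^ 41 * n * c *
            Real.log ((Fintype.card α : ℝ) * n) ^ 6 / (ε ^ 32 * δ ^ 16) := by
  refine ⟨81 * 16 * 18 ^ 12 * (8 * 117440512 ^ 3), by positivity, ?_⟩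
  intro k n δ ε α _ Enc H f hk hn hδ hε hmatch hcard hlocal hprob
  have hk0 : (0 : ℝ) < k := by exact_mod_cast hk
  have hn0 : (0 : ℝ) < n := by exact_mod_cast hn
  have : Nonempty (Fin k) := ⟨⟨0, hk⟩⟩
  have : Nonempty α := ⟨Enc (fun _ => false) ⟨0, hn⟩⟩
  have ha : (1 : ℝ) ≤ Fintype.card α := by exact_mod_cast Fintype.card_pos
  have hHpos : ∀ i, 0 < #(H i) := fun i => by
    have h1 : (0 : ℝ) < #(H i) := lt_of_lt_of_le (by positivity) (hcard i)
    exact_mod_cast h1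
  have hcorr : ∀ i, ∀ C ∈ H i,
      ε ≤ 𝔼 b : Fin k → Bool, bitSign (b i) * bitSign (f i C (Enc b)) := fun i C hC => by
    rw [expect_bitSign_mul_bitSign, Fintype.card_fin]
    have := hprob i C hC
    linarith
  have hε1 : ε ≤ 1 := by
    obtain ⟨C, hC⟩ := Finset.card_pos.1 (hHpos ⟨0, hk⟩)
    refine (hcorr _ C hC).trans (Finset.expect_le univ_nonempty fun b _ => ?_)
    cases b ⟨0, hk⟩ <;> cases f ⟨0, hk⟩ C (Enc b) <;> norm_num [bitSign]
  have hn3 : 3 ≤ n := by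
    have h1 := (hmatch ⟨0, hk⟩).mul_card_le
    have h2 := hHpos ⟨0, hk⟩
    omega
  have hεδ : ε * δ ≤ 3 := by
    have h1 : (#(H ⟨0, hk⟩) : ℝ) * 3 ≤ n := by exact_mod_cast (hmatch ⟨0, hk⟩).mul_card_le
    have h2 := hcard ⟨0, hk⟩
    have h3 : n * (ε * δ) ≤ n * 3 := by linarith
    exact le_of_mul_le_mul_left h3 hn0
  obtain ⟨m, h, hh, hm⟩ := exists_isHadamardSystem α
  have hq : (2 : ℝ) ^ m ≤ 2 * Fintype.card α := by exact_mod_cast hm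
  have hloc : ∀ e : (Σ i, {C // C ∈ H i}), ∃ (t : Fin 3 → Fin m → Bool) (s : ℝ), |s| ≤ 1 ∧
      ε / √((Fintype.card α : ℝ) ^ 3) ≤ 𝔼 b : Fin k → Bool, bitSign (b e.1) * s *
        ∏ j, h (t j) (Enc b (e.2.1.orderEmbOfFin ((hmatch e.1).1 _ e.2.2) j)) := by
    rintro ⟨i, C, hC⟩
    set φ := C.orderEmbOfFin ((hmatch i).1 C hC) with hφ
    have key := hh.exists_sign_le (J := Fin 3) (fun b j => Enc b (φ j)) (fun b => bitSign (b i))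
      (fun a => bitSign (f i C (Function.extend φ a (Enc fun _ => false))))
      (fun a => by rw [sq, bitSign_mul_self]) hε.le ((hcorr i C hC).trans (le_of_eq ?_))
    · rwa [Fintype.card_fin] at key
    refine Finset.expect_congr rfl fun b _ => ?_
    congr 2
    refine hlocal i C hC _ _ fun v hv => ?_
    have hv' : v ∈ Set.range φ := by
      rw [hφ, Finset.range_orderEmbOfFin]; exact hv
    obtain ⟨j, rfl⟩ := hv'
    rw [φ.injective.extend_apply]
  choose t s hs ht using hloc
  set p : (Σ i, {C // C ∈ H i}) → Fin 3 → Fin n × (Fin m → Bool) := fun e j =>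
    (e.2.1.orderEmbOfFin ((hmatch e.1).1 _ e.2.2) j, t e j) with hp
  have hinj : Function.Injective fun q : (Σ i, {C // C ∈ H i}) × Fin 3 =>
      (q.1.1, p q.1 q.2) := by
    rintro ⟨⟨i, C, hC⟩, j⟩ ⟨⟨i', C', hC'⟩, j'⟩ heq
    simp only [hp, Prod.mk.injEq] at heq
    obtain ⟨rfl, hv, -⟩ := heq
    have hCC : C = C' := (hmatch i).eq_of_mem hC hC'
      (Finset.orderEmbOfFin_mem C ((hmatch i).1 C hC) j)
      (hv ▸ Finset.orderEmbOfFin_mem C' ((hmatch i).1 C' hC') j')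
    subst hCC
    rw [(C.orderEmbOfFin _).injective hv]
  have hcardV : Fintype.card (Fin n × (Fin m → Bool)) = n * 2 ^ m := by simp
  have hcardV3 : 3 ≤ n * 2 ^ m := hn3.trans (Nat.le_mul_of_pos_right _ (by positivity))
  have hEcard : ε * δ / (18 * Fintype.card α) * Fintype.card (Fin k) *
      Fintype.card (Fin n × (Fin m → Bool)) ≤ Fintype.card (Σ i, {C // C ∈ H i}) := by
    rw [Fintype.card_sigma, hcardV, Fintype.card_fin]
    simp only [Fintype.card_coe]
    push_cast
    have h1 : ∑ _i : Fin k, ε * δ * n / 9 ≤ ∑ i, (#(H i) : ℝ) :=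
      Finset.sum_le_sum fun i _ => hcard i
    rw [Finset.sum_const, card_univ, Fintype.card_fin, nsmul_eq_mul] at h1
    refine le_trans ?_ h1
    calc ε * δ / (18 * Fintype.card α) * k * (n * 2 ^ m)
        ≤ ε * δ / (18 * Fintype.card α) * k * (n * (2 * Fintype.card α)) := by gcongr
      _ = _ := by field_simp; ring
  have hcore := card_cube_le_of_correlated_triples (fun e => e.1) p hinj
    (by rw [hcardV]; omega) s hs (fun b v => h v.2 (Enc b v.1)) (fun b v => hh.sq_eq_one _ _)
    (ε := ε / √((Fintype.card α : ℝ) ^ 3)) (δ := ε * δ / (18 * Fintype.card α))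
    (by positivity)
    (div_le_one_of_le₀ (hε1.trans (Real.one_le_sqrt.2 (one_le_pow₀ ha))) (by positivity))
    (by positivity) (div_le_one_of_le₀ (by linarith) (by positivity)) hEcard
    (fun e => (ht e).trans (le_of_eq (Finset.expect_congr rfl fun b _ => by
      rw [Fin.prod_univ_three])))
  rw [Fintype.card_fin, hcardV] at hcore
  push_cast at hcore
  have hn3' : (3 : ℝ) ≤ n := by exact_mod_cast hn3
  have hN3 : (3 : ℝ) ≤ n * 2 ^ m := by exact_mod_cast hcardV3
  have hL : 1 ≤ Real.log (Fintype.card α * n) := by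
    rw [Real.le_log_iff_exp_le (by positivity)]
    have := Real.exp_one_lt_d9
    nlinarith
  have hLN : Real.log (n * 2 ^ m) ≤ 2 * Real.log (Fintype.card α * n) := by
    calc Real.log (n * 2 ^ m) ≤ Real.log (2 * (Fintype.card α * n)) :=
          Real.log_le_log (by positivity) (by nlinarith)
      _ = Real.log 2 + Real.log (Fintype.card α * n) :=
          Real.log_mul (by norm_num) (by positivity)
      _ ≤ _ := by linarith [Real.log_two_lt_d9]
  exact cube_le_of_alphabet_reduction (by norm_num) hn0 ha hL (Real.log_nonneg (by linarith)) hLN rfl hq hε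
    hε1 hδ hεδ (by rw [div_pow, Real.sq_sqrt (by positivity)]) rfl hcore
end
end

section
/- There exist absolute constants c, c_0, c_1, c_2 > 0 such that the following holds. Let C : {0,1}^k → {0,1}^n be a linear (3, δ)-wLDC, let d be a positive integer, and assume k ≤ n/c_0. Then there exist codes C_2 : {0,1}^{k_2} → {0,1}^{n} and C_3 : {0,1}^{k_3} → {0,1}^{N} with k_2 ≥ k/2 and k_3 ≥ k/2, where N = C(2n, ℓ) and ℓ = (√(n/k))/c, such that either C_2 is a linear (2, c_1 · δ · d/(d+k))-wLDC or C_3 is a linear (2, c_2 · δ^2/d)-wLDC. -/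
open Finset
open scoped Classical

noncomputable section

/-- A code `Enc : {0,1}^k → {0,1}^n` (over `F₂`) is a linear `(q, δ)`-weakly locally
decodable code: `Enc` is `F₂`-linear and there are `q`-uniform hypergraph matchings
`H 1, …, H k` on `[n]` with `Σᵢ |H i| ≥ δnk` such that for every `i`, every `C ∈ H i`,
and every message `b`, `⊕_{v ∈ C} Enc(b)_v = b_i`. -/
def IsLinearWLDC (q k n : ℕ) (δ : ℝ)
    (Enc : (Fin k → ZMod 2) → Fin n → ZMod 2) : Prop :=
  IsLinearMap (ZMod 2) Enc ∧
  ∃ H : Fin k → Finset (Finset (Fin n)),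
    (∀ i, ∀ C ∈ H i, C.card = q) ∧
    (∀ i, Set.Pairwise (H i : Set (Finset (Fin n))) Disjoint) ∧
    δ * n * k ≤ ∑ i, ((H i).card : ℝ) ∧
    (∀ i, ∀ C ∈ H i, ∀ b : Fin k → ZMod 2, ∑ v ∈ C, Enc b v = b i)

/-- A family of disjoint pairs inside a vertex set of size at most `n`, one family for each message
symbol, such that the two codeword symbols at each pair sum to the message symbol, gives a linear
`2`-query weakly locally decodable code of block length `n`. -/
theorem exists_isLinearWLDC_two {κ V : Type*} [Fintype κ] (n : ℕ) (δ : ℝ) (U : Finset V)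
    (hU : U.card ≤ n) (y : (κ → ZMod 2) →ₗ[ZMod 2] (V → ZMod 2)) (M : κ → Finset (V × V))
    (hMU : ∀ i, ∀ e ∈ M i, e.1 ∈ U ∧ e.2 ∈ U)
    (hne : ∀ i, ∀ e ∈ M i, e.1 ≠ e.2)
    (hdisj : ∀ i, ∀ e ∈ M i, ∀ f ∈ M i, e ≠ f → e.1 ≠ f.1 ∧ e.1 ≠ f.2 ∧ e.2 ≠ f.2)
    (hdec : ∀ i, ∀ e ∈ M i, ∀ b, y b e.1 + y b e.2 = b i)
    (hsize : δ * n * Fintype.card κ ≤ ∑ i, ((M i).card : ℝ)) :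
    ∃ Enc, IsLinearWLDC 2 (Fintype.card κ) n δ Enc := by
  obtain ⟨φ⟩ : Nonempty (U ↪ Fin n) :=
    Function.Embedding.nonempty_of_card_le (by simpa using hU)
  let σ := Fintype.equivFin κ
  let ext : (U → ZMod 2) →ₗ[ZMod 2] (Fin n → ZMod 2) :=
    Function.ExtendByZero.linearMap (ZMod 2) φ
  let Enc : (Fin (Fintype.card κ) → ZMod 2) →ₗ[ZMod 2] (Fin n → ZMod 2) :=
    ext ∘ₗ LinearMap.funLeft (ZMod 2) (ZMod 2) (Subtype.val : U → V) ∘ₗ y ∘ₗ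
      LinearMap.funLeft (ZMod 2) (ZMod 2) σ
  have hEnc : ∀ b (x : U), Enc b (φ x) = y (b ∘ σ) x := by
    intro b x
    change Function.extend φ _ 0 (φ x) = _
    rw [φ.injective.extend_apply]
    rfl
  let ed : (i : κ) → {e // e ∈ M i} → Finset (Fin n) := fun i e =>
    {φ ⟨e.1.1, (hMU i e.1 e.2).1⟩, φ ⟨e.1.2, (hMU i e.1 e.2).2⟩}
  have hed : ∀ i e f, e ≠ f → Disjoint (ed i e) (ed i f) := by
    rintro i ⟨e, he⟩ ⟨f, hf⟩ hef
    have hef' : e ≠ f := fun h => hef (Subtype.ext h)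
    have h1 := hdisj i e he f hf hef'
    have h2 := hdisj i f hf e he hef'.symm
    simp only [ed, Finset.disjoint_left, Finset.mem_insert, Finset.mem_singleton]
    rintro x (rfl | rfl) <;> simp only [φ.injective.eq_iff, Subtype.mk.injEq, not_or]
    · exact ⟨h1.1, h1.2.1⟩
    · exact ⟨h2.2.1.symm, h1.2.2⟩
  have hinj : ∀ i, Function.Injective (ed i) := by
    intro i e f hef
    by_contra hne'
    have h := hed i e f hne'
    rw [hef, disjoint_self] at h
    simp [ed] at h
  refine ⟨Enc, Enc.isLinear, fun i => univ.image (ed (σ.symm i)), ?_, ?_, ?_, ?_⟩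
  · intro i C hC
    simp only [Finset.mem_image, Finset.mem_univ, true_and] at hC
    obtain ⟨e, rfl⟩ := hC
    refine Finset.card_pair fun h => hne _ e.1 e.2 ?_
    simpa using φ.injective h
  · intro i C hC D hD hCD
    simp only [Finset.coe_image, Finset.coe_univ, Set.image_univ, Set.mem_range] at hC hD
    obtain ⟨e, rfl⟩ := hC
    obtain ⟨f, rfl⟩ := hD
    exact hed _ e f fun h => hCD (by rw [h])
  · refine hsize.trans_eq ?_
    rw [← σ.symm.sum_comp]
    refine Finset.sum_congr rfl fun i _ => ?_
    rw [Finset.card_image_of_injective _ (hinj _)]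
    simp
  · intro i C hC b
    simp only [Finset.mem_image, Finset.mem_univ, true_and] at hC
    obtain ⟨e, rfl⟩ := hC
    have hne' : φ ⟨e.1.1, (hMU _ e.1 e.2).1⟩ ≠ φ ⟨e.1.2, (hMU _ e.1 e.2).2⟩ :=
      fun h => hne _ e.1 e.2 (by simpa using φ.injective h)
    rw [Finset.sum_pair hne', hEnc, hEnc, hdec _ e.1 e.2]
    simp

/-- A finite multigraph whose degrees have small second moment contains a large matching. -/
theorem exists_matching_of_sum_sq_degree_le {ι V : Type*} [DecidableEq V] (E : Finset ι)
    (U : Finset V)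
    (s t : ι → V) (hs : ∀ e ∈ E, s e ∈ U) (ht : ∀ e ∈ E, t e ∈ U) (K : ℕ)
    (hK : ∑ x ∈ U, ((E.filter fun e => s e = x).card + (E.filter fun e => t e = x).card) ^ 2
      ≤ K * E.card) :
    ∃ M ⊆ E, E.card ≤ 4 * K * M.card ∧
      ∀ e ∈ M, ∀ f ∈ M, e ≠ f → s e ≠ s f ∧ s e ≠ t f ∧ t e ≠ t f := by
  set deg : V → ℕ := fun x =>
    (E.filter fun e => s e = x).card + (E.filter fun e => t e = x).card with hdeg
  have hsum : ∑ e ∈ E, (deg (s e) + deg (t e)) = ∑ x ∈ U, deg x ^ 2 := by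
    have h1 : ∀ r : ι → V, (∀ e ∈ E, r e ∈ U) →
        ∑ e ∈ E, deg (r e) = ∑ x ∈ U, (E.filter fun e => r e = x).card * deg x := by
      intro r hr
      rw [← Finset.sum_fiberwise_of_maps_to hr]
      refine Finset.sum_congr rfl fun x _ => ?_
      rw [Finset.sum_congr rfl (g := fun _ => deg x), Finset.sum_const, smul_eq_mul]
      intro e he
      rw [(Finset.mem_filter.1 he).2]
    rw [Finset.sum_add_distrib, h1 s hs, h1 t ht, ← Finset.sum_add_distrib]
    refine Finset.sum_congr rfl fun x _ => ?_
    rw [← add_mul, sq]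
  set G := E.filter fun e => deg (s e) + deg (t e) ≤ 2 * K with hG
  have hgood : E.card ≤ 2 * G.card := by
    have hb : (2 * K + 1) * (E.filter fun e => ¬ deg (s e) + deg (t e) ≤ 2 * K).card
        ≤ K * E.card := by
      rw [← hsum] at hK
      refine le_trans ?_ hK
      refine le_trans ?_ (Finset.sum_le_sum_of_subset (Finset.filter_subset
        (fun e => ¬ deg (s e) + deg (t e) ≤ 2 * K) E))
      rw [mul_comm, ← smul_eq_mul]
      refine Finset.card_nsmul_le_sum _ _ _ fun e he => ?_
      have := (Finset.mem_filter.1 he).2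
      omega
    have hc := Finset.card_filter_add_card_filter_not (s := E)
      (fun e => deg (s e) + deg (t e) ≤ 2 * K)
    rw [← hG] at hc
    by_contra! hlt
    nlinarith
  let P : Finset ι → Prop := fun M =>
    ∀ e ∈ M, ∀ f ∈ M, e ≠ f → s e ≠ s f ∧ s e ≠ t f ∧ t e ≠ t f
  obtain ⟨M, hM, hmax⟩ := Finset.exists_max_image (G.powerset.filter P) Finset.card
    ⟨∅, by simp [P]⟩
  simp only [Finset.mem_filter, Finset.mem_powerset] at hM hmax
  refine ⟨M, hM.1.trans (Finset.filter_subset _ _), ?_, hM.2⟩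
  have hcover : G ⊆ M.biUnion fun m =>
      ((E.filter fun e => s e = s m) ∪ (E.filter fun e => t e = s m)) ∪
      ((E.filter fun e => s e = t m) ∪ (E.filter fun e => t e = t m)) := by
    intro e he
    by_contra hne
    have heE : e ∈ E := Finset.filter_subset _ _ he
    simp only [Finset.mem_biUnion, Finset.mem_union, Finset.mem_filter, heE, true_and,
      not_exists, not_and, not_or] at hne
    have heM : e ∉ M := fun h => (hne e h).1.1 rfl
    have := hmax (insert e M) ⟨Finset.insert_subset he hM.1, by
      intro a ha b hb hab
      rcases Finset.mem_insert.1 ha with rfl | haM <;>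
        rcases Finset.mem_insert.1 hb with rfl | hbM
      · exact absurd rfl hab
      · have := hne b hbM
        exact ⟨this.1.1, this.2.1, this.2.2⟩
      · have := hne a haM
        exact ⟨fun h => this.1.1 h.symm, fun h => this.1.2 h.symm, fun h => this.2.2 h.symm⟩
      · exact hM.2 a haM b hbM hab⟩
    rw [Finset.card_insert_of_notMem heM] at this
    omega
  have hcard : G.card ≤ M.card * (2 * K) := by
    refine (Finset.card_le_card hcover).trans (Finset.card_biUnion_le_card_mul _ _ _ ?_)
    intro m hm
    have h1 := (Finset.mem_filter.1 (hM.1 hm)).2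
    refine (Finset.card_union_le _ _).trans (le_trans (add_le_add (Finset.card_union_le _ _)
      (Finset.card_union_le _ _)) h1)
  calc E.card ≤ 2 * G.card := hgood
    _ ≤ 2 * (M.card * (2 * K)) := by gcongr
    _ = 4 * K * M.card := by ring

/-- The number of `ℓ`-element sets that contain `Q` and avoid `R`. -/
theorem card_filter_superset_disjoint {X : Type*} [Fintype X] [DecidableEq X] (Q R : Finset X)
    (hQR : Disjoint Q R) (ℓ : ℕ) (hℓ : Q.card ≤ ℓ) :
    ((Finset.powersetCard ℓ (univ : Finset X)).filter fun S => Q ⊆ S ∧ Disjoint S R).card =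
      (Fintype.card X - Q.card - R.card).choose (ℓ - Q.card) := by
  have hcard : ((univ : Finset X) \ (Q ∪ R)).card = Fintype.card X - Q.card - R.card := by
    rw [Finset.card_sdiff_of_subset (Finset.subset_univ _), Finset.card_union_of_disjoint hQR,
      Finset.card_univ, Nat.sub_sub]
  rw [← hcard, ← Finset.card_powersetCard]
  refine Finset.card_nbij' (fun S => S \ Q) (fun S => S ∪ Q) ?_ ?_ ?_ ?_
  · intro S hS
    simp only [Finset.coe_filter, Finset.mem_powersetCard, Set.mem_ofPred_eq] at hS
    simp only [Finset.mem_coe, Finset.mem_powersetCard]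
    refine ⟨?_, by rw [Finset.card_sdiff_of_subset hS.2.1, hS.1.2]⟩
    intro x hx
    have hx' := Finset.mem_sdiff.1 hx
    have := Finset.disjoint_left.1 hS.2.2 hx'.1
    simp [hx'.2, this]
  · intro S hS
    simp only [Finset.mem_coe, Finset.mem_powersetCard] at hS
    have hSQ : Disjoint S Q := by
      rw [Finset.disjoint_left]
      intro x hx hq
      have := hS.1 hx
      simp [hq] at this
    have hSR : Disjoint S R := by
      rw [Finset.disjoint_left]
      intro x hx hq
      have := hS.1 hx
      simp [hq] at this
    simp only [Finset.coe_filter, Finset.mem_powersetCard, Set.mem_ofPred_eq]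
    refine ⟨⟨Finset.subset_univ _, ?_⟩, Finset.subset_union_right,
      Finset.disjoint_union_left.2 ⟨hSR, hQR⟩⟩
    rw [Finset.card_union_of_disjoint hSQ, hS.2]
    omega
  · intro S hS
    simp only [Finset.coe_filter, Finset.mem_powersetCard, Set.mem_ofPred_eq] at hS
    exact Finset.sdiff_union_of_subset hS.2.1
  · intro S hS
    simp only [Finset.mem_coe, Finset.mem_powersetCard] at hS
    ext x
    simp only [Finset.mem_sdiff, Finset.mem_union]
    constructor
    · rintro ⟨h | h, h'⟩
      · exact h
      · exact absurd h h'
    · intro h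
      refine ⟨Or.inl h, fun hq => ?_⟩
      have := hS.1 h
      simp [hq] at this

/-- The number of `ℓ`-element sets that contain `Q`. -/
theorem card_filter_superset {X : Type*} [Fintype X] [DecidableEq X] (Q : Finset X) (ℓ : ℕ)
    (hℓ : Q.card ≤ ℓ) :
    ((Finset.powersetCard ℓ (univ : Finset X)).filter fun S => Q ⊆ S).card =
      (Fintype.card X - Q.card).choose (ℓ - Q.card) := by
  simpa using card_filter_superset_disjoint Q ∅ (Finset.disjoint_empty_right _) ℓ hℓ

/-- A weight function on the elements of `P`, given as the fibre sizes of a map from `Q`, has at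
least a `t / (t + |P|)` fraction of its mass on some set of at most `t` elements. -/
theorem exists_subset_card_le_mul_card_filter {α β : Type*} [DecidableEq β] (Q : Finset α)
    (φ : α → β) (t : ℕ)
    (P : Finset β) (hφ : ∀ q ∈ Q, φ q ∈ P) :
    ∃ P' ⊆ P, P'.card ≤ t ∧
      t * Q.card ≤ (t + P.card) * (Q.filter fun q => φ q ∈ P').card := by
  suffices h : ∀ s (P : Finset β), P.card = s → ∃ P' ⊆ P, P'.card ≤ t ∧
      t * (Q.filter fun q => φ q ∈ P).card ≤
        (max t s) * (Q.filter fun q => φ q ∈ P').card by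
    obtain ⟨P', h1, h2, h3⟩ := h _ P rfl
    refine ⟨P', h1, h2, ?_⟩
    rw [Finset.filter_true_of_mem hφ] at h3
    exact h3.trans (Nat.mul_le_mul_right _ (by omega))
  intro s
  induction s with
  | zero =>
    intro P hP
    exact ⟨P, subset_rfl, by omega, Nat.mul_le_mul_right _ (le_max_left _ _)⟩
  | succ s ih =>
    intro P hP
    by_cases hst : s + 1 ≤ t
    · exact ⟨P, subset_rfl, by omega, Nat.mul_le_mul_right _ (le_max_left _ _)⟩
    obtain ⟨p, hp, hmin⟩ := Finset.exists_min_image P (fun p => (Q.filter fun q => φ q = p).card)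
      (Finset.card_pos.1 (by omega))
    obtain ⟨P', h1, h2, h3⟩ := ih (P.erase p) (by rw [Finset.card_erase_of_mem hp]; omega)
    refine ⟨P', h1.trans (Finset.erase_subset _ _), h2, ?_⟩
    have hsum : (Q.filter fun q => φ q ∈ P).card = ∑ x ∈ P, (Q.filter fun q => φ q = x).card := by
      rw [Finset.card_eq_sum_card_fiberwise (f := φ) (t := P)]
      · refine Finset.sum_congr rfl fun x hx => ?_
        rw [Finset.filter_filter]
        congr 1
        refine Finset.filter_congr fun q _ => ?_
        constructor
        · exact fun h => h.2
        · rintro rfl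
          exact ⟨hx, rfl⟩
      · intro q hq
        simpa using (Finset.mem_filter.1 hq).2
    have hsplit : (Q.filter fun q => φ q ∈ P).card =
        (Q.filter fun q => φ q ∈ P.erase p).card + (Q.filter fun q => φ q = p).card := by
      rw [← Finset.card_union_of_disjoint]
      · congr 1
        ext q
        simp only [Finset.mem_filter, Finset.mem_union, Finset.mem_erase]
        constructor
        · rintro ⟨h, h'⟩
          by_cases hq : φ q = p
          · exact Or.inr ⟨h, hq⟩
          · exact Or.inl ⟨h, hq, h'⟩
        · rintro (⟨h, _, h'⟩ | ⟨h, rfl⟩)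
          · exact ⟨h, h'⟩
          · exact ⟨h, hp⟩
      · rw [Finset.disjoint_left]
        intro q h h'
        simp only [Finset.mem_filter, Finset.mem_erase] at h h'
        exact h.2.1 h'.2
    have havg : (s + 1) * (Q.filter fun q => φ q = p).card ≤ (Q.filter fun q => φ q ∈ P).card := by
      rw [hsum, ← hP, ← smul_eq_mul]
      exact Finset.card_nsmul_le_sum _ _ _ hmin
    rw [max_eq_right (by omega)] at h3 ⊢
    rcases Nat.eq_zero_or_pos s with rfl | hs
    · have ht : t = 0 := by omega
      simp [ht]
    · set a := (Q.filter fun q => φ q ∈ P.erase p).card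
      set b := (Q.filter fun q => φ q = p).card
      set r := (Q.filter fun q => φ q ∈ P').card
      rw [hsplit] at havg ⊢
      have hb : s * b ≤ a := by nlinarith
      refine Nat.le_of_mul_le_mul_left (c := s) ?_ hs
      calc s * (t * (a + b)) = t * (s * a + s * b) := by ring
        _ ≤ t * (s * a + a) := by gcongr
        _ = (s + 1) * (t * a) := by ring
        _ ≤ (s + 1) * (s * r) := by gcongr
        _ = s * ((s + 1) * r) := by ring

/-- Every symmetric weighted graph has a cut with at least half of the total weight, and one side
of the cut contains at least half of the vertices. -/
theorem exists_large_cut {κ : Type*} [Fintype κ] [DecidableEq κ] (w : κ → κ → ℕ)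
    (hw : ∀ i j, w i j = w j i) :
    ∃ L : Finset κ, Fintype.card κ ≤ 2 * L.card ∧
      ∑ i, ∑ j, w i j ≤ 4 * ∑ i ∈ L, ∑ j ∈ Lᶜ, w i j + ∑ i, w i i := by
  have key : ∀ s : Finset κ, ∃ L ⊆ s,
      ∑ i ∈ s, ∑ j ∈ s, w i j ≤ 4 * ∑ i ∈ L, ∑ j ∈ s \ L, w i j + ∑ i ∈ s, w i i := by
    intro s
    induction s using Finset.induction_on with
    | empty => exact ⟨∅, subset_rfl, by simp⟩
    | insert a s ha ih =>
      obtain ⟨L, hL, h⟩ := ih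
      have haL : a ∉ L := fun h => ha (hL h)
      have hsplit : ∑ j ∈ s, w a j = ∑ j ∈ L, w a j + ∑ j ∈ s \ L, w a j := by
        rw [add_comm, Finset.sum_sdiff hL]
      have hins : ∑ i ∈ insert a s, ∑ j ∈ insert a s, w i j =
          w a a + 2 * ∑ j ∈ s, w a j + ∑ i ∈ s, ∑ j ∈ s, w i j := by
        simp only [Finset.sum_insert ha, Finset.sum_add_distrib, hw _ a]
        ring
      have hd : ∑ i ∈ insert a s, w i i = w a a + ∑ i ∈ s, w i i := Finset.sum_insert ha
      rw [hins, hd]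
      by_cases hcmp : ∑ j ∈ L, w a j ≤ ∑ j ∈ s \ L, w a j
      · refine ⟨insert a L, Finset.insert_subset_insert _ hL, ?_⟩
        have : insert a s \ insert a L = s \ L := by
          ext x
          simp only [Finset.mem_sdiff, Finset.mem_insert]
          grind
        rw [this, Finset.sum_insert haL]
        omega
      · refine ⟨L, hL.trans (Finset.subset_insert _ _), ?_⟩
        have : insert a s \ L = insert a (s \ L) := Finset.insert_sdiff_of_notMem _ haL
        have ha' : a ∉ s \ L := fun h => ha (Finset.mem_sdiff.1 h).1
        simp only [this, Finset.sum_insert ha', Finset.sum_add_distrib, hw _ a]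
        omega
  obtain ⟨L, -, h⟩ := key univ
  rw [← Finset.compl_eq_univ_sdiff] at h
  have hc := Finset.card_add_card_compl L
  by_cases hL : Fintype.card κ ≤ 2 * L.card
  · exact ⟨L, hL, h⟩
  · refine ⟨Lᶜ, by omega, ?_⟩
    have hcomm : ∑ i ∈ Lᶜ, ∑ j ∈ L, w i j = ∑ i ∈ L, ∑ j ∈ Lᶜ, w i j := by
      rw [Finset.sum_comm]
      exact Finset.sum_congr rfl fun _ _ => Finset.sum_congr rfl fun _ _ => hw _ _
    rwa [compl_compl, hcomm]

/-- The number of `ℓ`-element subsets of `α ⊕ α` containing two given left elements and two given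
right elements, bounded by a sum over the possible coincidences. -/
theorem card_filter_four_mem_le {α : Type*} [Fintype α] [DecidableEq α] (ℓ : ℕ)
    (hℓ : 4 ≤ ℓ) (x x' z z' : α) :
    ((Finset.powersetCard ℓ (univ : Finset (α ⊕ α))).filter fun S =>
      (Sum.inl x ∈ S ∧ Sum.inr z ∈ S) ∧ (Sum.inl x' ∈ S ∧ Sum.inr z' ∈ S)).card ≤
      (if x' = x ∧ z' = z then (2 * Fintype.card α - 2).choose (ℓ - 2) else 0) +
      (if x' = x then (2 * Fintype.card α - 3).choose (ℓ - 3) else 0) +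
      (if z' = z then (2 * Fintype.card α - 3).choose (ℓ - 3) else 0) +
      (2 * Fintype.card α - 4).choose (ℓ - 4) := by
  have hX : Fintype.card (α ⊕ α) = 2 * Fintype.card α := by
    rw [Fintype.card_sum]
    ring
  have key : ∀ Q : Finset (α ⊕ α), Q = {Sum.inl x, Sum.inr z, Sum.inl x', Sum.inr z'} →
      Q.card ≤ ℓ →
      ((Finset.powersetCard ℓ (univ : Finset (α ⊕ α))).filter fun S =>
        (Sum.inl x ∈ S ∧ Sum.inr z ∈ S) ∧ (Sum.inl x' ∈ S ∧ Sum.inr z' ∈ S)).card =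
      (2 * Fintype.card α - Q.card).choose (ℓ - Q.card) := by
    intro Q hQ hQℓ
    rw [← hX, ← card_filter_superset Q ℓ hQℓ]
    congr 1
    refine Finset.filter_congr fun S _ => ?_
    simp only [hQ, Finset.insert_subset_iff, Finset.singleton_subset_iff]
    tauto
  by_cases h1 : x' = x <;> by_cases h2 : z' = z
  · subst h1 h2
    have hc : ({Sum.inl x', Sum.inr z'} : Finset (α ⊕ α)).card = 2 := Finset.card_pair (by simp)
    rw [key {Sum.inl x', Sum.inr z'} (by ext; simp) (by omega), hc]
    simp only [and_self, if_true]
    omega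
  · subst h1
    have hc : ({Sum.inl x', Sum.inr z, Sum.inr z'} : Finset (α ⊕ α)).card = 3 := by
      rw [Finset.card_eq_three]
      exact ⟨_, _, _, by simp, by simp, by simpa using Ne.symm h2, rfl⟩
    rw [key {Sum.inl x', Sum.inr z, Sum.inr z'} (by ext; simp; tauto) (by omega), hc]
    simp only [h2, and_false, if_true, if_false]
    omega
  · subst h2
    have hc : ({Sum.inr z', Sum.inl x, Sum.inl x'} : Finset (α ⊕ α)).card = 3 := by
      rw [Finset.card_eq_three]
      exact ⟨_, _, _, by simp, by simp, by simpa using Ne.symm h1, rfl⟩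
    rw [key {Sum.inr z', Sum.inl x, Sum.inl x'} (by ext; simp; tauto) (by omega), hc]
    simp only [h1, false_and, if_true, if_false]
    omega
  · have hc : ({Sum.inl x, Sum.inr z, Sum.inl x', Sum.inr z'} : Finset (α ⊕ α)).card = 4 := by
      rw [Finset.card_insert_of_notMem (by simpa using Ne.symm h1), Finset.card_eq_three.2]
      exact ⟨_, _, _, by simp, by simpa using Ne.symm h2, by simp, rfl⟩
    rw [key _ rfl (by omega), hc]
    omega

/-- The neighbour of `S` in the Kikuchi graph along a link: `x'` and `z'` replace `x` and `z`. -/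
def kikuchiMove {α : Type*} [DecidableEq α] (S : Finset (α ⊕ α)) (x x' z z' : α) :
    Finset (α ⊕ α) :=
  (S \ {Sum.inl x, Sum.inr z}) ∪ {Sum.inl x', Sum.inr z'}

theorem kikuchiMove_kikuchiMove {α : Type*} [DecidableEq α] (S : Finset (α ⊕ α)) (x x' z z' : α)
    (h : {Sum.inl x, Sum.inr z} ⊆ S) (h' : Disjoint S {Sum.inl x', Sum.inr z'}) :
    kikuchiMove (kikuchiMove S x x' z z') x' x z' z = S := by
  rw [kikuchiMove, kikuchiMove, Finset.union_sdiff_cancel_right, Finset.sdiff_union_of_subset h]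
  exact h'.mono_left Finset.sdiff_subset

theorem card_kikuchiMove {α : Type*} [DecidableEq α] (S : Finset (α ⊕ α)) (x x' z z' : α)
    (h : {Sum.inl x, Sum.inr z} ⊆ S) (h' : Disjoint S {Sum.inl x', Sum.inr z'}) :
    (kikuchiMove S x x' z z').card = S.card := by
  have h2 : ∀ a b : α, ({Sum.inl a, Sum.inr b} : Finset (α ⊕ α)).card = 2 := fun a b =>
    Finset.card_pair (by simp)
  have := Finset.card_le_card h
  rw [kikuchiMove, Finset.card_union_of_disjoint (h'.mono_left Finset.sdiff_subset),
    Finset.card_sdiff_of_subset h, h2, h2]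
  rw [h2] at this
  omega

/-- The sum over `S` and over its Kikuchi neighbour differ exactly in the link. -/
theorem sum_add_sum_kikuchiMove {α : Type*} [DecidableEq α] (S : Finset (α ⊕ α)) (x x' z z' : α)
    (h : {Sum.inl x, Sum.inr z} ⊆ S) (h' : Disjoint S {Sum.inl x', Sum.inr z'})
    (y : α ⊕ α → ZMod 2) :
    ∑ p ∈ S, y p + ∑ p ∈ kikuchiMove S x x' z z', y p =
      (y (Sum.inl x) + y (Sum.inl x')) + (y (Sum.inr z) + y (Sum.inr z')) := by
  rw [kikuchiMove, Finset.sum_union (h'.mono_left Finset.sdiff_subset),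
    ← Finset.sum_sdiff h, Finset.sum_pair (by simp), Finset.sum_pair (by simp)]
  have h2 := CharTwo.add_self_eq_zero (∑ p ∈ S \ {Sum.inl x, Sum.inr z}, y p)
  linear_combination h2

/-- A family of links in which few links share endpoints gives a Kikuchi graph with a large
matching. -/
theorem exists_kikuchi_matching {α ι : Type*} [Fintype α] [DecidableEq α] (F : Finset ι)
    (v v' w w' : ι → α)
    (σ : ι → ι) (hσF : ∀ f ∈ F, σ f ∈ F) (hσ : Function.Involutive σ)
    (hσv : ∀ f, v (σ f) = v' f) (hσw : ∀ f, w (σ f) = w' f)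
    (hv : ∀ f ∈ F, v f ≠ v' f) (hw : ∀ f ∈ F, w f ≠ w' f)
    (ℓ d k K : ℕ) (hℓ : 4 ≤ ℓ)
    (hvw : ∀ x z, (F.filter fun f => v f = x ∧ w f = z).card ≤ 2 * d)
    (hvk : ∀ x, (F.filter fun f => v f = x).card ≤ 4 * k)
    (hwk : ∀ z, (F.filter fun f => w f = z).card ≤ 4 * k)
    (hF : F.card ≤ Fintype.card α * (4 * k))
    (hK : 4 * (2 * d * (2 * Fintype.card α - 2).choose (ℓ - 2)
      + 8 * k * (2 * Fintype.card α - 3).choose (ℓ - 3)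
      + Fintype.card α * (4 * k) * (2 * Fintype.card α - 4).choose (ℓ - 4))
      ≤ K * (2 * Fintype.card α - 4).choose (ℓ - 2)) :
    ∃ M : Finset (Finset (α ⊕ α) × Finset (α ⊕ α)),
      (∀ e ∈ M, e.1.card = ℓ ∧ e.2.card = ℓ) ∧
      (∀ e ∈ M, ∃ f ∈ F, {Sum.inl (v f), Sum.inr (w f)} ⊆ e.1 ∧
        Disjoint e.1 {Sum.inl (v' f), Sum.inr (w' f)} ∧
        e.2 = kikuchiMove e.1 (v f) (v' f) (w f) (w' f)) ∧
      (∀ e ∈ M, ∀ f ∈ M, e ≠ f → e.1 ≠ f.1 ∧ e.1 ≠ f.2 ∧ e.2 ≠ f.2) ∧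
      F.card * (2 * Fintype.card α - 4).choose (ℓ - 2) ≤ 4 * K * M.card := by
  set U := Finset.powersetCard ℓ (univ : Finset (α ⊕ α)) with hU
  set n := Fintype.card α
  have hX : Fintype.card (α ⊕ α) = 2 * n := by
    rw [Fintype.card_sum]
    ring
  have hpair : ∀ a b : α, ({Sum.inl a, Sum.inr b} : Finset (α ⊕ α)).card = 2 := fun a b =>
    Finset.card_pair (by simp)
  let E : Finset (Σ _ : ι, Finset (α ⊕ α)) := F.sigma fun f => U.filter fun S =>
    {Sum.inl (v f), Sum.inr (w f)} ⊆ S ∧ Disjoint S {Sum.inl (v' f), Sum.inr (w' f)}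
  have hE : ∀ e, e ∈ E ↔ e.1 ∈ F ∧ e.2.card = ℓ ∧
      {Sum.inl (v e.1), Sum.inr (w e.1)} ⊆ e.2 ∧
      Disjoint e.2 {Sum.inl (v' e.1), Sum.inr (w' e.1)} := by
    intro e
    simp [E, hU, Finset.mem_powersetCard]
  have hEcard : E.card = F.card * (2 * n - 4).choose (ℓ - 2) := by
    rw [Finset.card_sigma, Finset.sum_congr rfl (g := fun _ => (2 * n - 4).choose (ℓ - 2)),
      Finset.sum_const, smul_eq_mul]
    intro f hf
    rw [card_filter_superset_disjoint, hX, hpair, hpair, Nat.sub_sub]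
    · have := (hv f hf).symm
      have := (hw f hf).symm
      simp [*]
    · rw [hpair]
      omega
  let t : (Σ _ : ι, Finset (α ⊕ α)) → Finset (α ⊕ α) := fun e =>
    kikuchiMove e.2 (v e.1) (v' e.1) (w e.1) (w' e.1)
  let g : Finset (α ⊕ α) → ℕ := fun S =>
    (F.filter fun f => Sum.inl (v f) ∈ S ∧ Sum.inr (w f) ∈ S).card
  have hout : ∀ S, (E.filter fun e => e.2 = S).card ≤ g S := by
    intro S
    refine Finset.card_le_card_of_injOn (fun e => e.1) ?_ ?_
    · intro e he
      rw [Finset.mem_coe, Finset.mem_filter, hE] at he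
      obtain ⟨⟨he, -, hs, -⟩, rfl⟩ := he
      simpa [he, Finset.insert_subset_iff] using hs
    · rintro ⟨e, S₁⟩ he ⟨f, S₂⟩ hf hef
      simp only [Finset.coe_filter, Set.mem_ofPred_eq] at he hf hef
      rw [hef, he.2, hf.2]
  have hin : ∀ S, (E.filter fun e => t e = S).card ≤ g S := by
    intro S
    refine Finset.card_le_card_of_injOn (fun e => σ e.1) ?_ ?_
    · intro e he
      rw [Finset.mem_coe, Finset.mem_filter, hE] at he
      obtain ⟨⟨he, -, -, -⟩, rfl⟩ := he
      simp [hσF _ he, hσv, hσw, t, kikuchiMove]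
    · rintro ⟨e, S₁⟩ he ⟨f, S₂⟩ hf hef
      simp only [Finset.coe_filter, Set.mem_ofPred_eq, hE] at he hf hef
      obtain rfl := hσ.injective hef
      have h1 := kikuchiMove_kikuchiMove _ _ _ _ _ he.1.2.2.1 he.1.2.2.2
      have h2 := kikuchiMove_kikuchiMove _ _ _ _ _ hf.1.2.2.1 hf.1.2.2.2
      have h3 : t ⟨e, S₁⟩ = t ⟨e, S₂⟩ := he.2.trans hf.2.symm
      simp only [t] at h3
      rw [h3] at h1
      rw [← h1, h2]
  have hfix : ∀ e ∈ F, ∑ f ∈ F, (U.filter fun S =>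
      (Sum.inl (v e) ∈ S ∧ Sum.inr (w e) ∈ S) ∧ (Sum.inl (v f) ∈ S ∧ Sum.inr (w f) ∈ S)).card ≤
      2 * d * (2 * n - 2).choose (ℓ - 2) + 8 * k * (2 * n - 3).choose (ℓ - 3)
        + n * (4 * k) * (2 * n - 4).choose (ℓ - 4) := by
    intro e _
    refine (Finset.sum_le_sum fun f _ =>
      card_filter_four_mem_le ℓ hℓ (v e) (v f) (w e) (w f)).trans ?_
    rw [Finset.sum_add_distrib, Finset.sum_add_distrib, Finset.sum_add_distrib,
      ← Finset.sum_filter, ← Finset.sum_filter, ← Finset.sum_filter]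
    simp only [Finset.sum_const, smul_eq_mul]
    have h1 := Nat.mul_le_mul_right ((2 * n - 2).choose (ℓ - 2)) (hvw (v e) (w e))
    have h2 := Nat.mul_le_mul_right ((2 * n - 3).choose (ℓ - 3)) (hvk (v e))
    have h3 := Nat.mul_le_mul_right ((2 * n - 3).choose (ℓ - 3)) (hwk (w e))
    have h4 := Nat.mul_le_mul_right ((2 * n - 4).choose (ℓ - 4)) hF
    refine (add_le_add (add_le_add (add_le_add h1 h2) h3) h4).trans_eq ?_
    ring
  have hg : ∑ S ∈ U, g S ^ 2 = ∑ e ∈ F, ∑ f ∈ F, (U.filter fun S =>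
      (Sum.inl (v e) ∈ S ∧ Sum.inr (w e) ∈ S) ∧
        (Sum.inl (v f) ∈ S ∧ Sum.inr (w f) ∈ S)).card := by
    have h1 : ∀ S ∈ U, g S ^ 2 = ∑ e ∈ F, ∑ f ∈ F,
        if (Sum.inl (v e) ∈ S ∧ Sum.inr (w e) ∈ S) ∧ (Sum.inl (v f) ∈ S ∧ Sum.inr (w f) ∈ S)
          then 1 else 0 := by
      intro S _
      simp only [g, sq, Finset.card_filter, Finset.sum_mul_sum]
      refine Finset.sum_congr rfl fun e _ => Finset.sum_congr rfl fun f _ => ?_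
      split_ifs <;> simp_all
    rw [Finset.sum_congr rfl h1, Finset.sum_comm]
    refine Finset.sum_congr rfl fun e _ => ?_
    rw [Finset.sum_comm]
    refine Finset.sum_congr rfl fun f _ => ?_
    rw [Finset.card_filter]
  have hsecond : ∑ S ∈ U, ((E.filter fun e => e.2 = S).card + (E.filter fun e => t e = S).card) ^ 2
      ≤ K * E.card := by
    calc _ ≤ ∑ S ∈ U, (g S + g S) ^ 2 := Finset.sum_le_sum fun S _ =>
          Nat.pow_le_pow_left (add_le_add (hout S) (hin S)) 2
      _ = 4 * ∑ S ∈ U, g S ^ 2 := by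
          rw [Finset.mul_sum]
          exact Finset.sum_congr rfl fun S _ => by ring
      _ ≤ 4 * (F.card * (2 * d * (2 * n - 2).choose (ℓ - 2)
            + 8 * k * (2 * n - 3).choose (ℓ - 3)
            + n * (4 * k) * (2 * n - 4).choose (ℓ - 4))) := by
          rw [hg]
          exact Nat.mul_le_mul_left _ (Finset.sum_le_card_nsmul _ _ _ hfix)
      _ = F.card * (4 * (2 * d * (2 * n - 2).choose (ℓ - 2)
            + 8 * k * (2 * n - 3).choose (ℓ - 3)
            + n * (4 * k) * (2 * n - 4).choose (ℓ - 4))) := by ring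
      _ ≤ F.card * (K * (2 * n - 4).choose (ℓ - 2)) := Nat.mul_le_mul_left _ hK
      _ = K * E.card := by
          rw [hEcard]
          ring
  obtain ⟨M, hME, hMcard, hMdisj⟩ := exists_matching_of_sum_sq_degree_le E U (fun e => e.2) t
    (fun e he => by simpa [hU, Finset.mem_powersetCard] using ((hE e).1 he).2.1)
    (fun e he => by
      have h := (hE e).1 he
      simpa [hU, Finset.mem_powersetCard, t, card_kikuchiMove _ _ _ _ _ h.2.2.1 h.2.2.2]
        using h.2.1) K hsecond
  have hinj : Set.InjOn (fun e => (e.2, t e)) (M : Set (Σ _ : ι, Finset (α ⊕ α))) := by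
    intro e he f hf hef
    by_contra hne
    exact (hMdisj e he f hf hne).1 (congrArg Prod.fst hef)
  refine ⟨M.image fun e => (e.2, t e), ?_, ?_, ?_, ?_⟩
  · intro p hp
    obtain ⟨e, he, rfl⟩ := Finset.mem_image.1 hp
    have h := (hE e).1 (hME he)
    exact ⟨h.2.1, (card_kikuchiMove _ _ _ _ _ h.2.2.1 h.2.2.2).trans h.2.1⟩
  · intro p hp
    obtain ⟨e, he, rfl⟩ := Finset.mem_image.1 hp
    have h := (hE e).1 (hME he)
    exact ⟨e.1, h.1, h.2.2.1, h.2.2.2, rfl⟩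
  · intro p hp q hq hpq
    obtain ⟨e, he, rfl⟩ := Finset.mem_image.1 hp
    obtain ⟨f, hf, rfl⟩ := Finset.mem_image.1 hq
    exact hMdisj e he f hf fun h => hpq (by rw [h])
  · rw [Finset.card_image_of_injOn hinj, ← hEcard]
    exact hMcard

/-- The binomial estimates behind the degree bounds of the Kikuchi graph at level
`ℓ ≈ √(n / k)`. -/
theorem kikuchi_binomial_bounds (n k d ℓ : ℕ) (hd : 0 < d) (hℓ : 4 ≤ ℓ) (hℓn : 4 * ℓ ≤ n)
    (hub : k * ℓ ^ 2 ≤ n) (hlb : n ≤ 4 * (k * ℓ ^ 2)) :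
    4 * (2 * d * (2 * n - 2).choose (ℓ - 2) + 8 * k * (2 * n - 3).choose (ℓ - 3)
      + n * (4 * k) * (2 * n - 4).choose (ℓ - 4))
      ≤ 56 * d * (2 * n - 4).choose (ℓ - 2) ∧
    (2 * n).choose ℓ ≤ 64 * (n * k) * (2 * n - 4).choose (ℓ - 2) := by
  have hn : 0 < n := by omega
  obtain ⟨q, rfl⟩ : ∃ q, ℓ = q + 4 := ⟨ℓ - 4, by omega⟩
  obtain ⟨r, hr⟩ : ∃ r, 2 * n = r + q + 7 := ⟨2 * n - (q + 7), by omega⟩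
  have hrq : 3 * q + 4 ≤ r := by omega
  have h2 : 2 * n - 2 = r + q + 5 := by omega
  have h3 : 2 * n - 3 = r + q + 4 := by omega
  have h4 : 2 * n - 4 = r + q + 3 := by omega
  rw [h2, h3, h4]
  simp only [show q + 4 - 2 = q + 2 by omega, show q + 4 - 3 = q + 1 by omega,
    show q + 4 - 4 = q by omega]
  have e1 : (r + q + 5) * (r + q + 4).choose (q + 1) = (r + q + 5).choose (q + 2) * (q + 2) :=
    Nat.add_one_mul_choose_eq (r + q + 4) (q + 1)
  have e2 : (r + q + 4) * (r + q + 3).choose q = (r + q + 4).choose (q + 1) * (q + 1) :=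
    Nat.add_one_mul_choose_eq (r + q + 3) q
  have e3 : (r + q + 7) * (r + q + 6).choose (q + 3) = (r + q + 7).choose (q + 4) * (q + 4) :=
    Nat.add_one_mul_choose_eq (r + q + 6) (q + 3)
  have e4 : (r + q + 6) * (r + q + 5).choose (q + 2) = (r + q + 6).choose (q + 3) * (q + 3) :=
    Nat.add_one_mul_choose_eq (r + q + 5) (q + 2)
  have e5 := Nat.choose_mul_succ_eq (r + q + 4) (q + 2)
  have e6 := Nat.choose_mul_succ_eq (r + q + 3) (q + 2)
  rw [show r + q + 4 + 1 - (q + 2) = r + 3 by omega] at e5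
  rw [show r + q + 3 + 1 - (q + 2) = r + 2 by omega] at e6
  simp only [show r + q + 4 + 1 = r + q + 5 by omega] at e5
  simp only [show r + q + 3 + 1 = r + q + 4 by omega] at e6
  rw [hr]
  set N := (r + q + 7).choose (q + 4)
  set N1 := (r + q + 6).choose (q + 3)
  set B := (r + q + 5).choose (q + 2)
  set B3 := (r + q + 4).choose (q + 1)
  set B4 := (r + q + 3).choose q
  set A1 := (r + q + 4).choose (q + 2)
  set A := (r + q + 3).choose (q + 2)
  clear_value N N1 B B3 B4 A1 A
  have hA1 : 3 * B ≤ 4 * A1 := by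
    refine Nat.le_of_mul_le_mul_left (c := r + q + 5) ?_ (by omega)
    calc (r + q + 5) * (3 * B) = B * (3 * (r + q + 5)) := by ring
      _ ≤ B * (4 * (r + 3)) := Nat.mul_le_mul_left _ (by omega)
      _ = (r + q + 5) * (4 * A1) := by linear_combination 4 * e5.symm
  have hA : 3 * A1 ≤ 4 * A := by
    refine Nat.le_of_mul_le_mul_left (c := r + q + 4) ?_ (by omega)
    calc (r + q + 4) * (3 * A1) = A1 * (3 * (r + q + 4)) := by ring
      _ ≤ A1 * (4 * (r + 2)) := Nat.mul_le_mul_left _ (by omega)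
      _ = (r + q + 4) * (4 * A) := by linear_combination 4 * e6.symm
  have hBA : B ≤ 2 * A := by omega
  have hB3 : 2 * n * B3 ≤ (q + 4) * B := by
    refine Nat.le_of_mul_le_mul_left (c := r + q + 5) ?_ (by omega)
    calc (r + q + 5) * (2 * n * B3) = (r + q + 7) * (q + 2) * B := by
          rw [hr]; linear_combination (r + q + 7) * e1
      _ ≤ (r + q + 5) * (q + 4) * B := Nat.mul_le_mul_right _ (by nlinarith)
      _ = _ := by ring
  have hB4 : 2 * n * B4 ≤ (q + 4) * B3 := by
    refine Nat.le_of_mul_le_mul_left (c := r + q + 4) ?_ (by omega)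
    calc (r + q + 4) * (2 * n * B4) = (r + q + 7) * (q + 1) * B3 := by
          rw [hr]; linear_combination (r + q + 7) * e2
      _ ≤ (r + q + 4) * (q + 4) * B3 := Nat.mul_le_mul_right _ (by nlinarith)
      _ = _ := by ring
  have hkB3 : 2 * k * B3 ≤ B := by
    refine Nat.le_of_mul_le_mul_left (c := n) ?_ hn
    calc n * (2 * k * B3) = k * (2 * n * B3) := by ring
      _ ≤ k * ((q + 4) * B) := Nat.mul_le_mul_left _ hB3
      _ ≤ k * ((q + 4) ^ 2 * B) := by gcongr; nlinarith
      _ = k * (q + 4) ^ 2 * B := by ring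
      _ ≤ n * B := Nat.mul_le_mul_right _ hub
  have hkB4 : 4 * (n * k) * B4 ≤ B := by
    refine Nat.le_of_mul_le_mul_left (c := n) ?_ hn
    calc n * (4 * (n * k) * B4) = k * (2 * n * (2 * n * B4)) := by ring
      _ ≤ k * (2 * n * ((q + 4) * B3)) := by gcongr
      _ = k * (q + 4) * (2 * n * B3) := by ring
      _ ≤ k * (q + 4) * ((q + 4) * B) := by gcongr
      _ = k * (q + 4) ^ 2 * B := by ring
      _ ≤ n * B := Nat.mul_le_mul_right _ hub
  refine ⟨?_, ?_⟩
  · have hdB : B ≤ d * B := Nat.le_mul_of_pos_left _ hd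
    have hdA : d * B ≤ d * (2 * A) := Nat.mul_le_mul_left _ hBA
    calc 4 * (2 * d * B + 8 * k * B3 + n * (4 * k) * B4)
        = 8 * (d * B) + 16 * (2 * k * B3) + 4 * (4 * (n * k) * B4) := by ring
      _ ≤ 8 * (d * B) + 16 * (d * B) + 4 * (d * B) := by
          exact add_le_add (add_le_add le_rfl (Nat.mul_le_mul_left _ (hkB3.trans hdB)))
            (Nat.mul_le_mul_left _ (hkB4.trans hdB))
      _ = 28 * (d * B) := by ring
      _ ≤ 28 * (d * (2 * A)) := Nat.mul_le_mul_left _ hdA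
      _ = 56 * d * A := by ring
  · have hN : N * (q + 4) * (q + 3) ≤ 4 * n ^ 2 * B := by
      have : N * (q + 4) * (q + 3) = (r + q + 7) * (r + q + 6) * B := by
        linear_combination (q + 3) * e3.symm + (r + q + 7) * e4.symm
      rw [this]
      calc (r + q + 7) * (r + q + 6) * B ≤ (r + q + 7) * (r + q + 7) * B := by gcongr; omega
        _ = 2 * n * (2 * n) * B := by rw [hr]
        _ = 4 * n ^ 2 * B := by ring
    refine Nat.le_of_mul_le_mul_left (c := n) ?_ hn
    calc n * N ≤ 4 * (k * (q + 4) ^ 2) * N := Nat.mul_le_mul_right _ hlb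
      _ = 4 * k * (N * (q + 4) * (q + 4)) := by ring
      _ ≤ 4 * k * (N * (q + 4) * (2 * (q + 3))) := by gcongr; omega
      _ = 8 * k * (N * (q + 4) * (q + 3)) := by ring
      _ ≤ 8 * k * (4 * n ^ 2 * B) := by gcongr
      _ ≤ 8 * k * (4 * n ^ 2 * (2 * A)) := by gcongr
      _ = n * (64 * (n * k) * A) := by ring

/-- A matching in the complete `3`-uniform hypergraph. -/
structure IsTripleMatching {α : Type*} (H : Finset (Finset α)) : Prop where
  card_eq : ∀ C ∈ H, C.card = 3
  pairwise_disjoint : Set.Pairwise (H : Set (Finset α)) Disjoint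

theorem IsTripleMatching.eq_of_mem {α : Type*} {H : Finset (Finset α)} (hH : IsTripleMatching H)
    {C D : Finset α} (hC : C ∈ H) (hD : D ∈ H) {x : α} (hxC : x ∈ C) (hxD : x ∈ D) : C = D := by
  by_contra h
  exact Finset.disjoint_left.1 (hH.pairwise_disjoint hC hD h) hxC hxD

theorem IsTripleMatching.mono {α : Type*} {H H' : Finset (Finset α)} (hH : IsTripleMatching H)
    (h : H' ⊆ H) : IsTripleMatching H' :=
  ⟨fun C hC => hH.card_eq C (h hC), hH.pairwise_disjoint.mono (by exact_mod_cast h)⟩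

theorem ne_of_card_triple {α : Type*} [DecidableEq α] {x y z : α}
    (h : ({x, y, z} : Finset α).card = 3) : x ≠ y ∧ x ≠ z ∧ y ≠ z := by
  refine ⟨?_, ?_, ?_⟩ <;> rintro rfl
  · have := Finset.card_le_two (a := x) (b := z)
    simp at h
    omega
  · have := Finset.card_le_two (a := y) (b := x)
    rw [Finset.insert_comm] at h
    simp at h
    omega
  · have := Finset.card_le_two (a := x) (b := y)
    simp at h
    omega

theorem IsTripleMatching.ne {α : Type*} [DecidableEq α] {H : Finset (Finset α)}
    (hH : IsTripleMatching H) {x y z : α} (h : {x, y, z} ∈ H) : x ≠ y ∧ x ≠ z ∧ y ≠ z :=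
  ne_of_card_triple (hH.card_eq _ h)

theorem IsTripleMatching.exists_eq_triple {α : Type*} [DecidableEq α] {H : Finset (Finset α)}
    (hH : IsTripleMatching H) {C : Finset α} (hC : C ∈ H) {x : α} (hx : x ∈ C) :
    ∃ y z, C = {x, y, z} := by
  have h2 : (C.erase x).card = 2 := by rw [Finset.card_erase_of_mem hx, hH.card_eq C hC]
  obtain ⟨y, z, -, h⟩ := Finset.card_eq_two.1 h2
  exact ⟨y, z, by rw [← h, Finset.insert_erase hx]⟩

/-- In a triple matching `{x, y, z}` and `{x, y', z'}` agree up to the order of the last two. -/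
theorem IsTripleMatching.eq_or_swap {α : Type*} [DecidableEq α] {H : Finset (Finset α)}
    (hH : IsTripleMatching H) {x y z y' z' : α} (h : {x, y, z} ∈ H) (h' : {x, y', z'} ∈ H) :
    (y' = y ∧ z' = z) ∨ (y' = z ∧ z' = y) := by
  have heq := hH.eq_of_mem h h' (x := x) (by simp) (by simp)
  have hn := hH.ne h
  have hn' := hH.ne h'
  have hy : y' ∈ ({x, y, z} : Finset α) := by rw [heq]; simp
  have hz : z' ∈ ({x, y, z} : Finset α) := by rw [heq]; simp
  simp only [Finset.mem_insert, Finset.mem_singleton] at hy hz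
  grind

/-- The ordered pairs that complete `x` to a triple of `H`. -/
def completions {α : Type*} [Fintype α] [DecidableEq α] (H : Finset (Finset α)) (x : α) :
    Finset (α × α) :=
  univ.filter fun p => {x, p.1, p.2} ∈ H

theorem IsTripleMatching.card_completions_le {α : Type*} [Fintype α] [DecidableEq α]
    {H : Finset (Finset α)} (hH : IsTripleMatching H) (x : α) : (completions H x).card ≤ 2 := by
  rcases (completions H x).eq_empty_or_nonempty with h | ⟨⟨y, z⟩, h⟩
  · simp [h]
  · refine le_trans (Finset.card_le_card (t := {(y, z), (z, y)}) ?_) Finset.card_le_two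
    rintro ⟨y', z'⟩ hmem
    simp only [completions, Finset.mem_filter, Finset.mem_univ, true_and] at h hmem
    simpa using hH.eq_or_swap h hmem

/-- The links of `i` with respect to `R`: a triple `{u, v, v'}` of `H i` and a triple `{u, w, w'}`
of `H j` with `j ∈ R`, both through `u`, recorded as `(j, u, (v, v'), (w, w'))`. -/
def links {κ α : Type*} [Fintype κ] [DecidableEq κ] [Fintype α] [DecidableEq α]
    (H : κ → Finset (Finset α)) (R : Finset κ) (i : κ) : Finset (κ × α × (α × α) × (α × α)) :=
  univ.filter fun f => f.1 ∈ R ∧ {f.2.1, f.2.2.1.1, f.2.2.1.2} ∈ H i ∧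
    {f.2.1, f.2.2.2.1, f.2.2.2.2} ∈ H f.1

section Links

variable {κ α : Type*} [Fintype κ] [DecidableEq κ] [Fintype α] [DecidableEq α]
  {H : κ → Finset (Finset α)}

theorem card_links_filter_fst_le (hH : ∀ i, IsTripleMatching (H i)) (R : Finset κ) (i : κ)
    (x : α) : ((links H R i).filter fun f => f.2.2.1.1 = x).card ≤ 4 * Fintype.card κ := by
  have hsub : ((links H R i).filter fun f => f.2.2.1.1 = x) ⊆
      (completions (H i) x).biUnion fun p => univ.biUnion fun j =>
        (completions (H j) p.1).image fun q => (j, p.1, (x, p.2), q) := by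
    rintro ⟨j, u, ⟨v, v'⟩, ⟨w, w'⟩⟩ hf
    simp only [links, Finset.mem_filter, Finset.mem_univ, true_and] at hf
    obtain ⟨⟨-, h1, h2⟩, rfl⟩ := hf
    rw [Finset.insert_comm] at h1
    simp only [completions, Finset.mem_biUnion, Finset.mem_image, Finset.mem_filter,
      Finset.mem_univ, true_and]
    exact ⟨(u, v'), h1, j, (w, w'), h2, rfl⟩
  calc _ ≤ _ := Finset.card_le_card hsub
    _ ≤ (completions (H i) x).card * (Fintype.card κ * 2) :=
        Finset.card_biUnion_le_card_mul _ _ _ fun p _ =>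
          Finset.card_biUnion_le_card_mul _ _ _ fun j _ =>
            Finset.card_image_le.trans ((hH j).card_completions_le _)
    _ ≤ 2 * (Fintype.card κ * 2) := Nat.mul_le_mul_right _ ((hH i).card_completions_le _)
    _ = 4 * Fintype.card κ := by ring

theorem card_links_filter_snd_le (hH : ∀ i, IsTripleMatching (H i)) (R : Finset κ) (i : κ)
    (z : α) : ((links H R i).filter fun f => f.2.2.2.1 = z).card ≤ 4 * Fintype.card κ := by
  have hsub : ((links H R i).filter fun f => f.2.2.2.1 = z) ⊆
      univ.biUnion fun j => (completions (H j) z).biUnion fun q =>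
        (completions (H i) q.1).image fun p => (j, q.1, p, (z, q.2)) := by
    rintro ⟨j, u, ⟨v, v'⟩, ⟨w, w'⟩⟩ hf
    simp only [links, Finset.mem_filter, Finset.mem_univ, true_and] at hf
    obtain ⟨⟨-, h1, h2⟩, rfl⟩ := hf
    rw [Finset.insert_comm] at h2
    simp only [completions, Finset.mem_biUnion, Finset.mem_image, Finset.mem_filter,
      Finset.mem_univ, true_and]
    exact ⟨j, (u, w'), h2, (v, v'), h1, rfl⟩
  calc _ ≤ _ := Finset.card_le_card hsub
    _ ≤ Fintype.card κ * (2 * 2) :=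
        Finset.card_biUnion_le_card_mul _ _ _ fun j _ =>
          (Finset.card_biUnion_le_card_mul _ _ _ fun q _ =>
            Finset.card_image_le.trans ((hH i).card_completions_le _)).trans
            (Nat.mul_le_mul_right _ ((hH j).card_completions_le _))
    _ = 4 * Fintype.card κ := by ring

theorem card_links_filter_both_le (hH : ∀ i, IsTripleMatching (H i)) (d : ℕ)
    (hd : ∀ u w, u ≠ w → (univ.filter fun j => ∃ C ∈ H j, u ∈ C ∧ w ∈ C).card ≤ d)
    (R : Finset κ) (i : κ) (x z : α) :
    ((links H R i).filter fun f => f.2.2.1.1 = x ∧ f.2.2.2.1 = z).card ≤ 2 * d := by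
  let T : α → Finset (κ × α) := fun u => univ.filter fun q => {u, z, q.2} ∈ H q.1
  have hT : ∀ u, (T u).card ≤ d := by
    intro u
    by_cases huz : u = z
    · have : T u = ∅ := by
        refine Finset.filter_false_of_mem fun q _ h => ?_
        exact ((hH _).ne h).1 huz
      simp [this]
    · refine le_trans (Finset.card_le_card_of_injOn Prod.fst ?_ ?_) (hd u z huz)
      · rintro ⟨j, w'⟩ hq
        simp only [T, Finset.coe_filter, Finset.mem_univ, true_and, Set.mem_ofPred_eq] at hq ⊢
        exact ⟨_, hq, by simp, by simp⟩
      · rintro ⟨j, w'⟩ hq ⟨j', w''⟩ hq' hjj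
        simp only [T, Finset.coe_filter, Finset.mem_univ, true_and, Set.mem_ofPred_eq]
          at hq hq' hjj
        subst hjj
        have h1 := (hH _).eq_or_swap hq hq'
        have h2 := (hH _).ne hq
        grind
  have hsub : ((links H R i).filter fun f => f.2.2.1.1 = x ∧ f.2.2.2.1 = z) ⊆
      (completions (H i) x).biUnion fun p =>
        (T p.1).image fun q => (q.1, p.1, (x, p.2), (z, q.2)) := by
    rintro ⟨j, u, ⟨v, v'⟩, ⟨w, w'⟩⟩ hf
    simp only [links, Finset.mem_filter, Finset.mem_univ, true_and] at hf
    obtain ⟨⟨-, h1, h2⟩, rfl, rfl⟩ := hf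
    rw [Finset.insert_comm] at h1
    simp only [completions, T, Finset.mem_biUnion, Finset.mem_image, Finset.mem_filter,
      Finset.mem_univ, true_and]
    exact ⟨(u, v'), h1, (j, w'), h2, rfl⟩
  calc _ ≤ _ := Finset.card_le_card hsub
    _ ≤ (completions (H i) x).card * d :=
        Finset.card_biUnion_le_card_mul _ _ _ fun p _ => Finset.card_image_le.trans (hT _)
    _ ≤ 2 * d := Nat.mul_le_mul_right _ ((hH i).card_completions_le _)

theorem card_links_le (hH : ∀ i, IsTripleMatching (H i)) (R : Finset κ) (i : κ) :
    (links H R i).card ≤ Fintype.card α * (4 * Fintype.card κ) := by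
  rw [Finset.card_eq_sum_card_fiberwise (f := fun f => f.2.2.1.1) (t := univ)
    (fun _ _ => by simp)]
  exact Finset.sum_le_card_nsmul _ _ _ fun x _ => card_links_filter_fst_le hH R i x

theorem sum_card_inter_le_card_links (hH : ∀ i, IsTripleMatching (H i)) (R : Finset κ) (i : κ) :
    ∑ j ∈ R, ((H i).biUnion id ∩ (H j).biUnion id).card ≤ (links H R i).card := by
  rw [← Finset.card_sigma]
  refine Finset.card_le_card_of_surjOn (fun f => (⟨f.1, f.2.1⟩ : Σ _ : κ, α)) ?_
  rintro ⟨j, u⟩ h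
  simp only [Finset.coe_sigma, Set.mem_sigma_iff, Finset.mem_coe, Finset.mem_inter,
    Finset.mem_biUnion, id] at h
  obtain ⟨hj, ⟨C, hC, huC⟩, D, hD, huD⟩ := h
  obtain ⟨v, v', rfl⟩ := (hH i).exists_eq_triple hC huC
  obtain ⟨w, w', rfl⟩ := (hH j).exists_eq_triple hD huD
  exact ⟨(j, u, (v, v'), (w, w')), by simp [links, hj, hC, hD], rfl⟩

end Links

theorem IsTripleMatching.card_biUnion {α : Type*} [DecidableEq α] {H : Finset (Finset α)}
    (hH : IsTripleMatching H) : (H.biUnion id).card = 3 * H.card := by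
  rw [Finset.card_biUnion (t := id) fun C hC D hD h => hH.pairwise_disjoint hC hD h]
  calc ∑ C ∈ H, C.card = ∑ _C ∈ H, 3 := Finset.sum_congr rfl hH.card_eq
    _ = 3 * H.card := by rw [Finset.sum_const, smul_eq_mul, mul_comm]

/-- For subsets `V i` of an `n`-element set, the pairwise intersections have total size at least
`(∑ |V i|)² / n`. -/
theorem sq_sum_card_le_card_mul_sum_card_inter {κ α : Type*} [Fintype κ] [Fintype α]
    [DecidableEq α] (V : κ → Finset α) :
    (∑ i, (V i).card) ^ 2 ≤ Fintype.card α * ∑ i, ∑ j, (V i ∩ V j).card := by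
  have h1 : ∀ W : Finset α, W.card = ∑ u, if u ∈ W then 1 else 0 := by
    intro W
    simp
  have hdeg : ∑ i, (V i).card = ∑ u, ∑ i, if u ∈ V i then 1 else 0 := by
    rw [Finset.sum_comm]
    exact Finset.sum_congr rfl fun i _ => h1 _
  have hsq : ∑ i, ∑ j, (V i ∩ V j).card = ∑ u, (∑ i, if u ∈ V i then 1 else 0) ^ 2 := by
    symm
    simp only [sq, Finset.sum_mul_sum, h1]
    rw [Finset.sum_comm]
    refine Finset.sum_congr rfl fun i _ => ?_
    rw [Finset.sum_comm]
    refine Finset.sum_congr rfl fun j _ => Finset.sum_congr rfl fun u _ => ?_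
    by_cases hi : u ∈ V i <;> by_cases hj : u ∈ V j <;> simp [hi, hj]
  rw [hdeg, hsq]
  exact sq_sum_le_card_mul_sum_sq

/-- The sums over two triples through a common coordinate `u` determine the sum of the other four
coordinates. -/
theorem add_add_eq_of_triples {n : ℕ} {u v v' w w' : Fin n} {y : Fin n → ZMod 2} {a b : ZMod 2}
    (hv : u ≠ v ∧ u ≠ v' ∧ v ≠ v') (hw : u ≠ w ∧ u ≠ w' ∧ w ≠ w')
    (ha : ∑ x ∈ ({u, v, v'} : Finset (Fin n)), y x = a)
    (hb : ∑ x ∈ ({u, w, w'} : Finset (Fin n)), y x = b) :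
    (y v + y v') + (y w + y w') = a + b := by
  rw [Finset.sum_insert (by simp [hv]), Finset.sum_pair hv.2.2] at ha
  rw [Finset.sum_insert (by simp [hw]), Finset.sum_pair hw.2.2] at hb
  have h2 := CharTwo.add_self_eq_zero (y u)
  linear_combination ha + hb - h2

/-- Triple matchings in which every pair of coordinates lies in triples of at most `d` matchings
yield, through the Kikuchi graph, a linear `2`-query code of block length `C(2n, ℓ)`. -/
theorem exists_isLinearWLDC_two_of_light {k n d ℓ : ℕ} (δ : ℝ) (hδ : 0 ≤ δ)
    (Enc : (Fin k → ZMod 2) →ₗ[ZMod 2] (Fin n → ZMod 2)) (H : Fin k → Finset (Finset (Fin n)))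
    (hH : ∀ i, IsTripleMatching (H i))
    (hdec : ∀ i, ∀ C ∈ H i, ∀ b, ∑ v ∈ C, Enc b v = b i)
    (hlight : ∀ u w, u ≠ w → (univ.filter fun j => ∃ C ∈ H j, u ∈ C ∧ w ∈ C).card ≤ d)
    (hk : 0 < k) (hd : 0 < d) (hℓ : 4 ≤ ℓ) (hℓn : 4 * ℓ ≤ n)
    (hub : k * ℓ ^ 2 ≤ n) (hlb : n ≤ 4 * (k * ℓ ^ 2))
    (hm : 2 * n ≤ 3 * ∑ i, (H i).card)
    (hδm : δ * k * (114688 * (n ^ 2 * k * d)) ≤ 9 * (∑ i, ((H i).card : ℝ)) ^ 2) :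
    ∃ (k₃ : ℕ) (Enc₃ : (Fin k₃ → ZMod 2) → Fin ((2 * n).choose ℓ) → ZMod 2),
      k ≤ 2 * k₃ ∧ IsLinearWLDC 2 k₃ ((2 * n).choose ℓ) δ Enc₃ := by
  have hn : 0 < n := by omega
  obtain ⟨hK, hN⟩ := kikuchi_binomial_bounds n k d ℓ hd hℓ hℓn hub hlb
  obtain ⟨L, hL, hcut⟩ := exists_large_cut
    (fun i j => ((H i).biUnion id ∩ (H j).biUnion id).card)
    (fun i j => by rw [Finset.inter_comm])
  have hmain := fun i => exists_kikuchi_matching (links H Lᶜ i)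
    (fun f => f.2.2.1.1) (fun f => f.2.2.1.2) (fun f => f.2.2.2.1) (fun f => f.2.2.2.2)
    (fun f => (f.1, f.2.1, f.2.2.1.swap, f.2.2.2.swap))
    (by
      rintro ⟨j, u, ⟨v, v'⟩, ⟨w, w'⟩⟩ hf
      simp only [links, Finset.mem_filter, Finset.mem_univ, true_and, Prod.swap_prod_mk] at hf ⊢
      rw [Finset.pair_comm v' v, Finset.pair_comm w' w]
      exact hf)
    (fun _ => rfl) (fun _ => rfl) (fun _ => rfl)
    (by
      rintro ⟨j, u, ⟨v, v'⟩, ⟨w, w'⟩⟩ hf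
      simp only [links, Finset.mem_filter, Finset.mem_univ, true_and] at hf
      exact ((hH _).ne hf.2.1).2.2)
    (by
      rintro ⟨j, u, ⟨v, v'⟩, ⟨w, w'⟩⟩ hf
      simp only [links, Finset.mem_filter, Finset.mem_univ, true_and] at hf
      exact ((hH _).ne hf.2.2).2.2)
    ℓ d k (56 * d) hℓ
    (card_links_filter_both_le hH d hlight Lᶜ i)
    (fun x => by simpa using card_links_filter_fst_le hH Lᶜ i x)
    (fun z => by simpa using card_links_filter_snd_le hH Lᶜ i z)
    (by simpa using card_links_le hH Lᶜ i)
    (by simpa using hK)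
  choose M hMℓ hMlink hMdisj hMcard using hmain
  simp only [Fintype.card_fin] at hMcard hL
  let y : (L → ZMod 2) →ₗ[ZMod 2] (Finset (Fin n ⊕ Fin n) → ZMod 2) :=
    LinearMap.pi fun S => ∑ p ∈ S, LinearMap.proj (Sum.elim id id p) ∘ₗ Enc ∘ₗ
      Function.ExtendByZero.linearMap (ZMod 2) (Subtype.val : L → Fin k)
  have hy : ∀ b S, y b S = ∑ p ∈ S,
      Enc (Function.extend (Subtype.val : L → Fin k) b 0) (Sum.elim id id p) := by
    intro b S
    simp [y, LinearMap.sum_apply]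
    rfl
  have hlinks : 9 * (∑ i, (H i).card) ^ 2 ≤ 8 * n * ∑ i ∈ L, (links H Lᶜ i).card := by
    have hle : ∑ i ∈ L, ∑ j ∈ Lᶜ, ((H i).biUnion id ∩ (H j).biUnion id).card ≤
        ∑ i ∈ L, (links H Lᶜ i).card :=
      Finset.sum_le_sum fun i _ => sum_card_inter_le_card_links hH Lᶜ i
    have hcs := sq_sum_card_le_card_mul_sum_card_inter fun i => (H i).biUnion id
    simp only [Finset.inter_self, (hH _).card_biUnion, ← Finset.mul_sum, Fintype.card_fin]
      at hcs hcut
    nlinarith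
  have hMsum : (2 * n).choose ℓ * (9 * (∑ i, (H i).card) ^ 2) ≤
      114688 * (n ^ 2 * k * d) * ∑ i ∈ L, (M i).card := by
    have h1 : (∑ i ∈ L, (links H Lᶜ i).card) * (2 * n - 4).choose (ℓ - 2) ≤
        4 * (56 * d) * ∑ i ∈ L, (M i).card := by
      rw [Finset.sum_mul, Finset.mul_sum]
      exact Finset.sum_le_sum fun i _ => hMcard i
    calc _ ≤ 64 * (n * k) * (2 * n - 4).choose (ℓ - 2) *
          (8 * n * ∑ i ∈ L, (links H Lᶜ i).card) := Nat.mul_le_mul hN hlinks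
      _ = 512 * (n ^ 2 * k) *
          ((∑ i ∈ L, (links H Lᶜ i).card) * (2 * n - 4).choose (ℓ - 2)) := by ring
      _ ≤ 512 * (n ^ 2 * k) * (4 * (56 * d) * ∑ i ∈ L, (M i).card) := Nat.mul_le_mul_left _ h1
      _ = _ := by ring
  obtain ⟨Enc₃, hEnc₃⟩ := exists_isLinearWLDC_two ((2 * n).choose ℓ) δ
    (Finset.powersetCard ℓ (univ : Finset (Fin n ⊕ Fin n)))
    (by simp [Finset.card_powersetCard, two_mul]) y (fun i => M i)
    (fun i e he => by simpa [Finset.mem_powersetCard] using hMℓ i e he)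
    (by
      intro i e he heq
      obtain ⟨f, hf, h1, h2, h3⟩ := hMlink i e he
      have hmem : Sum.inl f.2.2.1.2 ∈ e.2 := by
        rw [h3]
        simp [kikuchiMove]
      rw [← heq] at hmem
      exact Finset.disjoint_left.1 h2 hmem (by simp))
    (fun i => hMdisj i)
    (by
      intro i e he b
      obtain ⟨⟨j, u, ⟨v, v'⟩, ⟨w, w'⟩⟩, hf, h1, h2, h3⟩ := hMlink i e he
      simp only [links, Finset.mem_filter, Finset.mem_univ, true_and] at hf
      rw [hy, hy, h3, sum_add_sum_kikuchiMove _ _ _ _ _ h1 h2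
        (fun p => Enc (Function.extend (Subtype.val : L → Fin k) b 0) (Sum.elim id id p))]
      have h := add_add_eq_of_triples ((hH _).ne hf.2.1) ((hH _).ne hf.2.2)
        (hdec _ _ hf.2.1 (Function.extend (Subtype.val : L → Fin k) b 0))
        (hdec _ _ hf.2.2 (Function.extend (Subtype.val : L → Fin k) b 0))
      rw [Subtype.val_injective.extend_apply, Function.extend_apply'] at h
      · simpa using h
      · rintro ⟨a, rfl⟩
        simpa using hf.1)
    (by
      have hX : (0 : ℝ) < 114688 * (n ^ 2 * k * d) := by positivity
      have hLk : (L.card : ℝ) ≤ k := by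
        have := Finset.card_le_univ L
        rw [Fintype.card_fin] at this
        exact_mod_cast this
      have hMsum' : ((2 * n).choose ℓ : ℝ) * (9 * (∑ i, ((H i).card : ℝ)) ^ 2) ≤
          114688 * (n ^ 2 * k * d) * ∑ i ∈ L, ((M i).card : ℝ) := by exact_mod_cast hMsum
      rw [Finset.sum_coe_sort L fun i => ((M i).card : ℝ), Fintype.card_coe]
      refine le_of_mul_le_mul_left ?_ hX
      refine le_trans ?_ hMsum'
      calc 114688 * ((n : ℝ) ^ 2 * k * d) * (δ * ((2 * n).choose ℓ : ℕ) * L.card)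
          ≤ 114688 * ((n : ℝ) ^ 2 * k * d) * (δ * ((2 * n).choose ℓ : ℕ) * k) := by gcongr
        _ = ((2 * n).choose ℓ : ℕ) * (δ * k * (114688 * (n ^ 2 * k * d))) := by ring
        _ ≤ _ := by gcongr)
  exact ⟨_, Enc₃, by rwa [Fintype.card_coe], hEnc₃⟩

/-- Decoding triples `{p.1, p.2, w}` whose pairs `p` come from a set `P` with `d * |P| ≤ 2nk` yield
a `2`-query code: keep the `n / 2` most popular pairs and the `n / 2` most popular points. -/
theorem exists_isLinearWLDC_two_of_pairs {ι : Type*} {k n d : ℕ} (δ : ℝ) (hn : 2 ≤ n) (hk : 0 < k)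
    (Enc : (Fin k → ZMod 2) →ₗ[ZMod 2] (Fin n → ZMod 2)) (Q : Finset ι) (idx : ι → Fin k)
    (p : ι → Fin n × Fin n) (w : ι → Fin n)
    (hdec : ∀ q ∈ Q, ∀ b, (Enc b (p q).1 + Enc b (p q).2) + Enc b (w q) = b (idx q))
    (hdisj : ∀ q ∈ Q, ∀ q' ∈ Q, idx q = idx q' → q ≠ q' → p q ≠ p q' ∧ w q ≠ w q')
    (P : Finset (Fin n × Fin n)) (hP : ∀ q ∈ Q, p q ∈ P) (hPcard : d * P.card ≤ 2 * (n * k))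
    (hsize : δ * n * k ≤ 2 * Q.card) :
    ∃ Enc₂, IsLinearWLDC 2 k n (1 / 48 * δ * d / (d + k)) Enc₂ := by
  obtain ⟨W', -, hW', hQW⟩ :=
    exists_subset_card_le_mul_card_filter Q w (n / 2) univ (fun _ _ => by simp)
  obtain ⟨P', -, hP', hQP⟩ :=
    exists_subset_card_le_mul_card_filter (Q.filter fun q => w q ∈ W') p (n / 2) P
      (fun q hq => hP q (Finset.mem_filter.1 hq).1)
  set Q₁ := Q.filter fun q => w q ∈ W'
  set Q₂ := Q₁.filter fun q => p q ∈ P' 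
  have hmem : ∀ q ∈ Q₂, q ∈ Q ∧ w q ∈ W' ∧ p q ∈ P' := by
    intro q hq
    simpa [Q₂, Q₁, and_assoc] using hq
  have hcard : d * Q.card ≤ 24 * (d + k) * Q₂.card := by
    have ht : 0 < n / 2 := by omega
    have hnt : n ≤ 3 * (n / 2) := by omega
    rw [Finset.card_univ, Fintype.card_fin] at hQW
    have h1 : Q.card ≤ 4 * Q₁.card := by
      refine Nat.le_of_mul_le_mul_left ?_ ht
      nlinarith
    have h2 : d * Q₁.card ≤ (d + 6 * k) * Q₂.card := by
      refine Nat.le_of_mul_le_mul_left ?_ ht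
      calc n / 2 * (d * Q₁.card) = d * (n / 2 * Q₁.card) := by ring
        _ ≤ d * ((n / 2 + P.card) * Q₂.card) := Nat.mul_le_mul_left _ hQP
        _ = (d * (n / 2) + d * P.card) * Q₂.card := by ring
        _ ≤ (d * (n / 2) + 2 * (3 * (n / 2) * k)) * Q₂.card := by
            refine Nat.mul_le_mul_right _ (Nat.add_le_add_left (hPcard.trans ?_) _)
            gcongr
        _ = _ := by ring
    calc d * Q.card ≤ d * (4 * Q₁.card) := Nat.mul_le_mul_left _ h1
      _ = 4 * (d * Q₁.card) := by ring
      _ ≤ 4 * ((d + 6 * k) * Q₂.card) := Nat.mul_le_mul_left _ h2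
      _ ≤ 24 * (d + k) * Q₂.card := by nlinarith [Nat.zero_le (d * Q₂.card)]
  let y : (Fin k → ZMod 2) →ₗ[ZMod 2] ((Fin n × Fin n) ⊕ Fin n → ZMod 2) :=
    LinearMap.pi (Sum.elim
      (fun p => LinearMap.proj p.1 ∘ₗ Enc + LinearMap.proj p.2 ∘ₗ Enc)
      (fun v => LinearMap.proj v ∘ₗ Enc))
  let ed : ι → ((Fin n × Fin n) ⊕ Fin n) × ((Fin n × Fin n) ⊕ Fin n) :=
    fun q => (Sum.inl (p q), Sum.inr (w q))
  have hM : ∀ i, ∀ e ∈ (Q₂.filter fun q => idx q = i).image ed, ∃ q ∈ Q₂, idx q = i ∧ ed q = e := by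
    intro i e he
    simpa [and_assoc] using he
  have hcode := exists_isLinearWLDC_two n (1 / 48 * δ * d / (d + k))
    (P'.disjSum W') (by rw [Finset.card_disjSum]; omega) y
    (fun i => (Q₂.filter fun q => idx q = i).image ed)
    (by
      intro i e he
      obtain ⟨q, hq, -, rfl⟩ := hM i e he
      simpa [ed] using (hmem q hq).2.symm)
    (by
      intro i e he
      obtain ⟨q, hq, -, rfl⟩ := hM i e he
      simp [ed])
    (by
      intro i e he f hf hef
      obtain ⟨q, hq, hqi, rfl⟩ := hM i e he
      obtain ⟨q', hq', hqi', rfl⟩ := hM i f hf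
      have h := hdisj q (hmem q hq).1 q' (hmem q' hq').1 (hqi.trans hqi'.symm)
        (fun h => hef (by rw [h]))
      simpa [ed] using h)
    (by
      intro i e he b
      obtain ⟨q, hq, rfl, rfl⟩ := hM i e he
      exact hdec q (hmem q hq).1 b)
    (by
      have hinj : ∀ i, ((Q₂.filter fun q => idx q = i).image ed).card =
          (Q₂.filter fun q => idx q = i).card := by
        intro i
        refine Finset.card_image_of_injOn fun q hq q' hq' h => ?_
        by_contra hne
        simp only [Finset.coe_filter, Set.mem_ofPred_eq] at hq hq'
        refine (hdisj q (hmem q hq.1).1 q' (hmem q' hq'.1).1 (hq.2.trans hq'.2.symm) hne).2 ?_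
        simpa [ed] using (Prod.ext_iff.1 h).2
      simp only [hinj, Fintype.card_fin]
      rw [← Nat.cast_sum, ← Finset.card_eq_sum_card_fiberwise (fun _ _ => by simp)]
      have hcard' : (d : ℝ) * Q.card ≤ 24 * (d + k) * Q₂.card := by exact_mod_cast hcard
      have hdk : (0 : ℝ) < d + k := by positivity
      calc 1 / 48 * δ * d / (d + k) * n * k = d * (δ * n * k) / (48 * (d + k)) := by
            field_simp
        _ ≤ Q₂.card := by
            rw [div_le_iff₀ (by positivity)]
            nlinarith [Nat.cast_nonneg (α := ℝ) d])
  rwa [Fintype.card_fin] at hcode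

/-- The number of matchings with a triple through both `u` and `w`. -/
def pairDegree {κ α : Type*} [Fintype κ] (H : κ → Finset (Finset α)) (u w : α) : ℕ :=
  (univ.filter fun j => ∃ C ∈ H j, u ∈ C ∧ w ∈ C).card

/-- A set is heavy if it contains a pair of degree greater than `d`. -/
def IsHeavy {κ α : Type*} [Fintype κ] (H : κ → Finset (Finset α)) (d : ℕ) (C : Finset α) : Prop :=
  ∃ u ∈ C, ∃ w ∈ C, u ≠ w ∧ d < pairDegree H u w

theorem IsTripleMatching.three_mul_card_le {α : Type*} [Fintype α] {H : Finset (Finset α)}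
    (hH : IsTripleMatching H) : 3 * H.card ≤ Fintype.card α := by
  rw [← hH.card_biUnion]
  exact Finset.card_le_univ _

theorem mul_card_heavy_pairs_le {κ α : Type*} [Fintype κ] [Fintype α]
    {H : κ → Finset (Finset α)} (hH : ∀ i, IsTripleMatching (H i)) (d : ℕ) :
    d * (univ.filter fun p : α × α => p.1 ≠ p.2 ∧ d < pairDegree H p.1 p.2).card ≤
      2 * (Fintype.card α * Fintype.card κ) := by
  set P := univ.filter fun p : α × α => p.1 ≠ p.2 ∧ d < pairDegree H p.1 p.2
  calc d * P.card = ∑ _p ∈ P, d := by rw [Finset.sum_const, smul_eq_mul, mul_comm]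
    _ ≤ ∑ p ∈ P, pairDegree H p.1 p.2 :=
        Finset.sum_le_sum fun p hp => (Finset.mem_filter.1 hp).2.2.le
    _ = ∑ j, (P.filter fun p => ∃ C ∈ H j, p.1 ∈ C ∧ p.2 ∈ C).card := by
        simp only [pairDegree, Finset.card_filter]
        exact Finset.sum_comm
    _ ≤ ∑ _j : κ, 2 * Fintype.card α := by
        refine Finset.sum_le_sum fun j _ => ?_
        have hsub : (P.filter fun p => ∃ C ∈ H j, p.1 ∈ C ∧ p.2 ∈ C) ⊆
            (H j).biUnion fun C => C.offDiag := by
          intro p hp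
          simp only [P, Finset.mem_filter, Finset.mem_univ, true_and] at hp
          obtain ⟨⟨hne, -⟩, C, hC, h1, h2⟩ := hp
          simp only [Finset.mem_biUnion, Finset.mem_offDiag]
          exact ⟨C, hC, h1, h2, hne⟩
        refine (Finset.card_le_card hsub).trans
          ((Finset.card_biUnion_le_card_mul _ _ 6 fun C hC => ?_).trans ?_)
        · rw [Finset.offDiag_card, (hH j).card_eq C hC]
        · have := (hH j).three_mul_card_le
          omega
    _ = _ := by
        rw [Finset.sum_const, smul_eq_mul, Finset.card_univ]
        ring

/-- If at least half of the decoding triples are heavy, there is a good `2`-query code of block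
length `n`. -/
theorem exists_isLinearWLDC_two_of_heavy {k n d : ℕ} (δ : ℝ) (hn : 2 ≤ n) (hk : 0 < k)
    (Enc : (Fin k → ZMod 2) →ₗ[ZMod 2] (Fin n → ZMod 2)) (H : Fin k → Finset (Finset (Fin n)))
    (hH : ∀ i, IsTripleMatching (H i))
    (hdec : ∀ i, ∀ C ∈ H i, ∀ b, ∑ v ∈ C, Enc b v = b i)
    (hsize : δ * n * k ≤ 2 * ∑ i, (((H i).filter (IsHeavy H d)).card : ℝ)) :
    ∃ Enc₂, IsLinearWLDC 2 k n (1 / 48 * δ * d / (d + k)) Enc₂ := by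
  have hex : ∀ C : Finset (Fin n), ∃ q : (Fin n × Fin n) × Fin n, C.card = 3 → IsHeavy H d C →
      C = {q.1.1, q.1.2, q.2} ∧ d < pairDegree H q.1.1 q.1.2 := by
    intro C
    by_cases h : C.card = 3 ∧ IsHeavy H d C
    · obtain ⟨hC, u, hu, w, hw, huw, hdeg⟩ := h
      have h1 : ((C.erase u).erase w).card = 1 := by
        rw [Finset.card_erase_of_mem (by simp [hw, huw.symm]), Finset.card_erase_of_mem hu, hC]
      obtain ⟨x, hx⟩ := Finset.card_eq_one.1 h1
      refine ⟨((u, w), x), fun _ _ => ⟨?_, hdeg⟩⟩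
      rw [← hx, Finset.insert_erase (by simp [hw, huw.symm]), Finset.insert_erase hu]
    · exact ⟨((⟨0, by omega⟩, ⟨0, by omega⟩), ⟨0, by omega⟩), fun h1 h2 => absurd ⟨h1, h2⟩ h⟩
  choose g hg using hex
  let Q : Finset (Σ _ : Fin k, Finset (Fin n)) :=
    univ.sigma fun i => (H i).filter (IsHeavy H d)
  have hQ : ∀ q ∈ Q, q.2 ∈ H q.1 ∧ q.2 = {(g q.2).1.1, (g q.2).1.2, (g q.2).2} ∧
      d < pairDegree H (g q.2).1.1 (g q.2).1.2 := by
    intro q hq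
    simp only [Q, Finset.mem_sigma, Finset.mem_univ, true_and, Finset.mem_filter] at hq
    exact ⟨hq.1, hg _ ((hH _).card_eq _ hq.1) hq.2⟩
  have hmem : ∀ q ∈ Q, (g q.2).1.1 ∈ q.2 ∧ (g q.2).2 ∈ q.2 := by
    intro q hq
    have h := (hQ q hq).2.1
    generalize g q.2 = r at h ⊢
    simp [h]
  have hne : ∀ q ∈ Q, (g q.2).1.1 ≠ (g q.2).1.2 ∧ (g q.2).1.1 ≠ (g q.2).2 ∧
      (g q.2).1.2 ≠ (g q.2).2 := by
    intro q hq
    have h := hQ q hq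
    exact (hH q.1).ne (h.2.1 ▸ h.1)
  refine exists_isLinearWLDC_two_of_pairs δ hn hk Enc Q Sigma.fst (fun q => (g q.2).1)
    (fun q => (g q.2).2) ?_ ?_
    (univ.filter fun p : Fin n × Fin n => p.1 ≠ p.2 ∧ d < pairDegree H p.1 p.2) ?_ ?_ ?_
  · intro q hq b
    obtain ⟨h1, h2, -⟩ := hQ q hq
    obtain ⟨n1, n2, n3⟩ := hne q hq
    have h := hdec q.1 q.2 h1 b
    rw [h2, Finset.sum_insert (by simp [n1, n2]), Finset.sum_pair n3] at h
    rw [← h, add_assoc]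
  · rintro ⟨i, C⟩ hq ⟨i', C'⟩ hq' hi hqq
    obtain rfl : i = i' := hi
    have hCC : ∀ x ∈ C, x ∉ C' := by
      intro x hx hx'
      obtain rfl := (hH i).eq_of_mem (hQ _ hq).1 (hQ _ hq').1 hx hx'
      exact hqq rfl
    refine ⟨fun h => hCC _ (hmem _ hq).1 ?_, fun h => hCC _ (hmem _ hq).2 ?_⟩
    · exact (congrArg Prod.fst h) ▸ (hmem _ hq').1
    · exact h ▸ (hmem _ hq').2
  · intro q hq
    simp only [Finset.mem_filter, Finset.mem_univ, true_and]
    exact ⟨(hne q hq).1, (hQ q hq).2.2⟩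
  · simpa using mul_card_heavy_pairs_le hH d
  · rw [Finset.card_sigma]
    exact_mod_cast hsize

/-- The repetition code of one message symbol, padded with zeros. -/
theorem exists_isLinearWLDC_two_of_mul_le {k N : ℕ} (δ : ℝ) (hk : 0 < k) (hN : 2 ≤ N)
    (hδ : δ * k ≤ 1 / 3) :
    ∃ Enc, IsLinearWLDC 2 k N δ Enc := by
  let i₀ : Fin k := ⟨0, hk⟩
  let y : (Fin k → ZMod 2) →ₗ[ZMod 2] (Bool × ℕ → ZMod 2) :=
    LinearMap.pi fun v => if v.1 then LinearMap.proj i₀ else 0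
  let ed : ℕ → (Bool × ℕ) × (Bool × ℕ) := fun t => ((false, t), (true, t))
  have hM : ∀ i, ∀ e ∈ (if i = i₀ then (range (N / 2)).image ed else ∅),
      i = i₀ ∧ ∃ t < N / 2, ed t = e := by
    intro i e he
    split_ifs at he with h
    · exact ⟨h, by simpa using he⟩
    · simp at he
  have hcode := exists_isLinearWLDC_two N δ (univ ×ˢ range (N / 2))
    (by simp; omega) y (fun i => if i = i₀ then (range (N / 2)).image ed else ∅)
    (by
      intro i e he
      obtain ⟨-, t, ht, rfl⟩ := hM i e he
      simp [ed, ht])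
    (by
      intro i e he
      obtain ⟨-, t, ht, rfl⟩ := hM i e he
      simp [ed])
    (by
      intro i e he f hf hef
      obtain ⟨-, t, ht, rfl⟩ := hM i e he
      obtain ⟨-, t', ht', rfl⟩ := hM i f hf
      have htt : t ≠ t' := fun h => hef (by rw [h])
      simp [ed, htt])
    (by
      intro i e he b
      obtain ⟨rfl, t, ht, rfl⟩ := hM i e he
      simp [ed, y])
    (by
      have hcard : ((range (N / 2)).image ed).card = N / 2 := by
        rw [Finset.card_image_of_injective _ fun s t h => by simpa [ed] using h, Finset.card_range]
      have hN3 : (N : ℝ) ≤ 3 * (N / 2 : ℕ) := by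
        have : N ≤ 3 * (N / 2) := by omega
        exact_mod_cast this
      rw [Finset.sum_eq_single i₀ (fun i _ hi => by simp [hi]) (by simp), if_pos rfl, hcard,
        Fintype.card_fin]
      nlinarith [Nat.cast_nonneg (α := ℝ) N])
  rwa [Fintype.card_fin] at hcode

theorem pairDegree_filter_not_isHeavy_le {κ α : Type*} [Fintype κ] (H : κ → Finset (Finset α))
    (d : ℕ) {u w : α} (huw : u ≠ w) :
    pairDegree (fun i => (H i).filter fun C => ¬ IsHeavy H d C) u w ≤ d := by
  by_contra! h
  have hpos := (Nat.zero_le d).trans_lt h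
  obtain ⟨j, hj⟩ := Finset.card_pos.1 hpos
  simp only [Finset.mem_filter, Finset.mem_univ, true_and] at hj
  obtain ⟨C, ⟨-, hC⟩, hu, hw⟩ := hj
  refine hC ⟨u, hu, w, hw, huw, h.trans_le (Finset.card_le_card fun i hi => ?_)⟩
  simp only [Finset.mem_filter, Finset.mem_univ, true_and] at hi ⊢
  obtain ⟨D, ⟨hD, -⟩, hDuw⟩ := hi
  exact ⟨D, hD, hDuw⟩

/-- The Kikuchi level `ℓ = ⌊√(n/k)⌋` satisfies `n / 4 ≤ k ℓ² ≤ n`. -/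
theorem floor_sqrt_div_bounds {k n : ℕ} (hk : 0 < k) (hkn : 16 * k ≤ n) :
    4 ≤ ⌊Real.sqrt ((n : ℝ) / k)⌋₊ ∧ 4 * ⌊Real.sqrt ((n : ℝ) / k)⌋₊ ≤ n ∧
      k * ⌊Real.sqrt ((n : ℝ) / k)⌋₊ ^ 2 ≤ n ∧ n ≤ 4 * (k * ⌊Real.sqrt ((n : ℝ) / k)⌋₊ ^ 2) := by
  have hk' : (0 : ℝ) < k := by exact_mod_cast hk
  have hkn' : (16 : ℝ) * k ≤ n := by exact_mod_cast hkn
  set s := Real.sqrt ((n : ℝ) / k)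
  have hs0 : 0 ≤ s := Real.sqrt_nonneg _
  have hs2 : k * s ^ 2 = n := by
    rw [Real.sq_sqrt (by positivity)]
    field_simp
  have hs4 : 4 ≤ s := by
    refine Real.le_sqrt_of_sq_le ?_
    rw [le_div_iff₀ hk']
    linarith
  have h4 : 4 ≤ ⌊s⌋₊ := Nat.le_floor (by exact_mod_cast hs4)
  have hle : (⌊s⌋₊ : ℝ) ≤ s := Nat.floor_le hs0
  have hlt : s < ⌊s⌋₊ + 1 := Nat.lt_floor_add_one s
  have hub : k * ⌊s⌋₊ ^ 2 ≤ n := by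
    have : (k : ℝ) * (⌊s⌋₊ : ℝ) ^ 2 ≤ n := by
      rw [← hs2]
      gcongr
    exact_mod_cast this
  refine ⟨h4, by nlinarith, hub, ?_⟩
  have h4' : (4 : ℝ) ≤ ⌊s⌋₊ := by exact_mod_cast h4
  have hs : s ≤ 2 * ⌊s⌋₊ := by linarith
  have : (n : ℝ) ≤ 4 * (k * (⌊s⌋₊ : ℝ) ^ 2) := by
    calc (n : ℝ) = k * s ^ 2 := hs2.symm
      _ ≤ k * (2 * ⌊s⌋₊) ^ 2 := by gcongr
      _ = _ := by ring
  exact_mod_cast this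

/-- If at least half of the decoding triples are not heavy, there is a good `2`-query code of block
length `C(2n, ℓ)`. -/
theorem exists_isLinearWLDC_two_of_not_heavy {k n d ℓ : ℕ} (δ : ℝ) (hδ : 0 < δ) (hδ' : 3 * δ ≤ 1)
    (Enc : (Fin k → ZMod 2) →ₗ[ZMod 2] (Fin n → ZMod 2)) (H : Fin k → Finset (Finset (Fin n)))
    (hH : ∀ i, IsTripleMatching (H i))
    (hdec : ∀ i, ∀ C ∈ H i, ∀ b, ∑ v ∈ C, Enc b v = b i)
    (hk : 0 < k) (hd : 0 < d) (hℓ : 4 ≤ ℓ) (hℓn : 4 * ℓ ≤ n)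
    (hub : k * ℓ ^ 2 ≤ n) (hlb : n ≤ 4 * (k * ℓ ^ 2))
    (hsize : δ * n * k ≤ 2 * ∑ i, (((H i).filter fun C => ¬ IsHeavy H d C).card : ℝ)) :
    ∃ (k₃ : ℕ) (Enc₃ : (Fin k₃ → ZMod 2) → Fin ((2 * n).choose ℓ) → ZMod 2),
      k ≤ 2 * k₃ ∧ IsLinearWLDC 2 k₃ ((2 * n).choose ℓ) (1 / 100000 * δ ^ 2 / d) Enc₃ := by
  have hn : (0 : ℝ) < n := by exact_mod_cast (show 0 < n by omega)
  have hd1 : (1 : ℝ) ≤ d := by exact_mod_cast hd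
  have hd0 : (0 : ℝ) < d := by linarith
  have hk0 : (0 : ℝ) < k := by exact_mod_cast hk
  by_cases hm : 2 * n ≤ 3 * ∑ i, ((H i).filter fun C => ¬ IsHeavy H d C).card
  · refine exists_isLinearWLDC_two_of_light _ (by positivity) Enc
      (fun i => (H i).filter fun C => ¬ IsHeavy H d C)
      (fun i => (hH i).mono (Finset.filter_subset _ _))
      (fun i C hC => hdec i C (Finset.mem_filter.1 hC).1)
      (fun u w huw => by
        have h := pairDegree_filter_not_isHeavy_le H d huw
        unfold pairDegree at h
        convert h) hk hd hℓ hℓn hub hlb hm ?_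
    set m := ∑ i, (((H i).filter fun C => ¬ IsHeavy H d C).card : ℝ)
    have hsq : (δ * n * k) ^ 2 ≤ (2 * m) ^ 2 := by gcongr
    calc 1 / 100000 * δ ^ 2 / d * k * (114688 * ((n : ℝ) ^ 2 * k * d))
        = 114688 / 100000 * (δ * n * k) ^ 2 := by field_simp
      _ ≤ 9 * m ^ 2 := by nlinarith [sq_nonneg (δ * n * k)]
  · have hδk : 3 * (δ * k) ≤ 4 := by
      have hm' : 3 * ∑ i, (((H i).filter fun C => ¬ IsHeavy H d C).card : ℝ) ≤ 2 * n := by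
        exact_mod_cast (not_le.1 hm).le
      refine le_of_mul_le_mul_right ?_ hn
      linarith
    have hN : 2 ≤ (2 * n).choose ℓ := by
      have h := Nat.choose_le_choose ℓ (show ℓ + 1 ≤ 2 * n by omega)
      rw [Nat.choose_succ_self_right] at h
      omega
    obtain ⟨Enc₃, hEnc₃⟩ := exists_isLinearWLDC_two_of_mul_le (k := k) (N := (2 * n).choose ℓ)
      (1 / 100000 * δ ^ 2 / d) hk hN (by
        calc 1 / 100000 * δ ^ 2 / d * k = 1 / 100000 * δ * (δ * k) / d := by ring
          _ ≤ 1 / 100000 * δ * (δ * k) := div_le_self (by positivity) hd1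
          _ ≤ 1 / 3 := by nlinarith [mul_pos hδ hk0])
    exact ⟨k, Enc₃, by omega, hEnc₃⟩

/-- **Black-box reduction from linear 3-LDCs to two candidate linear 2-LDCs.**
There are absolute constants `c, c₀, c₁, c₂ > 0` such that: for every linear
`(3, δ)`-wLDC `Enc : {0,1}^k → {0,1}^n`, every positive integer `d`, and `k ≤ n/c₀`,
there exist codes `Enc₂ : {0,1}^{k₂} → {0,1}^n` and `Enc₃ : {0,1}^{k₃} → {0,1}^N`
with `k₂, k₃ ≥ k/2`, where `N = C(2n, ℓ)` and `ℓ = (√(n/k))/c`, such that either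
`Enc₂` is a linear `(2, c₁ δ d/(d+k))`-wLDC or `Enc₃` is a linear
`(2, c₂ δ²/d)`-wLDC. -/
theorem linear_three_ldc_reduction :
    ∃ c c₀ c₁ c₂ : ℝ, 0 < c ∧ 0 < c₀ ∧ 0 < c₁ ∧ 0 < c₂ ∧
      ∀ (k n d : ℕ) (δ : ℝ) (Enc : (Fin k → ZMod 2) → Fin n → ZMod 2),
        0 < k → 0 < n → 0 < d → 0 < δ →
        IsLinearWLDC 3 k n δ Enc →
        (k : ℝ) ≤ (n : ℝ) / c₀ →
        ∃ (k₂ k₃ : ℕ)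
          (Enc₂ : (Fin k₂ → ZMod 2) → Fin n → ZMod 2)
          (Enc₃ : (Fin k₃ → ZMod 2) →
            Fin (Nat.choose (2 * n) ⌊Real.sqrt ((n : ℝ) / k) / c⌋₊) → ZMod 2),
          (k : ℝ) / 2 ≤ k₂ ∧ (k : ℝ) / 2 ≤ k₃ ∧
          (IsLinearWLDC 2 k₂ n (c₁ * δ * d / (d + k)) Enc₂ ∨
           IsLinearWLDC 2 k₃ (Nat.choose (2 * n) ⌊Real.sqrt ((n : ℝ) / k) / c⌋₊)
             (c₂ * δ ^ 2 / d) Enc₃) := by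
  refine ⟨1, 16, 1 / 48, 1 / 100000, by norm_num, by norm_num, by norm_num, by norm_num, ?_⟩
  intro k n d δ Enc hk hn hd hδ hEnc hkn
  obtain ⟨hlin, H, hcard, hpw, hsize, hdec⟩ := hEnc
  have hkn' : 16 * k ≤ n := by
    rw [le_div_iff₀ (by norm_num)] at hkn
    have : (16 : ℝ) * k ≤ n := by linarith
    exact_mod_cast this
  have hH : ∀ i, IsTripleMatching (H i) := fun i => ⟨hcard i, hpw i⟩
  have hbounds := floor_sqrt_div_bounds hk hkn'
  rw [← div_one (Real.sqrt ((n : ℝ) / k))] at hbounds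
  obtain ⟨hℓ, hℓn, hub, hlb⟩ := hbounds
  have hsplit : ∑ i, ((H i).card : ℝ) = ∑ i, (((H i).filter (IsHeavy H d)).card : ℝ) +
      ∑ i, (((H i).filter fun C => ¬ IsHeavy H d C).card : ℝ) := by
    rw [← Finset.sum_add_distrib]
    refine Finset.sum_congr rfl fun i _ => ?_
    exact_mod_cast (Finset.card_filter_add_card_filter_not (s := H i) (IsHeavy H d)).symm
  have hhalf : (k : ℝ) / 2 ≤ k := half_le_self (Nat.cast_nonneg k)
  by_cases hheavy : δ * n * k ≤ 2 * ∑ i, (((H i).filter (IsHeavy H d)).card : ℝ)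
  · obtain ⟨Enc₂, hEnc₂⟩ := exists_isLinearWLDC_two_of_heavy δ (by omega) hk (hlin.mk' Enc) H hH
      hdec hheavy
    exact ⟨k, k, Enc₂, 0, hhalf, hhalf, Or.inl hEnc₂⟩
  · have hδ' : 3 * δ ≤ 1 := by
      have hsum : 3 * ∑ i, ((H i).card : ℝ) ≤ n * k := by
        calc 3 * ∑ i, ((H i).card : ℝ) = ∑ i, 3 * ((H i).card : ℝ) := Finset.mul_sum _ _ _
          _ ≤ ∑ _i : Fin k, (n : ℝ) := by
              refine Finset.sum_le_sum fun i _ => ?_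
              have h := (hH i).three_mul_card_le
              rw [Fintype.card_fin] at h
              exact_mod_cast h
          _ = n * k := by simp [mul_comm]
      have hnk : (0 : ℝ) < n * k := by positivity
      refine le_of_mul_le_mul_right ?_ hnk
      linarith
    obtain ⟨k₃, Enc₃, hk₃, hEnc₃⟩ := exists_isLinearWLDC_two_of_not_heavy (d := d) δ hδ hδ'
      (hlin.mk' Enc) H hH hdec hk hd hℓ hℓn hub hlb (by linarith)
    refine ⟨k, k₃, 0, Enc₃, hhalf, ?_, Or.inr hEnc₃⟩
    have : (k : ℝ) ≤ 2 * k₃ := by exact_mod_cast hk₃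
    linarith
end
end
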